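/- arXiv:1702.00779 — 5 statements merged into one kernel-verified Lean document; each statement's English description precedes it below -/
import Mathlib

section
/- Let k be any field, R = k[t,u,x,y]/(xy − tu − 1), B = k[t,x,y], and let η* : B → R be the (injective) k-algebra homomorphism sending t, x, y to their residue classes. Let I ⊂ B be the ideal generated by t and xy − 1. Then: (1) a k-algebra automorphism Φ of R satisfies Φ((t−1)·R) = (t−1)·R if and only if Φ(t) = t; (2) every k-algebra automorphism Φ of R with Φ(t) = t satisfies Φ(η*(B)) = η*(B), and the assignment Φ ↦ (η*)⁻¹ ∘ Φ ∘ η* defines a group isomorphism from {Φ ∈ Aut_k(R) : Φ(t) = t} onto {ψ ∈ Aut_k(B) : ψ(t) = t and ψ(I) = I}. -/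
open MvPolynomial

noncomputable section

section IdealMapAut

variable {k B : Type*} [CommSemiring k] [CommRing B] [Algebra k B]

lemma Ideal.map_aut_one (I : Ideal B) : Ideal.map (1 : B ≃ₐ[k] B) I = I := by
  ext a
  rw [Ideal.mem_map_of_equiv]
  constructor
  · rintro ⟨b, hb, rfl⟩; simpa using hb
  · intro ha; exact ⟨a, ha, rfl⟩

lemma Ideal.map_aut_mul (a b : B ≃ₐ[k] B) (I : Ideal B) :
    Ideal.map (a * b) I = Ideal.map a (Ideal.map b I) := by
  ext x
  simp only [Ideal.mem_map_of_equiv]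
  constructor
  · rintro ⟨y, hy, rfl⟩; exact ⟨b y, ⟨y, hy, rfl⟩, rfl⟩
  · rintro ⟨y, ⟨z, hz, rfl⟩, rfl⟩; exact ⟨z, hz, rfl⟩

lemma Ideal.map_aut_inv (a : B ≃ₐ[k] B) (I : Ideal B) (h : Ideal.map a I = I) :
    Ideal.map a⁻¹ I = I := by
  ext x
  rw [Ideal.mem_map_of_equiv]
  constructor
  · rintro ⟨y, hy, rfl⟩
    rw [← h, Ideal.mem_map_of_equiv] at hy
    obtain ⟨z, hz, rfl⟩ := hy
    have : (a⁻¹ : B ≃ₐ[k] B) (a z) = z := a.symm_apply_apply z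
    rwa [this]
  · intro hx
    refine ⟨a x, ?_, a.symm_apply_apply x⟩
    rw [← h]
    exact Ideal.mem_map_of_mem _ hx

end IdealMapAut

variable (k : Type*) [Field k]

/-- The polynomial `x*y - t*u - 1` defining `SL₂` inside `𝔸⁴ = Spec k[t,u,x,y]`
(variables: `0 = t`, `1 = u`, `2 = x`, `3 = y`). -/
def sl2Rel : MvPolynomial (Fin 4) k := X 2 * X 3 - X 0 * X 1 - 1

/-- The coordinate ring `R = k[t,u,x,y]/(xy - tu - 1)` of `SL₂`. -/
abbrev SL2Ring : Type _ := MvPolynomial (Fin 4) k ⧸ Ideal.span {sl2Rel k}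

/-- The class of `t` in `R`. -/
def sl2T : SL2Ring k := Ideal.Quotient.mk (Ideal.span {sl2Rel k}) (X 0)

/-- `B = k[t,x,y]` (variables: `0 = t`, `1 = x`, `2 = y`). -/
abbrev B3 : Type _ := MvPolynomial (Fin 3) k

/-- The comorphism `η* : B = k[t,x,y] → R` of `η : SL₂ → 𝔸³`, `(t,u,x,y) ↦ (t,x,y)`. -/
def etaStar : B3 k →ₐ[k] SL2Ring k :=
  aeval ![Ideal.Quotient.mk (Ideal.span {sl2Rel k}) (X 0),
          Ideal.Quotient.mk (Ideal.span {sl2Rel k}) (X 2),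
          Ideal.Quotient.mk (Ideal.span {sl2Rel k}) (X 3)]

/-- The ideal `I = (t, xy − 1) ⊂ B` of the curve `Γ : t = xy − 1 = 0`. -/
def gammaIdeal : Ideal (B3 k) := Ideal.span {X 0, X 1 * X 2 - 1}

/-- The group of `k`-algebra automorphisms of `R` fixing `t`. -/
def autSL2T : Subgroup (SL2Ring k ≃ₐ[k] SL2Ring k) where
  carrier := {Φ | Φ (sl2T k) = sl2T k}
  one_mem' := rfl
  mul_mem' := by
    intro a b ha hb
    simp only [Set.mem_setOf_eq] at ha hb ⊢
    rw [AlgEquiv.mul_apply, hb, ha]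
  inv_mem' := by
    intro a ha
    simp only [Set.mem_setOf_eq] at ha ⊢
    exact a.symm_apply_eq.mpr ha.symm

/-- The group of `k`-algebra automorphisms of `B = k[t,x,y]` fixing `t` and
preserving the ideal `I = (t, xy − 1)`. -/
def autA3TGamma : Subgroup (B3 k ≃ₐ[k] B3 k) where
  carrier := {ψ | ψ (X 0) = X 0 ∧ Ideal.map ψ (gammaIdeal k) = gammaIdeal k}
  one_mem' := ⟨rfl, Ideal.map_aut_one _⟩
  mul_mem' := by
    intro a b ha hb
    simp only [Set.mem_setOf_eq] at ha hb ⊢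
    refine ⟨?_, ?_⟩
    · rw [AlgEquiv.mul_apply, hb.1, ha.1]
    · rw [Ideal.map_aut_mul, hb.2, ha.2]
  inv_mem' := by
    intro a ha
    simp only [Set.mem_setOf_eq] at ha ⊢
    exact ⟨a.symm_apply_eq.mpr ha.1.symm, Ideal.map_aut_inv a _ ha.2⟩

/-! An automorphism fixing `t` conjugates the `𝔾ₐ`-action `x ↦ x + s t`, `u ↦ u + s y` into another
action fixing `t`, and the key point is that the invariants of such an action lie in `k[t, x, y]`.
Composing the action with Gauss norms of varying radius gives absolute values that extend the
`t`-adic one on the invariants and take arbitrarily large values at `x y`. If an invariant `g` were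
outside `k[t, x, y]`, then for minimal `n` we could write `t ^ n g = t a + (x y - 1) b` with
`a, b ∈ k[t, x, y]` and `t ∤ b`, because `(t, x y - 1)` is the preimage of `(t)`. Choosing
`|x y|` slightly larger than `1` keeps `|t a| ≤ 1` while `|(x y - 1) b| > 1`, which contradicts
`|t ^ n g| ≤ 1`. Applied to the invariant `y`, and after exchanging `x` and `y` to `x`, this shows
that `k[t, x, y]` is preserved.

For the hypersurface `t = 1`, the units of `R` are constants, so `t` is sent to a constant multiple
of some `t - l`. The fibre over `l ≠ 0` is a plane, while the one over `0` is not, so `l = 0`. -/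

section NonarchimedeanAbsoluteValue

theorem absoluteValue_aeval_le_pow_totalDegree {σ R S : Type*} [CommSemiring R] [CommRing S]
    [Nontrivial S] [Algebra R S] {v : AbsoluteValue S ℝ} (hna : IsNonarchimedean v)
    (hR : ∀ a : R, v (algebraMap R S a) ≤ 1) {M : ℝ} (hM : 1 ≤ M) {g : σ → S}
    (hg : ∀ i, v (g i) ≤ M) (p : MvPolynomial σ R) :
    v (aeval g p) ≤ M ^ p.totalDegree := by
  rcases eq_or_ne p 0 with rfl | hp
  · simp
  rw [aeval_def, eval₂_eq]
  obtain ⟨d, hd, hle⟩ := hna.finset_image_add_of_nonempty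
    (fun d ↦ algebraMap R S (coeff d p) * ∏ i ∈ d.support, g i ^ d i) (support_nonempty.mpr hp)
  calc v (∑ d ∈ p.support, algebraMap R S (coeff d p) * ∏ i ∈ d.support, g i ^ d i)
      ≤ v (algebraMap R S (coeff d p)) * ∏ i ∈ d.support, v (g i) ^ d i := by
        simpa only [map_mul, map_prod, map_pow] using hle
    _ ≤ 1 * ∏ i ∈ d.support, M ^ d i := by
        gcongr
        exacts [hR _, hg _]
    _ = M ^ d.degree := by rw [one_mul, Finset.prod_pow_eq_pow_sum, Finsupp.degree_apply]
    _ ≤ M ^ p.totalDegree := pow_le_pow_right₀ hM (le_totalDegree hd)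

variable {A : Type*}

theorem continuous_gaussNorm [Semiring A] (v : AbsoluteValue A ℝ) (p : Polynomial A) :
    Continuous fun c ↦ p.gaussNorm v c := by
  unfold Polynomial.gaussNorm
  split_ifs
  · exact Continuous.finset_sup'_apply _ fun i _ ↦ by fun_prop
  · exact continuous_const

theorem tendsto_gaussNorm_atTop [Semiring A] (v : AbsoluteValue A ℝ) {p : Polynomial A}
    (hp : 0 < p.natDegree) :
    Filter.Tendsto (fun c ↦ p.gaussNorm v c) Filter.atTop Filter.atTop := by
  have hlead : 0 < v p.leadingCoeff :=
    v.pos (Polynomial.leadingCoeff_ne_zero.mpr (Polynomial.ne_zero_of_natDegree_gt hp))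
  refine Filter.tendsto_atTop_mono' _ ?_
    ((Filter.tendsto_pow_atTop hp.ne').const_mul_atTop hlead)
  filter_upwards [Filter.eventually_ge_atTop 0] with c hc
  exact Polynomial.le_gaussNorm v p hc p.natDegree

theorem exists_gaussNorm_eq [Semiring A] (v : AbsoluteValue A ℝ) {p : Polynomial A}
    (hp : 0 < p.natDegree) {M : ℝ} (hM : v (p.coeff 0) < M) :
    ∃ c, 0 < c ∧ p.gaussNorm v c = M := by
  have h_zero : p.gaussNorm v 0 < M := by rwa [Polynomial.gaussNorm_zero_right]
  obtain ⟨c, hc, hcM⟩ := intermediate_value_Ici (continuous_gaussNorm v p).continuousOn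
    (tendsto_gaussNorm_atTop v hp) h_zero.le
  refine ⟨c, lt_of_le_of_ne hc ?_, hcM⟩
  rintro rfl
  exact h_zero.ne hcM

theorem exists_absoluteValue_ge_apply_eq [Ring A] {v : AbsoluteValue A ℝ}
    (hna : IsNonarchimedean v) {α : A →+* Polynomial A} (hα : ∀ a, (α a).coeff 0 = a) {f : A}
    (hf : 0 < (α f).natDegree) {M : ℝ} (hM : v f < M) :
    ∃ w : AbsoluteValue A ℝ, IsNonarchimedean w ∧ (∀ a, v a ≤ w a) ∧
      (∀ a, α a = Polynomial.C a → w a = v a) ∧ w f = M := by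
  obtain ⟨c, hc, hcf⟩ := exists_gaussNorm_eq v hf ((hα f).symm ▸ hM)
  have := Polynomial.gaussNorm_isAbsoluteValue hna hc
  have hα_inj : Function.Injective α := fun a b h ↦ by rw [← hα a, h, hα]
  let w := (IsAbsoluteValue.toAbsoluteValue (Polynomial.gaussNorm v c)).comp hα_inj
  have hw (a : A) : w a = Polynomial.gaussNorm v c (α a) := rfl
  refine ⟨w, fun a b ↦ ?_, fun a ↦ ?_, fun a ha ↦ ?_, hcf⟩
  · simpa only [hw, map_add] using Polynomial.isNonarchimedean_gaussNorm v hna hc.le (α a) (α b)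
  · simpa only [hw, hα, pow_zero, mul_one] using Polynomial.le_gaussNorm v (α a) hc.le 0
  · rw [hw, ha, Polynomial.gaussNorm_C]

end NonarchimedeanAbsoluteValue

namespace SL2Ring

variable {k}

/-- The class of `u` in `R`. -/
def sl2U : SL2Ring k := Ideal.Quotient.mk (Ideal.span {sl2Rel k}) (X 1)

/-- The class of `x` in `R`. -/
def sl2X : SL2Ring k := Ideal.Quotient.mk (Ideal.span {sl2Rel k}) (X 2)

/-- The class of `y` in `R`. -/
def sl2Y : SL2Ring k := Ideal.Quotient.mk (Ideal.span {sl2Rel k}) (X 3)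

lemma sl2X_mul_sl2Y : (sl2X : SL2Ring k) * sl2Y = sl2T k * sl2U + 1 := by
  have h_mem : X 2 * X 3 - (X 0 * X 1 + 1) ∈ Ideal.span {sl2Rel k} := by
    rw [← sub_sub]
    exact Ideal.mem_span_singleton_self _
  simpa [sl2X, sl2Y, sl2T, sl2U] using Ideal.Quotient.eq.2 h_mem

@[simp] lemma etaStar_X_zero : etaStar k (X 0) = sl2T k := by simp [etaStar, sl2T]

@[simp] lemma etaStar_X_one : etaStar k (X 1) = sl2X := by simp [etaStar, sl2X]

@[simp] lemma etaStar_X_two : etaStar k (X 2) = sl2Y := by simp [etaStar, sl2Y]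

section Hom

variable {T : Type*} [CommRing T] [Algebra k T]

/-- The homomorphism out of `R` sending `t, u, x, y` to a given point of `SL₂(T)`. -/
def lift (t u x y : T) (h : x * y = t * u + 1) : SL2Ring k →ₐ[k] T :=
  Ideal.Quotient.liftₐ (Ideal.span {sl2Rel k}) (aeval ![t, u, x, y]) fun a ha ↦ by
    have h_rel : aeval ![t, u, x, y] (sl2Rel k) = 0 := by simp [sl2Rel, h]
    obtain ⟨b, rfl⟩ := Ideal.mem_span_singleton'.1 ha
    rw [map_mul, h_rel, mul_zero]

section

variable (t u x y : T) (h : x * y = t * u + 1)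

@[simp] lemma lift_sl2T : lift (k := k) t u x y h (sl2T k) = t :=
  aeval_X ![t, u, x, y] 0

@[simp] lemma lift_sl2U : lift (k := k) t u x y h sl2U = u :=
  aeval_X ![t, u, x, y] 1

@[simp] lemma lift_sl2X : lift (k := k) t u x y h sl2X = x :=
  aeval_X ![t, u, x, y] 2

@[simp] lemma lift_sl2Y : lift (k := k) t u x y h sl2Y = y :=
  aeval_X ![t, u, x, y] 3

end

lemma algHom_ext {f g : SL2Ring k →ₐ[k] T} (ht : f (sl2T k) = g (sl2T k))
    (hu : f sl2U = g sl2U) (hx : f sl2X = g sl2X) (hy : f sl2Y = g sl2Y) : f = g := by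
  refine Ideal.Quotient.algHom_ext _ (MvPolynomial.algHom_ext fun i ↦ ?_)
  fin_cases i
  exacts [ht, hu, hx, hy]

lemma algHom_ext_B3 {f g : B3 k →ₐ[k] T} (ht : f (X 0) = g (X 0))
    (hx : f (X 1) = g (X 1)) (hy : f (X 2) = g (X 2)) : f = g := by
  refine MvPolynomial.algHom_ext fun i ↦ ?_
  fin_cases i
  exacts [ht, hx, hy]

lemma algHom_ext_of_comp_etaStar {f g : SL2Ring k →ₐ[k] T}
    (ht : f (sl2T k) ∈ nonZeroDivisors T)
    (h : f.comp (etaStar k) = g.comp (etaStar k)) : f = g := by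
  have ht_eq : f (sl2T k) = g (sl2T k) := by simpa using DFunLike.congr_fun h (X 0)
  have hx_eq : f sl2X = g sl2X := by simpa using DFunLike.congr_fun h (X 1)
  have hy_eq : f sl2Y = g sl2Y := by simpa using DFunLike.congr_fun h (X 2)
  have hf := congrArg f (sl2X_mul_sl2Y (k := k))
  have hg := congrArg g (sl2X_mul_sl2Y (k := k))
  simp only [map_mul, map_add, map_one] at hf hg
  refine algHom_ext ht_eq ((mul_cancel_left_mem_nonZeroDivisors ht).1 ?_) hx_eq hy_eq
  rw [← ht_eq, ← hx_eq, ← hy_eq] at hg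
  linear_combination hg - hf

end Hom

lemma sl2T_mem_nonZeroDivisors : sl2T k ∈ nonZeroDivisors (SL2Ring k) := by
  rw [mem_nonZeroDivisors_iff_left]
  intro r h
  obtain ⟨F, rfl⟩ := Ideal.Quotient.mk_surjective r
  rw [sl2T, ← map_mul, Ideal.Quotient.eq_zero_iff_mem, Ideal.mem_span_singleton'] at h
  obtain ⟨G, hG⟩ := h
  have hX : Prime (X 0 : MvPolynomial (Fin 4) k) := X_prime
  have h_not_dvd : ¬ X 0 ∣ sl2Rel k := by
    rintro ⟨c, hc⟩
    simpa [sl2Rel] using congrArg (eval 0) hc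
  obtain ⟨G', rfl⟩ := (hX.dvd_or_dvd ⟨F, hG⟩).resolve_right h_not_dvd
  rw [Ideal.Quotient.eq_zero_iff_mem, Ideal.mem_span_singleton']
  refine ⟨G', mul_left_cancel₀ hX.ne_zero ?_⟩
  rw [← hG, mul_assoc]

lemma etaStar_X_one_mul_X_two_sub_one : etaStar k (X 1 * X 2 - 1) = sl2T k * sl2U := by
  rw [map_sub, map_mul, map_one, etaStar_X_one, etaStar_X_two, sl2X_mul_sl2Y,
    add_sub_cancel_right]

lemma exists_sl2T_pow_mul_eq_etaStar (r : SL2Ring k) :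
    ∃ (n : ℕ) (p : B3 k), sl2T k ^ n * r = etaStar k p := by
  obtain ⟨F, rfl⟩ := Ideal.Quotient.mk_surjective r
  induction F using MvPolynomial.induction_on with
  | C a => exact ⟨0, C a, by rw [pow_zero, one_mul, etaStar, algHom_C]; rfl⟩
  | add p q hp hq =>
    obtain ⟨n, a, ha⟩ := hp
    obtain ⟨m, b, hb⟩ := hq
    refine ⟨n + m, X 0 ^ m * a + X 0 ^ n * b, ?_⟩
    simp only [map_add, map_mul, map_pow, etaStar_X_zero, ← ha, ← hb]
    ring
  | mul_X p i hp =>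
    obtain ⟨n, a, ha⟩ := hp
    obtain ⟨b, hb⟩ : ∃ b : B3 k,
        sl2T k * Ideal.Quotient.mk (Ideal.span {sl2Rel k}) (X i) = etaStar k b := by
      fin_cases i
      · exact ⟨X 0 * X 0, by simp [sl2T]⟩
      · exact ⟨X 1 * X 2 - 1, etaStar_X_one_mul_X_two_sub_one.symm⟩
      · exact ⟨X 0 * X 1, by simp [sl2X]⟩
      · exact ⟨X 0 * X 2, by simp [sl2Y]⟩
    refine ⟨n + 1, a * b, ?_⟩
    rw [map_mul, map_mul, ← ha, ← hb]
    ring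

section TAdic

local notation "K₂" => FractionRing (MvPolynomial (Fin 2) k)

/-- `B` regarded as polynomials in `t` over the field `k(x, y)`. -/
def toPolynomial : B3 k →ₐ[k] Polynomial K₂ :=
  (Polynomial.mapAlgHom (IsScalarTower.toAlgHom k (MvPolynomial (Fin 2) k) K₂)).comp
    (finSuccEquiv k 2).toAlgHom

lemma toPolynomial_apply (p : B3 k) :
    toPolynomial p = (finSuccEquiv k 2 p).map (algebraMap (MvPolynomial (Fin 2) k) K₂) :=
  rfl

lemma toPolynomial_injective : Function.Injective (toPolynomial (k := k)) :=
  (Polynomial.map_injective _ (IsFractionRing.injective _ _)).comp (finSuccEquiv k 2).injective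

lemma X_dvd_toPolynomial_iff (p : B3 k) : Polynomial.X ∣ toPolynomial p ↔ X 0 ∣ p := by
  rw [← map_dvd_iff (finSuccEquiv k 2), finSuccEquiv_X_zero, Polynomial.X_dvd_iff,
    Polynomial.X_dvd_iff, toPolynomial_apply, Polynomial.coeff_map,
    map_eq_zero_iff _ (IsFractionRing.injective (MvPolynomial (Fin 2) k) K₂)]

/-- The embedding of `R` in the field `k(x, y)(t)`, under which `u = (xy - 1) / t`. -/
def toRatFunc : SL2Ring k →ₐ[k] RatFunc K₂ :=
  lift RatFunc.X (algebraMap (Polynomial K₂) _ (toPolynomial (X 1 * X 2 - 1)) / RatFunc.X)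
    (algebraMap (Polynomial K₂) _ (toPolynomial (X 1)))
    (algebraMap (Polynomial K₂) _ (toPolynomial (X 2))) (by
      rw [mul_div_cancel₀ _ RatFunc.X_ne_zero]
      simp only [map_sub, map_mul, map_one, sub_add_cancel])

lemma toRatFunc_etaStar (p : B3 k) :
    toRatFunc (etaStar k p) = algebraMap (Polynomial K₂) _ (toPolynomial p) := by
  have h : (toRatFunc (k := k)).comp (etaStar k) =
      (IsScalarTower.toAlgHom k (Polynomial K₂) (RatFunc K₂)).comp toPolynomial :=
    algHom_ext_B3 (by simp [toRatFunc, toPolynomial_apply, finSuccEquiv_X_zero])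
      (by simp [toRatFunc]) (by simp [toRatFunc])
  exact DFunLike.congr_fun h p

lemma toRatFunc_comp_etaStar_injective :
    Function.Injective fun p ↦ toRatFunc (etaStar k p) := by
  simp_rw [toRatFunc_etaStar]
  exact (RatFunc.algebraMap_injective K₂).comp toPolynomial_injective

lemma etaStar_injective : Function.Injective (etaStar k) :=
  Function.Injective.of_comp toRatFunc_comp_etaStar_injective

lemma toRatFunc_injective : Function.Injective (toRatFunc (k := k)) := by
  rw [injective_iff_map_eq_zero]
  intro r hr
  obtain ⟨n, p, hp⟩ := exists_sl2T_pow_mul_eq_etaStar r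
  have hp_zero : p = 0 := toRatFunc_comp_etaStar_injective <| by
    simp only [← hp, map_mul, hr, mul_zero, map_zero]
  rw [hp_zero, map_zero] at hp
  exact (mul_left_mem_nonZeroDivisors_eq_zero_iff (pow_mem sl2T_mem_nonZeroDivisors n)).1 hp

instance : IsDomain (SL2Ring k) :=
  toRatFunc_injective.isDomain (toRatFunc (k := k)).toRingHom

/-- The `t`-adic absolute value on `R`, normalized by `|t| = 1 / 2`. -/
def tAdicAbv : AbsoluteValue (SL2Ring k) ℝ :=
  ((Polynomial.idealX K₂).adicAbv (b := 2) one_lt_two).comp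
    (f := (toRatFunc (k := k)).toRingHom) toRatFunc_injective

lemma tAdicAbv_apply (r : SL2Ring k) :
    tAdicAbv r = (Polynomial.idealX K₂).adicAbv (b := 2) one_lt_two (toRatFunc r) :=
  rfl

lemma isNonarchimedean_tAdicAbv : IsNonarchimedean (tAdicAbv (k := k)) := fun r s ↦ by
  simpa only [tAdicAbv_apply, map_add] using
    (Polynomial.idealX K₂).isNonarchimedean_adicAbv one_lt_two (toRatFunc r) (toRatFunc s)

lemma tAdicAbv_etaStar_le_one (p : B3 k) : tAdicAbv (etaStar k p) ≤ 1 := by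
  rw [tAdicAbv_apply, toRatFunc_etaStar]
  exact (Polynomial.idealX K₂).adicAbv_coe_le_one _ _

lemma tAdicAbv_etaStar_lt_one_iff (p : B3 k) : tAdicAbv (etaStar k p) < 1 ↔ X 0 ∣ p := by
  rw [tAdicAbv_apply, toRatFunc_etaStar,
    IsDedekindDomain.HeightOneSpectrum.adicAbv_coe_lt_one_iff, Polynomial.idealX_span,
    Ideal.mem_span_singleton, X_dvd_toPolynomial_iff]

lemma tAdicAbv_etaStar_eq_one {p : B3 k} (hp : ¬ X 0 ∣ p) : tAdicAbv (etaStar k p) = 1 :=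
  le_antisymm (tAdicAbv_etaStar_le_one p) (not_lt.1 (mt (tAdicAbv_etaStar_lt_one_iff p).1 hp))

lemma tAdicAbv_sl2T_lt_one : tAdicAbv (sl2T k) < 1 := by
  rw [← etaStar_X_zero, tAdicAbv_etaStar_lt_one_iff]

end TAdic

lemma sl2T_ne_zero : sl2T k ≠ 0 :=
  nonZeroDivisors.ne_zero sl2T_mem_nonZeroDivisors

lemma sl2X_ne_zero : (sl2X : SL2Ring k) ≠ 0 :=
  etaStar_X_one (k := k) ▸ (map_ne_zero_iff _ etaStar_injective).2 (X_ne_zero 1)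

lemma sl2Y_ne_zero : (sl2Y : SL2Ring k) ≠ 0 :=
  etaStar_X_two (k := k) ▸ (map_ne_zero_iff _ etaStar_injective).2 (X_ne_zero 2)

lemma comap_etaStar_span_sl2T : Ideal.comap (etaStar k) (Ideal.span {sl2T k}) = gammaIdeal k := by
  apply le_antisymm
  · intro p hp
    obtain ⟨r, hr⟩ := Ideal.mem_span_singleton.1 (Ideal.mem_comap.1 hp)
    let π := Ideal.Quotient.mkₐ k (gammaIdeal k)
    have hπ_mem (q : B3 k) (hq : q ∈ gammaIdeal k) : π q = 0 := Ideal.Quotient.eq_zero_iff_mem.2 hq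
    have hπt : π (X 0) = 0 := hπ_mem _ (Ideal.subset_span (by simp))
    have hπxy : π (X 1) * π (X 2) = 0 * 0 + 1 := by
      have := hπ_mem (X 1 * X 2 - 1) (Ideal.subset_span (by simp))
      rw [map_sub, map_mul, map_one] at this
      linear_combination this
    have h_comp : (lift 0 0 (π (X 1)) (π (X 2)) hπxy).comp (etaStar k) = π :=
      algHom_ext_B3 (by simp [hπt]) (by simp) (by simp)
    refine Ideal.Quotient.eq_zero_iff_mem.1 ((DFunLike.congr_fun h_comp p).symm.trans ?_)
    rw [AlgHom.comp_apply, hr, map_mul, lift_sl2T, zero_mul]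
  · rw [gammaIdeal, Ideal.span_le, Set.pair_subset_iff]
    refine ⟨?_, ?_⟩ <;> rw [SetLike.mem_coe, Ideal.mem_comap, Ideal.mem_span_singleton]
    · rw [etaStar_X_zero]
    · rw [etaStar_X_one_mul_X_two_sub_one]
      exact dvd_mul_right _ _

lemma exists_sl2T_pow_succ_mul_eq_etaStar {g : SL2Ring k} (hg : g ∉ (etaStar k).range) :
    ∃ (m : ℕ) (p : B3 k), sl2T k ^ (m + 1) * g = etaStar k p ∧ ¬ X 0 ∣ p := by
  classical
  have h := exists_sl2T_pow_mul_eq_etaStar g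
  obtain ⟨p, hp⟩ := Nat.find_spec h
  obtain ⟨m, hm⟩ : ∃ m, Nat.find h = m + 1 := Nat.exists_eq_succ_of_ne_zero fun h_zero ↦
    hg ⟨p, by simpa [h_zero] using hp.symm⟩
  rw [hm] at hp
  refine ⟨m, p, hp, ?_⟩
  rintro ⟨q, rfl⟩
  refine Nat.find_min h (m := m) (by lia)
    ⟨q, (mul_cancel_left_mem_nonZeroDivisors sl2T_mem_nonZeroDivisors).1 ?_⟩
  rw [← mul_assoc, ← pow_succ', hp, map_mul, etaStar_X_zero]

lemma exists_sl2T_pow_mul_eq_etaStar_add {g : SL2Ring k} (hg : g ∉ (etaStar k).range) :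
    ∃ (n : ℕ) (a b : B3 k),
      sl2T k ^ n * g = etaStar k (a * X 0 + b * (X 1 * X 2 - 1)) ∧ ¬ X 0 ∣ b := by
  obtain ⟨m, p, hp, hp_dvd⟩ := exists_sl2T_pow_succ_mul_eq_etaStar hg
  have hp_mem : p ∈ gammaIdeal k := by
    rw [← comap_etaStar_span_sl2T, Ideal.mem_comap, Ideal.mem_span_singleton, ← hp, pow_succ',
      mul_assoc]
    exact dvd_mul_right _ _
  obtain ⟨a, b, rfl⟩ := Ideal.mem_span_pair.1 hp_mem
  exact ⟨m + 1, a, b, hp, fun hb ↦ hp_dvd (dvd_add (dvd_mul_left _ _) (hb.mul_right _))⟩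

lemma one_lt_absoluteValue_etaStar {w : AbsoluteValue (SL2Ring k) ℝ} (hna : IsNonarchimedean w)
    (hw : ∀ r, tAdicAbv r ≤ w r) (hwk : ∀ c, w (algebraMap k (SL2Ring k) c) ≤ 1)
    (h_one_lt : 1 < w (sl2X * sl2Y)) {a b : B3 k}
    (ha : w (sl2T k) * w (sl2X * sl2Y) ^ a.totalDegree ≤ 1) (hb : ¬ X 0 ∣ b) :
    1 < w (etaStar k (a * X 0 + b * (X 1 * X 2 - 1))) := by
  set M := w (sl2X * sl2Y) with hM
  have one_le_of_not_dvd {p : B3 k} (hp : ¬ X 0 ∣ p) : 1 ≤ w (etaStar k p) :=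
    (tAdicAbv_etaStar_eq_one hp).symm.le.trans (hw _)
  have hx_one : 1 ≤ w sl2X := etaStar_X_one (k := k) ▸ one_le_of_not_dvd (by simp [X_dvd_X])
  have hy_one : 1 ≤ w sl2Y := etaStar_X_two (k := k) ▸ one_le_of_not_dvd (by simp [X_dvd_X])
  have hx : w sl2X ≤ M := by
    rw [hM, map_mul]; exact le_mul_of_one_le_right (w.nonneg _) hy_one
  have hy : w sl2Y ≤ M := by
    rw [hM, map_mul]; exact le_mul_of_one_le_left (w.nonneg _) hx_one
  have ht : w (sl2T k) ≤ M :=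
    (le_mul_of_one_le_right (w.nonneg _) (one_le_pow₀ h_one_lt.le)).trans (ha.trans h_one_lt.le)
  have h_a : w (etaStar k a) ≤ M ^ a.totalDegree :=
    absoluteValue_aeval_le_pow_totalDegree hna hwk h_one_lt.le
      (fun i ↦ by fin_cases i; exacts [ht, hx, hy]) a
  have h_left : w (etaStar k (a * X 0)) ≤ 1 := by
    rw [map_mul, map_mul, etaStar_X_zero, mul_comm]
    exact (mul_le_mul_of_nonneg_left h_a (w.nonneg _)).trans ha
  have h_xy : w (etaStar k (X 1 * X 2 - 1)) = M := by
    rw [map_sub, map_mul, map_one, etaStar_X_one, etaStar_X_two, sub_eq_add_neg,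
      hna.add_eq_left_of_lt (by rwa [map_neg_eq_map, map_one])]
  have h_right : 1 < w (etaStar k (b * (X 1 * X 2 - 1))) := by
    rw [map_mul, map_mul, h_xy]
    exact one_lt_mul_of_le_of_lt (one_le_of_not_dvd hb) h_one_lt
  rw [map_add, hna.add_eq_right_of_lt (h_left.trans_lt h_right)]
  exact h_right

lemma natDegree_sl2X_mul_sl2Y_pos {α : SL2Ring k →ₐ[k] Polynomial (SL2Ring k)}
    (hα : ∀ r, (α r).coeff 0 = r) (hαt : α (sl2T k) = Polynomial.C (sl2T k))
    (hα_ne : α ≠ Polynomial.CAlgHom) : 0 < (α (sl2X * sl2Y)).natDegree := by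
  have α_ne_zero {r : SL2Ring k} (hr : r ≠ 0) : α r ≠ 0 := fun h ↦
    hr (by rw [← hα r, h, Polynomial.coeff_zero])
  have α_eq_C {r : SL2Ring k} (hr : (α r).natDegree = 0) : α r = Polynomial.C r := by
    rw [Polynomial.eq_C_of_natDegree_eq_zero hr, hα]
  rw [map_mul, Polynomial.natDegree_mul (α_ne_zero sl2X_ne_zero) (α_ne_zero sl2Y_ne_zero)]
  by_contra! h_deg
  refine hα_ne (algHom_ext_of_comp_etaStar (T := Polynomial (SL2Ring k)) ?_
    (algHom_ext_B3 (T := Polynomial (SL2Ring k)) ?_ ?_ ?_))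
  · exact mem_nonZeroDivisors_of_ne_zero (α_ne_zero sl2T_ne_zero)
  · simpa using hαt
  · simpa using α_eq_C (r := sl2X) (by lia)
  · simpa using α_eq_C (r := sl2Y) (by lia)

lemma exists_one_lt_mul_pow_le_one {r : ℝ} (hr : r < 1) (n : ℕ) :
    ∃ M : ℝ, 1 < M ∧ r * M ^ n ≤ 1 := by
  have h_cont : Continuous fun M : ℝ ↦ r * M ^ n := by fun_prop
  have h_near : ∀ᶠ M in nhdsWithin (1 : ℝ) (Set.Ioi 1), r * M ^ n < 1 :=
    (h_cont.tendsto 1).mono_left nhdsWithin_le_nhds |>.eventually_lt_const (by simpa using hr)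
  obtain ⟨M, h_lt, hM⟩ := (h_near.and self_mem_nhdsWithin).exists
  exact ⟨M, hM, h_lt.le⟩

lemma mem_range_etaStar_of_apply_eq_C {α : SL2Ring k →ₐ[k] Polynomial (SL2Ring k)}
    (hα : ∀ r, (α r).coeff 0 = r) (hαt : α (sl2T k) = Polynomial.C (sl2T k))
    (hα_ne : α ≠ Polynomial.CAlgHom) {g : SL2Ring k} (hg : α g = Polynomial.C g) :
    g ∈ (etaStar k).range := by
  by_contra hg_mem
  obtain ⟨n, a, b, h_eq, hb⟩ := exists_sl2T_pow_mul_eq_etaStar_add hg_mem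
  obtain ⟨M, hM, h_pow⟩ := exists_one_lt_mul_pow_le_one (tAdicAbv_sl2T_lt_one (k := k))
    a.totalDegree
  have h_xy : tAdicAbv (sl2X * sl2Y : SL2Ring k) < M := by
    rw [← etaStar_X_one, ← etaStar_X_two, ← map_mul]
    exact (tAdicAbv_etaStar_le_one _).trans_lt hM
  obtain ⟨w, hna, hw, hw_inv, rfl⟩ := exists_absoluteValue_ge_apply_eq isNonarchimedean_tAdicAbv
    (α := α.toRingHom) hα (natDegree_sl2X_mul_sl2Y_pos hα hαt hα_ne) h_xy
  have hwk (c : k) : w (algebraMap k (SL2Ring k) c) ≤ 1 := by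
    rw [hw_inv _ (α.commutes c), ← (etaStar k).commutes]
    exact tAdicAbv_etaStar_le_one _
  rw [← hw_inv _ hαt] at h_pow
  refine (one_lt_absoluteValue_etaStar hna hw hwk hM h_pow hb).not_ge ?_
  have h_inv : α (sl2T k ^ n * g) = Polynomial.C (sl2T k ^ n * g) := by
    simp only [map_mul, map_pow, hαt, hg]
  rw [← h_eq, hw_inv _ h_inv, h_eq]
  exact tAdicAbv_etaStar_le_one _

/-- The `𝔾ₐ`-action on `SL₂` adding multiples of `t` to `x` and of `y` to `u`. -/
def shear : SL2Ring k →ₐ[k] Polynomial (SL2Ring k) :=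
  lift (Polynomial.C (sl2T k)) (Polynomial.C sl2U + Polynomial.X * Polynomial.C sl2Y)
    (Polynomial.C sl2X + Polynomial.X * Polynomial.C (sl2T k)) (Polynomial.C sl2Y) (by
      have h := congrArg Polynomial.C (sl2X_mul_sl2Y (k := k))
      simp only [map_mul, map_add, map_one] at h
      linear_combination h)

lemma coeff_zero_shear (r : SL2Ring k) : (shear r).coeff 0 = r := by
  have h : ((Polynomial.aeval (0 : SL2Ring k)).restrictScalars k).comp shear =
      AlgHom.id k (SL2Ring k) :=
    algHom_ext (by simp [shear]) (by simp [shear]) (by simp [shear]) (by simp [shear])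
  simpa [Polynomial.coeff_zero_eq_aeval_zero] using DFunLike.congr_fun h r

/-- The involution of `SL₂` exchanging `x` and `y`. -/
def swap : SL2Ring k ≃ₐ[k] SL2Ring k :=
  let σ := lift (sl2T k) sl2U sl2Y sl2X (by rw [mul_comm, sl2X_mul_sl2Y])
  have hσ : σ.comp σ = AlgHom.id k (SL2Ring k) :=
    algHom_ext (by simp [σ]) (by simp [σ]) (by simp [σ]) (by simp [σ])
  AlgEquiv.ofAlgHom σ σ hσ hσ

@[simp] lemma swap_sl2T : swap (sl2T k) = sl2T k := by simp [swap]

@[simp] lemma swap_sl2Y : swap (sl2Y : SL2Ring k) = sl2X := by simp [swap]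

section FixingT

variable {Φ : SL2Ring k ≃ₐ[k] SL2Ring k}

lemma map_sl2Y_mem_range_etaStar (hΦ : Φ (sl2T k) = sl2T k) :
    Φ sl2Y ∈ (etaStar k).range := by
  let α : SL2Ring k →ₐ[k] Polynomial (SL2Ring k) :=
    (Polynomial.mapAlgHom Φ.toAlgHom).comp (shear.comp Φ.symm.toAlgHom)
  have hα (r : SL2Ring k) : α (Φ r) = (shear r).map Φ.toAlgHom.toRingHom := by simp [α]
  have hα_ne : α ≠ Polynomial.CAlgHom := fun h ↦ by
    have h_x := hα sl2X
    simp [h, shear, hΦ, sl2T_ne_zero] at h_x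
  refine mem_range_etaStar_of_apply_eq_C (α := α) (fun r ↦ ?_) ?_ hα_ne ?_
  · obtain ⟨r, rfl⟩ := Φ.surjective r
    rw [hα, Polynomial.coeff_map, coeff_zero_shear]
    rfl
  · have h := hα (sl2T k)
    simpa [shear, hΦ] using h
  · simp [hα, shear]

lemma map_sl2X_mem_range_etaStar (hΦ : Φ (sl2T k) = sl2T k) :
    Φ sl2X ∈ (etaStar k).range := by
  simpa using map_sl2Y_mem_range_etaStar (Φ := swap.trans Φ) (by simpa)

lemma map_range_etaStar_le (hΦ : Φ (sl2T k) = sl2T k) :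
    (etaStar k).range.map Φ.toAlgHom ≤ (etaStar k).range := by
  rw [← AlgHom.range_comp, ← Algebra.map_top, ← adjoin_range_X, AlgHom.map_adjoin]
  rw [Algebra.adjoin_le_iff]
  rintro _ ⟨_, ⟨i, rfl⟩, rfl⟩
  fin_cases i
  · exact ⟨X 0, by simp [hΦ]⟩
  · simpa using map_sl2X_mem_range_etaStar hΦ
  · simpa using map_sl2Y_mem_range_etaStar hΦ

lemma symm_sl2T (hΦ : Φ (sl2T k) = sl2T k) : Φ.symm (sl2T k) = sl2T k :=
  Φ.symm_apply_eq.2 hΦ.symm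

lemma map_range_etaStar (hΦ : Φ (sl2T k) = sl2T k) :
    (etaStar k).range.map Φ.toAlgHom = (etaStar k).range := by
  refine (map_range_etaStar_le hΦ).antisymm fun r hr ↦ ?_
  exact ⟨Φ.symm r, map_range_etaStar_le (symm_sl2T hΦ) ⟨r, hr, rfl⟩, Φ.apply_symm_apply r⟩

end FixingT

section Units

lemma not_isUnit_sl2T : ¬ IsUnit (sl2T k) := fun h ↦ by
  simpa using h.map (lift (0 : k) 0 1 1 (by simp))

lemma exists_algebraMap_eq_of_isUnit {v : SL2Ring k} (hv : IsUnit v) :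
    ∃ c : k, algebraMap k (SL2Ring k) c = v := by
  obtain ⟨w, hw⟩ := hv.exists_right_inv
  obtain ⟨n, p, hp⟩ := exists_sl2T_pow_mul_eq_etaStar v
  obtain ⟨m, q, hq⟩ := exists_sl2T_pow_mul_eq_etaStar w
  have hpq : p * q = X 0 ^ (n + m) := etaStar_injective <| by
    rw [map_mul, ← hp, ← hq, map_pow, etaStar_X_zero, pow_add]
    linear_combination (sl2T k ^ n * sl2T k ^ m) * hw
  obtain ⟨i, -, e, he⟩ := (dvd_prime_pow (X_prime (i := (0 : Fin 3))) (n + m)).1 ⟨q, hpq.symm⟩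
  obtain ⟨c, hc, hce⟩ := isUnit_iff_eq_C_of_isReduced.1 (e⁻¹).isUnit
  have h_eq : sl2T k ^ n * v = sl2T k ^ i * algebraMap k (SL2Ring k) c := by
    rw [hp, ← etaStar_X_zero, ← (etaStar k).commutes, MvPolynomial.algebraMap_eq, ← hce,
      ← map_pow, ← map_mul, ← he, Units.mul_inv_cancel_right]
  have h_le {a b : ℕ} (h : sl2T k ^ a ∣ sl2T k ^ b) : a ≤ b :=
    (pow_dvd_pow_iff sl2T_ne_zero not_isUnit_sl2T).1 h
  have hni : n = i := by
    refine le_antisymm (h_le ?_) (h_le ?_)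
    · exact (hc.map (algebraMap k (SL2Ring k))).dvd_mul_right.1 (h_eq ▸ dvd_mul_right _ _)
    · exact hv.dvd_mul_right.1 (h_eq ▸ dvd_mul_right _ _)
  exact ⟨c, (mul_left_cancel₀ (pow_ne_zero n sl2T_ne_zero) (hni ▸ h_eq)).symm⟩

end Units

section Fibres

/-- Restriction to the fibre `t = l`, which for `l ≠ 0` is a plane with coordinates `x, y`. -/
def fibre (l : k) (hl : l ≠ 0) : SL2Ring k →ₐ[k] MvPolynomial (Fin 2) k :=
  lift (C l) (C l⁻¹ * (X 0 * X 1 - 1)) (X 0) (X 1) (by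
    rw [← mul_assoc, ← C_mul, mul_inv_cancel₀ hl, C_1, one_mul, sub_add_cancel])

lemma aeval_comp_fibre {T : Type*} [CommRing T] [Algebra k T] {l : k} (hl : l ≠ 0)
    {π : SL2Ring k →ₐ[k] T} (hπt : π (sl2T k) = algebraMap k T l) :
    (aeval ![π sl2X, π sl2Y]).comp (fibre l hl) = π := by
  have hπu : algebraMap k T l⁻¹ * (π sl2X * π sl2Y - 1) = π sl2U := by
    rw [← map_mul, sl2X_mul_sl2Y, map_add, map_mul, map_one, add_sub_cancel_right, hπt,
      ← mul_assoc, ← map_mul, inv_mul_cancel₀ hl, map_one, one_mul]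
  exact algHom_ext (by simp [fibre, hπt]) (by simp [fibre, hπu]) (by simp [fibre])
    (by simp [fibre])

lemma ker_fibre {l : k} (hl : l ≠ 0) :
    RingHom.ker (fibre l hl) = Ideal.span {sl2T k - algebraMap k (SL2Ring k) l} := by
  apply le_antisymm
  · intro r hr
    let I := Ideal.span {sl2T k - algebraMap k (SL2Ring k) l}
    let π : SL2Ring k →ₐ[k] SL2Ring k ⧸ I := Ideal.Quotient.mkₐ k I
    have h_comp := aeval_comp_fibre (T := SL2Ring k ⧸ I) (π := π) hl <| by
      rw [← π.commutes, ← sub_eq_zero, ← map_sub]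
      exact Ideal.Quotient.eq_zero_iff_mem.2 (Ideal.mem_span_singleton_self _)
    refine Ideal.Quotient.eq_zero_iff_mem.1 ((DFunLike.congr_fun h_comp r).symm.trans ?_)
    rw [AlgHom.comp_apply, RingHom.mem_ker.1 hr, map_zero]
  · rw [Ideal.span_singleton_le_iff_mem, RingHom.mem_ker, map_sub, AlgHom.commutes]
    simp [fibre]

lemma not_sl2T_dvd_sl2X_sub_algebraMap (c : k) :
    ¬ sl2T k ∣ sl2X - algebraMap k (SL2Ring k) c := by
  let φ : SL2Ring k →ₐ[k] RatFunc k := lift 0 0 RatFunc.X RatFunc.X⁻¹ (by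
    rw [mul_inv_cancel₀ RatFunc.X_ne_zero, zero_mul, zero_add])
  rintro ⟨r, hr⟩
  have h_eq : RatFunc.X = RatFunc.C c := by
    simpa [φ, sub_eq_zero] using congrArg φ hr
  refine Polynomial.X_ne_C c (RatFunc.algebraMap_injective k ?_)
  rwa [RatFunc.algebraMap_X, RatFunc.algebraMap_C]

/-- The fibre of `t` over `0` is not isomorphic to a plane: it carries the non-constant unit `x`. -/
lemma not_associated_map_sl2T (Φ : SL2Ring k ≃ₐ[k] SL2Ring k) {l : k} (hl : l ≠ 0) :
    ¬ Associated (Φ (sl2T k)) (sl2T k - algebraMap k (SL2Ring k) l) := fun h ↦ by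
  have h_ker (r : SL2Ring k) : fibre l hl r = 0 ↔ Φ (sl2T k) ∣ r := by
    rw [← RingHom.mem_ker, ker_fibre, Ideal.mem_span_singleton, h.dvd_iff_dvd_left]
  have h_unit : IsUnit (fibre l hl (Φ sl2X)) := by
    refine IsUnit.of_mul_eq_one (fibre l hl (Φ sl2Y)) ?_
    rw [← map_mul, ← map_mul, sl2X_mul_sl2Y, map_add, map_mul, map_add, map_mul, map_one, map_one,
      (h_ker _).2 dvd_rfl, zero_mul, zero_add]
  obtain ⟨c, -, hc⟩ := isUnit_iff_eq_C_of_isReduced.1 h_unit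
  refine not_sl2T_dvd_sl2X_sub_algebraMap c ((map_dvd_iff Φ).1 ((h_ker _).1 ?_))
  rw [map_sub, map_sub, hc, AlgEquiv.commutes, AlgHom.commutes, MvPolynomial.algebraMap_eq,
    sub_self]

end Fibres

lemma map_span_sl2T_sub_one_iff (Φ : SL2Ring k ≃ₐ[k] SL2Ring k) :
    Ideal.map Φ (Ideal.span {sl2T k - 1}) = Ideal.span {sl2T k - 1} ↔
      Φ (sl2T k) = sl2T k := by
  rw [Ideal.map_span, Set.image_singleton, map_sub, map_one]
  refine ⟨fun h ↦ ?_, fun h ↦ by rw [h]⟩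
  obtain ⟨v, hv⟩ := (Ideal.span_singleton_eq_span_singleton.1 h).symm
  obtain ⟨c, hc⟩ := exists_algebraMap_eq_of_isUnit v.isUnit
  have hc_ne : c ≠ 0 := by
    rintro rfl
    exact v.ne_zero (hc ▸ map_zero _)
  have hΦ : Φ (sl2T k) = (sl2T k - algebraMap k (SL2Ring k) (1 - c⁻¹)) * v := by
    have hcv : algebraMap k (SL2Ring k) c⁻¹ * v = 1 := by
      rw [← hc, ← map_mul, inv_mul_cancel₀ hc_ne, map_one]
    rw [map_sub, map_one]
    linear_combination -hv - hcv
  have h_shift : 1 - c⁻¹ = 0 := by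
    by_contra hl
    exact not_associated_map_sl2T Φ hl (Associated.symm ⟨v, hΦ.symm⟩)
  have hc_one : c = 1 := inv_eq_one.1 (sub_eq_zero.1 h_shift).symm
  rw [hΦ, h_shift, ← hc, hc_one, map_zero, map_one, sub_zero, mul_one]

section Correspondence

lemma exists_algEquiv_of_map_range_eq {B R : Type*} [Semiring B] [Semiring R] [Algebra k B]
    [Algebra k R] {f : B →ₐ[k] R} (hf : Function.Injective f) {Φ : R ≃ₐ[k] R}
    (hΦ : f.range.map Φ.toAlgHom = f.range) : ∃ ψ : B ≃ₐ[k] B, ∀ b, f (ψ b) = Φ (f b) := by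
  let e := AlgEquiv.ofInjective f hf
  let ψ := ((e.trans (Φ.subalgebraMap f.range)).trans (Subalgebra.equivOfEq _ _ hΦ)).trans e.symm
  exact ⟨ψ, fun b ↦ congrArg Subtype.val (e.apply_symm_apply _)⟩

lemma exists_mem_autA3TGamma {Φ : SL2Ring k ≃ₐ[k] SL2Ring k} (hΦ : Φ (sl2T k) = sl2T k) :
    ∃ ψ ∈ autA3TGamma k, ∀ p, etaStar k (ψ p) = Φ (etaStar k p) := by
  obtain ⟨ψ, hψ⟩ := exists_algEquiv_of_map_range_eq etaStar_injective (map_range_etaStar hΦ)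
  refine ⟨ψ, ⟨etaStar_injective ?_, ?_⟩, hψ⟩
  · rw [hψ, etaStar_X_zero, hΦ]
  · have h_mem (p : B3 k) : ψ p ∈ gammaIdeal k ↔ p ∈ gammaIdeal k := by
      simp only [← comap_etaStar_span_sl2T, Ideal.mem_comap, Ideal.mem_span_singleton, hψ]
      nth_rw 1 [← hΦ]
      exact map_dvd_iff Φ
    ext p
    obtain ⟨p, rfl⟩ := ψ.surjective p
    simp [Ideal.mem_map_of_equiv, h_mem]

lemma exists_algHom_comp_etaStar_eq {ψ : B3 k ≃ₐ[k] B3 k} (hψ : ψ ∈ autA3TGamma k) :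
    ∃ f : SL2Ring k →ₐ[k] SL2Ring k,
      f (sl2T k) = sl2T k ∧ ∀ p, f (etaStar k p) = etaStar k (ψ p) := by
  have h_mem : ψ (X 1 * X 2 - 1) ∈ gammaIdeal k :=
    hψ.2 ▸ Ideal.mem_map_of_mem ψ (Ideal.subset_span (by simp))
  rw [← comap_etaStar_span_sl2T, Ideal.mem_comap, Ideal.mem_span_singleton] at h_mem
  obtain ⟨r, hr⟩ := h_mem
  let f : SL2Ring k →ₐ[k] SL2Ring k :=
    lift (sl2T k) r (etaStar k (ψ (X 1))) (etaStar k (ψ (X 2))) (by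
      rw [← hr, ← map_mul, ← map_mul, map_sub, map_sub, map_one, map_one, sub_add_cancel])
  have h_comp : f.comp (etaStar k) = (etaStar k).comp ψ.toAlgHom :=
    algHom_ext_B3 (by simp [f, hψ.1]) (by simp [f]) (by simp [f])
  exact ⟨f, by simp [f], DFunLike.congr_fun h_comp⟩

lemma exists_mem_autSL2T {ψ : B3 k ≃ₐ[k] B3 k} (hψ : ψ ∈ autA3TGamma k) :
    ∃ Φ ∈ autSL2T k, ∀ p, etaStar k (ψ p) = Φ (etaStar k p) := by
  obtain ⟨f, hft, hf⟩ := exists_algHom_comp_etaStar_eq hψ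
  obtain ⟨g, hgt, hg⟩ := exists_algHom_comp_etaStar_eq (inv_mem hψ)
  have h_id {h : SL2Ring k →ₐ[k] SL2Ring k} (ht : h (sl2T k) = sl2T k)
      (h_eta : ∀ p, h (etaStar k p) = etaStar k p) : h = AlgHom.id k (SL2Ring k) :=
    algHom_ext_of_comp_etaStar (ht.symm ▸ sl2T_mem_nonZeroDivisors) (AlgHom.ext h_eta)
  have hfg : f.comp g = AlgHom.id k (SL2Ring k) :=
    h_id (by simp [hft, hgt]) fun p ↦ by simp [hf, hg]
  have hgf : g.comp f = AlgHom.id k (SL2Ring k) :=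
    h_id (by simp [hft, hgt]) fun p ↦ by simp [hf, hg]
  exact ⟨AlgEquiv.ofAlgHom f g hfg hgf, hft, fun p ↦ (hf p).symm⟩

variable (k) in
/-- The group of pairs `(Φ, ψ)` with `η* ∘ ψ = Φ ∘ η*`. -/
def intertwiners : Subgroup (autSL2T k × autA3TGamma k) where
  carrier := {P | ∀ p, etaStar k (P.2.1 p) = P.1.1 (etaStar k p)}
  one_mem' _ := rfl
  mul_mem' {P Q} hP hQ p := (hP _).trans (congrArg P.1.1 (hQ p))
  inv_mem' {P} hP p := P.1.1.injective <| by
    rw [← hP]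
    simp

lemma bijective_fst_intertwiners : Function.Bijective (Prod.fst ∘ (intertwiners k).subtype) := by
  constructor
  · rintro ⟨⟨Φ, ψ⟩, h⟩ ⟨⟨Φ', ψ'⟩, h'⟩ (rfl : Φ = Φ')
    obtain rfl : ψ = ψ' :=
      Subtype.ext <| AlgEquiv.ext fun p ↦ etaStar_injective ((h p).trans (h' p).symm)
    rfl
  · intro Φ
    obtain ⟨ψ, hψ, h⟩ := exists_mem_autA3TGamma Φ.2
    exact ⟨⟨(Φ, ⟨ψ, hψ⟩), h⟩, rfl⟩

lemma bijective_snd_intertwiners : Function.Bijective (Prod.snd ∘ (intertwiners k).subtype) := by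
  constructor
  · rintro ⟨⟨Φ, ψ⟩, h⟩ ⟨⟨Φ', ψ'⟩, h'⟩ (rfl : ψ = ψ')
    have h_eq : Φ.1.toAlgHom = Φ'.1.toAlgHom :=
      algHom_ext_of_comp_etaStar (Φ.2.symm ▸ sl2T_mem_nonZeroDivisors)
        (AlgHom.ext fun p ↦ (h p).symm.trans (h' p))
    obtain rfl : Φ = Φ' := Subtype.ext <| AlgEquiv.ext fun r ↦ AlgHom.congr_fun h_eq r
    rfl
  · intro ψ
    obtain ⟨Φ, hΦ, h⟩ := exists_mem_autSL2T ψ.2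
    exact ⟨⟨(⟨Φ, hΦ⟩, ψ), h⟩, rfl⟩

end Correspondence

end SL2Ring

/-- **Proposition 4.4 (Blanc–van Santen).** (1) An automorphism `Φ` of `SL₂` preserves the
hypersurface `t = 1` iff `Φ*(t) = t`. (2) Every automorphism of `SL₂` fixing `t` preserves
`η*(B)`, and `Φ ↦ (η*)⁻¹ ∘ Φ ∘ η*` is a group isomorphism from the automorphisms of `SL₂`
fixing `t` onto the automorphisms of `𝔸³` fixing `t` and preserving the curve
`Γ : t = xy − 1 = 0`. -/
theorem aut_SL2_fixing_t (k : Type*) [Field k] :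
    (∀ Φ : SL2Ring k ≃ₐ[k] SL2Ring k,
        Ideal.map Φ (Ideal.span {sl2T k - 1}) = Ideal.span {sl2T k - 1} ↔
          Φ (sl2T k) = sl2T k) ∧
    (∀ Φ : SL2Ring k ≃ₐ[k] SL2Ring k, Φ (sl2T k) = sl2T k →
        Subalgebra.map Φ.toAlgHom (etaStar k).range = (etaStar k).range) ∧
    (∃ E : autSL2T k ≃* autA3TGamma k,
        ∀ Φ : autSL2T k,
          (etaStar k).comp (E Φ).1.toAlgHom = Φ.1.toAlgHom.comp (etaStar k)) := by
  refine ⟨SL2Ring.map_span_sl2T_sub_one_iff, fun _ ↦ SL2Ring.map_range_etaStar, ?_⟩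
  obtain ⟨E, hE⟩ := Subgroup.exists_mulEquiv_eq_graph
    (SL2Ring.bijective_fst_intertwiners (k := k)) SL2Ring.bijective_snd_intertwiners
  refine ⟨E, fun Φ ↦ AlgHom.ext ?_⟩
  have h_mem : (Φ, E Φ) ∈ SL2Ring.intertwiners k := hE ▸ MonoidHom.mem_graph.2 rfl
  exact h_mem
end
end

section
/- Let k be a field, n ≥ 1 an integer, and h ∈ k[t,x,y] a polynomial such that h(0,x,y) ∈ k[x,y] does not belong to the subalgebra k[w] for any variable w of the k-algebra k[x,y]. Let R = k[t,u,x,y]/(tⁿ·u − h(t,x,y)), let ι : k[t,x,y] → R be the natural (injective) k-algebra homomorphism, and let I ⊂ k[t,x,y] be the ideal generated by tⁿ and h. Then every k[t]-algebra automorphism φ of R satisfies φ(ι(k[t,x,y])) = ι(k[t,x,y]), and the assignment φ ↦ ι⁻¹ ∘ φ ∘ ι defines a group isomorphism from the group Aut_{k[t]}(R) of k[t]-algebra automorphisms of R onto the group {ψ ∈ Aut_{k[t]}(k[t,x,y]) : ψ(I) = I}. -/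
open MvPolynomial

noncomputable section

variable (k : Type*) [Field k]

/-- `h(t,x,y) ∈ k[t,x,y]` viewed in `k[t,u,x,y]` (variables of the target:
`0 = t`, `1 = u`, `2 = x`, `3 = y`; variables of the source: `0 = t`, `1 = x`, `2 = y`). -/
def hEmb (h : MvPolynomial (Fin 3) k) : MvPolynomial (Fin 4) k :=
  aeval ![X 0, X 2, X 3] h

/-- The ring `R = k[t,u,x,y]/(tⁿ·u − h(t,x,y))`. -/
abbrev ModifRing (n : ℕ) (h : MvPolynomial (Fin 3) k) : Type _ :=
  MvPolynomial (Fin 4) k ⧸ Ideal.span {X 0 ^ n * X 1 - hEmb k h}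

/-- The natural (injective) `k`-algebra homomorphism `ι : k[t,x,y] → R`. -/
def iotaModif (n : ℕ) (h : MvPolynomial (Fin 3) k) :
    MvPolynomial (Fin 3) k →ₐ[k] ModifRing k n h :=
  aeval ![Ideal.Quotient.mk (Ideal.span {X 0 ^ n * X 1 - hEmb k h}) (X 0),
          Ideal.Quotient.mk (Ideal.span {X 0 ^ n * X 1 - hEmb k h}) (X 2),
          Ideal.Quotient.mk (Ideal.span {X 0 ^ n * X 1 - hEmb k h}) (X 3)]

/-- The class of `t` in `R`. -/
def tModif (n : ℕ) (h : MvPolynomial (Fin 3) k) : ModifRing k n h :=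
  Ideal.Quotient.mk (Ideal.span {X 0 ^ n * X 1 - hEmb k h}) (X 0)

/-- The group `Aut_{k[t]}(R)` of `k`-algebra automorphisms of `R` fixing `t`. -/
def autModifT (n : ℕ) (h : MvPolynomial (Fin 3) k) :
    Subgroup (ModifRing k n h ≃ₐ[k] ModifRing k n h) where
  carrier := {φ | φ (tModif k n h) = tModif k n h}
  one_mem' := rfl
  mul_mem' := by
    intro a b ha hb
    simp only [Set.mem_setOf_eq] at ha hb ⊢
    rw [AlgEquiv.mul_apply, hb, ha]
  inv_mem' := by
    intro a ha
    simp only [Set.mem_setOf_eq] at ha ⊢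
    exact a.symm_apply_eq.mpr ha.symm

/-- The group of `k`-algebra automorphisms of `k[t,x,y]` fixing `t` and preserving the
ideal `I = (tⁿ, h)`. -/
def autPolyTI (n : ℕ) (h : MvPolynomial (Fin 3) k) :
    Subgroup (MvPolynomial (Fin 3) k ≃ₐ[k] MvPolynomial (Fin 3) k) where
  carrier := {ψ | ψ (X 0) = X 0 ∧
    Ideal.map ψ (Ideal.span {X 0 ^ n, h}) = Ideal.span {X 0 ^ n, h}}
  one_mem' := ⟨rfl, Ideal.map_aut_one _⟩
  mul_mem' := by
    intro a b ha hb
    simp only [Set.mem_setOf_eq] at ha hb ⊢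
    refine ⟨?_, ?_⟩
    · rw [AlgEquiv.mul_apply, hb.1, ha.1]
    · rw [Ideal.map_aut_mul, hb.2, ha.2]
  inv_mem' := by
    intro a ha
    simp only [Set.mem_setOf_eq] at ha ⊢
    exact ⟨a.symm_apply_eq.mpr ha.1.symm, Ideal.map_aut_inv a _ ha.2⟩

/-!
The heart of the matter is a statement about `k[t, x, y]`: if `P` and `Q` generate `k[t, 1/t, x, y]`
over `k[t, 1/t]` and `P` is a polynomial, then `P(0, x, y)` lies in `k[v]` for some variable `v` of
`k[x, y]`. For every positive weight, the top form of `P(0, x, y)` is a constant times a power of a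
form whose weight divides the weight of `x` or of `y`: otherwise trailing forms of polynomials in
`P` and `Q` could never produce both `x` and `y`. On the Newton polygon this leaves only edges that
an elementary automorphism can shorten, and descent ends at a polynomial in a single coordinate.

Now let `φ` be a `k[t]`-automorphism of `R` and write `φ(x) = P / tᵃ` with `a` minimal. If `a > 0`,
then `P(0, x, y) ≠ 0` and `t ∣ ι P` in `R`, so that `h(0, x, y)` divides `P(0, x, y) ∈ k[v]` and
hence itself lies in `k[v]`, against the hypothesis. So `φ` preserves `ι(k[t, x, y])`. Since `R` is
contained in `k[t, 1/t, x, y]`, `φ` is determined by its restriction, and an automorphism of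
`k[t, x, y]` extends to `R` exactly when it preserves the ideal `I = {a : tⁿ ∣ ι a}`.
-/

section InitialForms

/-- A map `φ : S → G` that behaves like taking the initial form with respect to a grading: it is
multiplicative, vanishes only at `0`, and for a finite family of nonzero elements of `S`, the
initial forms of some nonempty subfamily (those of extremal degree) either cancel or add up to the
initial form of the whole sum. Finite families are indexed by `ℕ`, as for coefficients. -/
structure IsInitialForm {S G : Type*} [CommRing S] [CommRing G] (φ : S → G) : Prop where
  zero : φ 0 = 0
  ne_zero : ∀ f, f ≠ 0 → φ f ≠ 0
  one : φ 1 = 1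
  mul : ∀ f g, φ (f * g) = φ f * φ g
  sum : ∀ (s : Finset ℕ) (g : ℕ → S), s.Nonempty → (∀ i ∈ s, g i ≠ 0) →
    ∃ t ⊆ s, t.Nonempty ∧ (∑ i ∈ t, φ (g i) = 0 ∨ ∑ i ∈ t, φ (g i) = φ (∑ i ∈ s, g i))

namespace IsInitialForm

variable {S G H : Type*} [CommRing S] [CommRing G] [CommRing H]

lemma pow {φ : S → G} (hφ : IsInitialForm φ) (f : S) (n : ℕ) : φ (f ^ n) = φ f ^ n := by
  induction n with
  | zero => simp [hφ.one]
  | succ n ih => rw [pow_succ, pow_succ, hφ.mul, ih]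

lemma comp {φ : S → G} {ψ : G → H} (hψ : IsInitialForm ψ) (hφ : IsInitialForm φ) :
    IsInitialForm (ψ ∘ φ) where
  zero := by simp [hφ.zero, hψ.zero]
  one := by simp [hφ.one, hψ.one]
  mul := by simp [hφ.mul, hψ.mul]
  ne_zero f hf := hψ.ne_zero _ (hφ.ne_zero _ hf)
  sum s g hs hg := by
    obtain ⟨t, ht, ht_ne, h⟩ := hφ.sum s g hs hg
    obtain ⟨t', ht', ht'_ne, h'⟩ := hψ.sum t (fun i => φ (g i)) ht_ne
      fun i hi => hφ.ne_zero _ (hg i (ht hi))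
    refine ⟨t', ht'.trans ht, ht'_ne, ?_⟩
    rcases h' with h' | h'
    · exact Or.inl h'
    · exact h.imp (fun h => by simpa [h, hψ.zero] using h') fun h => by simpa [h] using h'

lemma of_injective {φ : S →+* G} (hφ : Function.Injective φ) : IsInitialForm φ where
  zero := map_zero φ
  one := map_one φ
  mul := map_mul φ
  ne_zero f hf := by rwa [Ne, map_eq_zero_iff φ hφ]
  sum s g hs _ := ⟨s, subset_rfl, hs, Or.inr (map_sum φ g s).symm⟩

lemma leadingCoeff [IsDomain G] : IsInitialForm (Polynomial.leadingCoeff (R := G)) where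
  zero := Polynomial.leadingCoeff_zero
  one := Polynomial.leadingCoeff_one
  mul := Polynomial.leadingCoeff_mul
  ne_zero _ := Polynomial.leadingCoeff_ne_zero.2
  sum s g hs _ := by
    obtain ⟨j, hj, hmax⟩ := s.exists_max_image (fun i => (g i).natDegree) hs
    have sum_eq : ∑ i ∈ s with (g i).natDegree = (g j).natDegree, (g i).leadingCoeff
        = (∑ i ∈ s, g i).coeff (g j).natDegree := by
      rw [Polynomial.finsetSum_coeff, Finset.sum_filter]
      refine Finset.sum_congr rfl fun i hi => ?_
      split_ifs with h
      · rw [← h]; rfl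
      · rw [Polynomial.coeff_eq_zero_of_natDegree_lt (lt_of_le_of_ne (hmax i hi) h)]
    refine ⟨_, Finset.filter_subset (fun i => (g i).natDegree = (g j).natDegree) s,
      ⟨j, by simp [hj]⟩, ?_⟩
    rw [sum_eq, or_iff_not_imp_left]
    intro h0
    rw [Polynomial.leadingCoeff, le_antisymm
      (Polynomial.natDegree_sum_le_of_forall_le _ _ hmax) (Polynomial.le_natDegree_of_ne_zero h0)]

lemma trailingCoeff [IsDomain G] : IsInitialForm (Polynomial.trailingCoeff (R := G)) where
  zero := Polynomial.trailingCoeff_zero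
  one := by simp [Polynomial.trailingCoeff]
  mul := Polynomial.trailingCoeff_mul
  ne_zero _ := Polynomial.trailingCoeff_nonzero_iff_nonzero.2
  sum s g hs _ := by
    obtain ⟨j, hj, hmin⟩ := s.exists_min_image (fun i => (g i).natTrailingDegree) hs
    have sum_coeff_eq (m : ℕ) (hm : m < (g j).natTrailingDegree) : (∑ i ∈ s, g i).coeff m = 0 := by
      rw [Polynomial.finsetSum_coeff]
      exact Finset.sum_eq_zero fun i hi =>
        Polynomial.coeff_eq_zero_of_lt_natTrailingDegree (hm.trans_le (hmin i hi))
    have sum_eq : ∑ i ∈ s with (g i).natTrailingDegree = (g j).natTrailingDegree,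
        (g i).trailingCoeff = (∑ i ∈ s, g i).coeff (g j).natTrailingDegree := by
      rw [Polynomial.finsetSum_coeff, Finset.sum_filter]
      refine Finset.sum_congr rfl fun i hi => ?_
      split_ifs with h
      · rw [← h]; rfl
      · rw [Polynomial.coeff_eq_zero_of_lt_natTrailingDegree
          (lt_of_le_of_ne (hmin i hi) (Ne.symm h))]
    refine ⟨_, Finset.filter_subset (fun i => (g i).natTrailingDegree = (g j).natTrailingDegree) s,
      ⟨j, by simp [hj]⟩, ?_⟩
    rw [sum_eq, or_iff_not_imp_left]
    intro h0
    rw [Polynomial.trailingCoeff, le_antisymm (Polynomial.natTrailingDegree_le_of_ne_zero h0)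
      (Polynomial.le_natTrailingDegree (fun h => h0 (by simp [h])) sum_coeff_eq)]

/-- If the summands of `E(V)` have algebraically independent initial forms, no cancellation can
occur among them. -/
lemma eval_mem_adjoin {R : Type*} [CommRing R] [Algebra R G] [IsDomain S] {φ : S → G}
    (hφ : IsInitialForm φ) {Z : Subalgebra R G} {E : Polynomial S} (hE : ∀ i, φ (E.coeff i) ∈ Z)
    {v : S} (hv : Transcendental Z (φ v)) : φ (E.eval v) ∈ Algebra.adjoin Z {φ v} := by
  rcases eq_or_ne E 0 with rfl | hE0
  · simp [hφ.zero, zero_mem]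
  have : Nontrivial G := ⟨φ 1, 0, hφ.ne_zero 1 one_ne_zero⟩
  have hv0 : v ≠ 0 := by rintro rfl; exact hv (hφ.zero ▸ isAlgebraic_zero)
  obtain ⟨t, ht, ⟨j, hj⟩, h⟩ := hφ.sum E.support (fun i => E.coeff i * v ^ i)
    (Polynomial.support_nonempty.2 hE0)
    fun i hi => mul_ne_zero (Polynomial.mem_support_iff.1 hi) (pow_ne_zero _ hv0)
  let q : Polynomial Z := ∑ i ∈ t, Polynomial.monomial i ⟨φ (E.coeff i), hE i⟩
  have aeval_q : Polynomial.aeval (φ v) q = ∑ i ∈ t, φ (E.coeff i * v ^ i) := by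
    simp [q, Polynomial.aeval_monomial, hφ.mul, hφ.pow]
  have hq : q ≠ 0 := by
    intro hq
    have hj0 := congrArg (Subtype.val ∘ fun p => Polynomial.coeff p j) hq
    simp only [q, Function.comp_apply, Polynomial.finsetSum_coeff, Polynomial.coeff_monomial,
      Finset.sum_ite_eq', hj, if_true, Polynomial.coeff_zero, ZeroMemClass.coe_zero] at hj0
    exact hφ.ne_zero _ (Polynomial.mem_support_iff.1 (ht hj)) hj0
  rw [Polynomial.eval_eq_sum, Polynomial.sum, ← h.resolve_left fun h0 =>
    hv ⟨q, hq, aeval_q.trans h0⟩, ← aeval_q]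
  exact Polynomial.aeval_mem_adjoin_singleton _ _

end IsInitialForm

lemma exists_C_leadingCoeff_pow_mul_eq_eval {B : Type*} [CommRing B] {F : Polynomial B}
    (hF : 0 < F.natDegree) (G : Polynomial B) :
    ∃ (N : ℕ) (H : Polynomial (Polynomial B)),
      (∀ i, H.coeff i ∈ Polynomial.degreeLT B F.natDegree) ∧
        Polynomial.C (F.leadingCoeff ^ N) * G = H.eval F := by
  induction hg : G.natDegree using Nat.strong_induction_on generalizing G with | _ g ih
  rcases lt_or_ge g F.natDegree with hlt | hge
  · refine ⟨0, Polynomial.C G, fun i => ?_, by simp⟩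
    rw [Polynomial.coeff_C]
    split_ifs
    · exact Polynomial.mem_degreeLT.2
        (Polynomial.degree_le_natDegree.trans_lt (Nat.cast_lt.2 (hg.trans_lt hlt)))
    · exact zero_mem _
  obtain ⟨N₁, H₁, hH₁, e₁⟩ := ih _ (hg ▸
    Polynomial.natDegree_cancelLeads_lt_of_natDegree_le_natDegree (hg ▸ hge) (by lia)) _ rfl
  obtain ⟨N₂, H₂, hH₂, e₂⟩ := ih (Polynomial.X ^ (g - F.natDegree)).natDegree
    ((Polynomial.natDegree_X_pow_le _).trans_lt (by lia)) _ rfl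
  set l := F.leadingCoeff
  refine ⟨N₁ + N₂ + 1, Polynomial.C (Polynomial.C (l ^ N₂)) * H₁
    + Polynomial.C (Polynomial.C (l ^ N₁ * G.leadingCoeff)) * (H₂ * Polynomial.X), ?_, ?_⟩
  · intro i
    rw [Polynomial.coeff_add, Polynomial.coeff_C_mul, Polynomial.coeff_C_mul,
      ← Polynomial.smul_eq_C_mul, ← Polynomial.smul_eq_C_mul]
    refine add_mem (Submodule.smul_mem _ _ (hH₁ i)) (Submodule.smul_mem _ _ ?_)
    cases i with
    | zero => simp [zero_mem]
    | succ i => simpa only [Polynomial.coeff_mul_X] using hH₂ i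
  · have e : Polynomial.C l * G = F.cancelLeads G
        + Polynomial.C G.leadingCoeff * Polynomial.X ^ (g - F.natDegree) * F := by
      rw [Polynomial.cancelLeads, hg, Nat.sub_eq_zero_of_le hge]
      ring
    simp only [Polynomial.eval_add, Polynomial.eval_mul, Polynomial.eval_C, Polynomial.eval_X,
      ← e₁, ← e₂, pow_add, map_mul, pow_one]
    linear_combination Polynomial.C (l ^ N₁) * Polynomial.C (l ^ N₂) * e

/-- Pseudo-expand in powers of `F`: by `hlow` the coefficients have initial forms in `Z`. -/
lemma IsInitialForm.exists_pow_mul_mem_adjoin {R B S G : Type*} [CommRing R] [CommRing B]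
    [CommRing S] [IsDomain S] [CommRing G] [Algebra R G] [Algebra B S] {φ : S → G}
    (hφ : IsInitialForm φ) {Z : Subalgebra R G} {q : S} {F : Polynomial B} (hF : 0 < F.natDegree)
    (hlow : ∀ H ∈ Polynomial.degreeLT B F.natDegree, φ (Polynomial.aeval q H) ∈ Z)
    (hFq : Transcendental Z (φ (Polynomial.aeval q F))) (H : Polynomial B) :
    ∃ N : ℕ, φ (algebraMap B S F.leadingCoeff) ^ N * φ (Polynomial.aeval q H) ∈
      Algebra.adjoin Z {φ (Polynomial.aeval q F)} := by
  obtain ⟨N, E, hE, e⟩ := exists_C_leadingCoeff_pow_mul_eq_eval hF H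
  refine ⟨N, ?_⟩
  have e' : algebraMap B S F.leadingCoeff ^ N * Polynomial.aeval q H
      = (E.map (Polynomial.aeval q).toRingHom).eval (Polynomial.aeval q F) := by
    have := congrArg (Polynomial.aeval q) e
    rw [map_mul, Polynomial.aeval_C, map_pow] at this
    rw [this]
    exact (Polynomial.eval_map_apply (Polynomial.aeval q).toRingHom F).symm
  rw [← hφ.pow, ← hφ.mul, e']
  refine hφ.eval_mem_adjoin (fun i => ?_) hFq
  rw [Polynomial.coeff_map]
  exact hlow _ (hE i)

end InitialForms

section TopForms

variable {σ R : Type*} [CommRing R] (w : σ → ℕ)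

/-- The homomorphism `xᵢ ↦ xᵢ z^{wᵢ}`, which spreads the components of a polynomial for the weight
`w` over the coefficients of the powers of `z`. -/
def weightHom : MvPolynomial σ R →ₐ[R] Polynomial (MvPolynomial σ R) :=
  aeval fun i => Polynomial.C (X i) * Polynomial.X ^ w i

lemma weightHom_monomial (m : σ →₀ ℕ) (c : R) :
    weightHom w (monomial m c) = Polynomial.monomial (Finsupp.weight w m) (monomial m c) := by
  rw [weightHom, aeval_monomial, monomial_eq, Finsupp.weight_apply, Finsupp.sum,
    ← Polynomial.C_mul_X_pow_eq_monomial, Finsupp.prod, Finsupp.prod, map_mul, map_prod,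
    ← Finset.prod_pow_eq_pow_sum, mul_assoc, ← Finset.prod_mul_distrib]
  congr 1
  refine Finset.prod_congr rfl fun i _ => ?_
  rw [mul_pow, ← pow_mul, smul_eq_mul, mul_comm (w i), map_pow]

lemma coeff_weightHom (f : MvPolynomial σ R) (n : ℕ) :
    (weightHom w f).coeff n = weightedHomogeneousComponent w n f := by
  induction f using MvPolynomial.induction_on' with
  | monomial m c =>
    rw [weightHom_monomial, Polynomial.coeff_monomial,
      weightedHomogeneousComponent_of_mem (isWeightedHomogeneous_monomial w m c rfl)]
    simp only [eq_comm]
  | add p q hp hq => rw [map_add, Polynomial.coeff_add, hp, hq, map_add]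

lemma weightHom_injective : Function.Injective (weightHom (R := R) w) := by
  refine Function.LeftInverse.injective (g := Polynomial.eval 1) fun f => ?_
  induction f using MvPolynomial.induction_on' with
  | monomial m c => simp [weightHom_monomial]
  | add p q hp hq => rw [map_add, Polynomial.eval_add, hp, hq]

lemma natDegree_weightHom (f : MvPolynomial σ R) :
    (weightHom w f).natDegree = weightedTotalDegree w f := by
  refine le_antisymm (Polynomial.natDegree_le_iff_coeff_eq_zero.2 fun n hn => ?_)
    (Finset.sup_le fun d hd => Polynomial.le_natDegree_of_ne_zero fun h => ?_)
  · rw [coeff_weightHom]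
    exact weightedHomogeneousComponent_eq_zero n f hn
  · rw [coeff_weightHom] at h
    have hd' := congrArg (coeff d) h
    rw [coeff_weightedHomogeneousComponent, if_pos rfl] at hd'
    exact mem_support_iff.1 hd hd'

/-- The component of highest `w`-degree. -/
def topForm (f : MvPolynomial σ R) : MvPolynomial σ R :=
  weightedHomogeneousComponent w (weightedTotalDegree w f) f

lemma topForm_eq_leadingCoeff (f : MvPolynomial σ R) :
    topForm w f = (weightHom w f).leadingCoeff := by
  rw [topForm, Polynomial.leadingCoeff, coeff_weightHom, natDegree_weightHom]

lemma isWeightedHomogeneous_topForm (f : MvPolynomial σ R) :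
    IsWeightedHomogeneous w (topForm w f) (weightedTotalDegree w f) :=
  weightedHomogeneousComponent_isWeightedHomogeneous _ _

lemma isInitialForm_topForm [IsDomain R] : IsInitialForm (topForm (R := R) w) := by
  have := IsInitialForm.leadingCoeff.comp
    (IsInitialForm.of_injective (φ := (weightHom (R := R) w).toRingHom) (weightHom_injective w))
  convert! this using 1
  exact funext (topForm_eq_leadingCoeff w)

variable {w}

lemma topForm_eq_self {f : MvPolynomial σ R} {n : ℕ} (hf : IsWeightedHomogeneous w f n) :
    topForm w f = f := by
  rcases eq_or_ne f 0 with rfl | hf0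
  · simp [topForm]
  · have h := (weightedTotalDegree_coe w f hf0).symm.trans (hf.weighted_total_degree hf0)
    rw [topForm, WithBot.coe_injective h, weightedHomogeneousComponent_eq_self hf]

lemma eq_C_of_isWeightedHomogeneous_zero (hw : ∀ i, w i ≠ 0) {f : MvPolynomial σ R}
    (hf : IsWeightedHomogeneous w f 0) : f = C (coeff 0 f) := by
  rw [← weightedHomogeneousComponent_zero f hw, weightedHomogeneousComponent_eq_self hf]

lemma exists_isWeightedHomogeneous_of_mul [IsDomain R] {f g : MvPolynomial σ R} {a n : ℕ}
    (hf : IsWeightedHomogeneous w f a) (hf0 : f ≠ 0) (hg0 : g ≠ 0)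
    (hfg : IsWeightedHomogeneous w (f * g) n) : ∃ b, a + b = n ∧ IsWeightedHomogeneous w g b := by
  have hg : IsWeightedHomogeneous w g (weightedTotalDegree w g) := by
    have h := topForm_eq_self hfg
    rw [(isInitialForm_topForm w).mul, topForm_eq_self hf] at h
    simpa only [mul_left_cancel₀ hf0 h] using isWeightedHomogeneous_topForm w g
  exact ⟨_, IsWeightedHomogeneous.inj_right (mul_ne_zero hf0 hg0) (hf.mul hg) hfg, hg⟩

end TopForms

section HomogeneousSubstitution

lemma weightedHomogeneousComponent_aeval {σ ι R : Type*} [CommSemiring R] {w : σ → ℕ} {v : ι → ℕ}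
    {f : ι → MvPolynomial σ R} (hf : ∀ i, IsWeightedHomogeneous w (f i) (v i)) (n : ℕ)
    (Φ : MvPolynomial ι R) :
    weightedHomogeneousComponent w n (aeval f Φ) =
      aeval f (weightedHomogeneousComponent v n Φ) := by
  induction Φ using MvPolynomial.induction_on' with
  | monomial m c =>
    have h : IsWeightedHomogeneous w (aeval f (monomial m c)) (Finsupp.weight v m) := by
      rw [aeval_monomial, Finsupp.weight_apply]
      exact (IsWeightedHomogeneous.prod _ _ _ fun i _ => (hf i).pow _).C_mul c
    rw [weightedHomogeneousComponent_of_mem h,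
      weightedHomogeneousComponent_of_mem (isWeightedHomogeneous_monomial v m c rfl)]
    split_ifs <;> simp
  | add p q hp hq => simp only [map_add, hp, hq]

lemma aeval_pow_mul_of_isWeightedHomogeneous {ι R A : Type*} [CommSemiring R] [CommSemiring A]
    [Algebra R A] {v : ι → ℕ} {Φ : MvPolynomial ι R} {n : ℕ} (hΦ : IsWeightedHomogeneous v Φ n)
    (s : A) (x : ι → A) : aeval (fun i => s ^ v i * x i) Φ = s ^ n * aeval x Φ := by
  simp only [aeval_def, eval₂_eq, Finset.mul_sum]
  refine Finset.sum_congr rfl fun m hm => ?_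
  rw [← hΦ (mem_support_iff.1 hm), Finsupp.weight_apply, Finsupp.sum,
    ← Finset.prod_pow_eq_pow_sum, mul_left_comm, ← Finset.prod_mul_distrib]
  congr 1
  refine Finset.prod_congr rfl fun i _ => ?_
  rw [mul_pow, ← pow_mul, smul_eq_mul, mul_comm (v i)]

lemma weight_fin_two (v : Fin 2 → ℕ) (m : Fin 2 →₀ ℕ) :
    Finsupp.weight v m = m 0 * v 0 + m 1 * v 1 := by
  rw [Finsupp.weight_apply, Finsupp.sum_fintype _ _ (by simp), Fin.sum_univ_two, smul_eq_mul,
    smul_eq_mul]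

lemma isAlgebraic_of_aeval_one_eq_zero {R A : Type*} [CommRing R] [CommRing A] [Algebra R A]
    {v : Fin 2 → ℕ} (hv : v 0 ≠ 0) {Φ : MvPolynomial (Fin 2) R} {n : ℕ}
    (hΦ : IsWeightedHomogeneous v Φ n) (hΦ0 : Φ ≠ 0) {r : A} (hr : aeval ![1, r] Φ = 0) :
    IsAlgebraic R r := by
  obtain ⟨m, hm⟩ := exists_coeff_ne_zero hΦ0
  have eq_of_apply_one_eq {d : Fin 2 →₀ ℕ} (hd : d ∈ Φ.support) (h1 : m 1 = d 1) : d = m := by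
    have h := (hΦ (mem_support_iff.1 hd)).trans (hΦ hm).symm
    rw [weight_fin_two, weight_fin_two, h1, add_left_inj] at h
    ext i
    fin_cases i
    exacts [Nat.eq_of_mul_eq_mul_right (Nat.pos_of_ne_zero hv) h, h1.symm]
  refine ⟨aeval ![1, Polynomial.X] Φ, fun h => hm ?_, ?_⟩
  · rw [aeval_def, eval₂_eq'] at h
    have h := congrArg (fun p => Polynomial.coeff p (m 1)) h
    simp only [Polynomial.algebraMap_eq, Fin.prod_univ_two, Matrix.cons_val_zero, one_pow,
      Matrix.cons_val_one, one_mul, Polynomial.finsetSum_coeff, Polynomial.coeff_C_mul_X_pow,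
      Polynomial.coeff_zero] at h
    rwa [Finset.sum_eq_single m (fun d hd hdm => if_neg fun h1 => hdm (eq_of_apply_one_eq hd h1))
      (fun hm => by rw [if_pos rfl, notMem_support_iff.1 hm]), if_pos rfl] at h
  · rw [← hr, ← AlgHom.comp_apply, comp_aeval]
    congr 2
    ext i
    fin_cases i <;> simp

lemma isAlgebraic_div_pow_of_aeval_eq_zero {R K : Type*} [CommRing R] [Field K] [Algebra R K]
    {e d n : ℕ} (he : e ≠ 0) {Φ : MvPolynomial (Fin 2) R} (hΦ : IsWeightedHomogeneous ![e, d] Φ n)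
    (hΦ0 : Φ ≠ 0) {s q : K} (hs : s ≠ 0) (h : aeval ![s ^ e, q] Φ = 0) :
    IsAlgebraic R (q / s ^ d) := by
  refine isAlgebraic_of_aeval_one_eq_zero (by simpa using he) hΦ hΦ0
    ((mul_eq_zero_iff_left (pow_ne_zero n hs)).1 ?_)
  rw [← aeval_pow_mul_of_isWeightedHomogeneous hΦ, ← h]
  congr 2
  ext i
  fin_cases i
  · simp
  · simp [mul_div_cancel₀, hs]

lemma exists_isWeightedHomogeneous_aeval_eq_zero {σ ι R : Type*} [CommRing R] {w : σ → ℕ}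
    {v : ι → ℕ} {f : ι → MvPolynomial σ R} (hf : ∀ i, IsWeightedHomogeneous w (f i) (v i))
    (h : ¬ AlgebraicIndependent R f) :
    ∃ (n : ℕ) (Φ : MvPolynomial ι R), IsWeightedHomogeneous v Φ n ∧ Φ ≠ 0 ∧ aeval f Φ = 0 := by
  obtain ⟨Φ, hΦ, hΦ0⟩ : ∃ Φ, aeval f Φ = 0 ∧ Φ ≠ 0 := by
    simpa only [algebraicIndependent_iff, not_forall, exists_prop] using h
  obtain ⟨n, hn⟩ : ∃ n, weightedHomogeneousComponent v n Φ ≠ 0 := by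
    by_contra! h
    exact hΦ0 (by rw [← finsum_weightedHomogeneousComponent v Φ]; simp [h])
  exact ⟨n, _, weightedHomogeneousComponent_isWeightedHomogeneous n Φ, hn,
    by rw [← weightedHomogeneousComponent_aeval hf, hΦ, map_zero]⟩

lemma dvd_of_isIntegral_div {A : Type*} [CommRing A] [IsDomain A] [IsIntegrallyClosed A] {a b : A}
    (hb : b ≠ 0) (h : IsIntegral A (algebraMap A (FractionRing A) a / algebraMap A _ b)) :
    b ∣ a := by
  obtain ⟨c, hc⟩ := IsIntegrallyClosed.algebraMap_eq_of_integral h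
  refine ⟨c, IsFractionRing.injective A (FractionRing A) ?_⟩
  rw [map_mul, hc, mul_div_cancel₀]
  rwa [Ne, map_eq_zero_iff _ (IsFractionRing.injective A (FractionRing A))]

/-- Writing `p = s ^ e` in an algebraic closure, the homogeneous relation between `p` and `q`
becomes an equation for `q / s ^ d` over `k`. -/
lemma pow_dvd_pow_of_not_algebraicIndependent {k σ : Type*} [Field k] {w : σ → ℕ}
    {p q : MvPolynomial σ k} {e d : ℕ} (he : e ≠ 0) (hp : IsWeightedHomogeneous w p e)
    (hq : IsWeightedHomogeneous w q d) (hp0 : p ≠ 0) (hpq : ¬ AlgebraicIndependent k ![p, q]) :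
    p ^ d ∣ q ^ e := by
  obtain ⟨n, Φ, hΦ, hΦ0, hrel⟩ := exists_isWeightedHomogeneous_aeval_eq_zero (w := w)
    (v := ![e, d]) (by simp [Fin.forall_fin_two, hp, hq]) hpq
  let A := MvPolynomial σ k
  let K := AlgebraicClosure (FractionRing A)
  let toK : A →ₐ[k] K := IsScalarTower.toAlgHom k A K
  have toK_eq (f : A) : algebraMap (FractionRing A) K (algebraMap A (FractionRing A) f) = toK f :=
    (IsScalarTower.algebraMap_apply A (FractionRing A) K f).symm
  have toK_injective : Function.Injective toK := fun f g h =>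
    IsFractionRing.injective A (FractionRing A)
      ((algebraMap _ K).injective ((toK_eq f).trans (h.trans (toK_eq g).symm)))
  obtain ⟨s, hs⟩ := IsAlgClosed.exists_pow_nat_eq (toK p) (Nat.pos_of_ne_zero he)
  have hs0 : s ≠ 0 := by
    rintro rfl
    rw [zero_pow he, eq_comm, map_eq_zero_iff _ toK_injective] at hs
    exact hp0 hs
  have hrel' : aeval ![s ^ e, toK q] Φ = 0 := by
    rw [hs, ← map_zero toK, ← hrel, ← AlgHom.comp_apply, comp_aeval]
    congr 2
    ext i
    fin_cases i <;> rfl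
  have hr := (isAlgebraic_div_pow_of_aeval_eq_zero he hΦ hΦ0 hs0 hrel').isIntegral
  refine dvd_of_isIntegral_div (pow_ne_zero d hp0) ?_
  rw [← isIntegral_algebraMap_iff (algebraMap (FractionRing A) K).injective, map_div₀, toK_eq,
    toK_eq, map_pow, map_pow, ← hs, pow_right_comm, ← div_pow]
  exact (hr.pow e).tower_top

lemma exists_pow_eq_C_mul_pow {k σ : Type*} [Field k] {w : σ → ℕ} (hw : ∀ i, w i ≠ 0)
    {p q : MvPolynomial σ k} {e d : ℕ} (he : e ≠ 0) (hp : IsWeightedHomogeneous w p e)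
    (hq : IsWeightedHomogeneous w q d) (hp0 : p ≠ 0) (hq0 : q ≠ 0)
    (hpq : ¬ AlgebraicIndependent k ![p, q]) : ∃ c : k, c ≠ 0 ∧ q ^ e = C c * p ^ d := by
  obtain ⟨s, hs⟩ := pow_dvd_pow_of_not_algebraicIndependent he hp hq hp0 hpq
  have hs0 : s ≠ 0 := by rintro rfl; simp [hq0] at hs
  obtain ⟨b, hb, hsb⟩ := exists_isWeightedHomogeneous_of_mul (hp.pow d) (pow_ne_zero _ hp0) hs0
    (hs ▸ hq.pow e)
  obtain rfl : b = 0 := by simpa [mul_comm] using hb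
  rw [eq_C_of_isWeightedHomogeneous_zero hw hsb] at hs hs0
  exact ⟨_, by simpa using hs0, by rw [hs, mul_comm]⟩

end HomogeneousSubstitution

section CommensurableForms

variable {k σ : Type*} [Field k] {w : σ → ℕ} {p q θ : MvPolynomial σ k} {d e : ℕ}

lemma not_algebraicIndependent_of_isAlgebraic_adjoin {R A : Type*} [CommRing R] [CommRing A]
    [Algebra R A] {a b : A} (h : IsAlgebraic (Algebra.adjoin R {a}) b) :
    ¬ AlgebraicIndependent R ![a, b] := by
  intro hab
  have hb : Transcendental (Algebra.adjoin R (![a, b] '' {0})) b :=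
    hab.transcendental_adjoin (i := 1) (by simp)
  rw [Set.image_singleton] at hb
  exact hb h

lemma isAlgebraic_adjoin_singleton_self {R A : Type*} [CommRing R] [CommRing A]
    [Algebra R A] [Nontrivial A] (a : A) : IsAlgebraic (Algebra.adjoin R {a}) a :=
  isAlgebraic_algebraMap
    (⟨a, Algebra.self_mem_adjoin_singleton R a⟩ : Algebra.adjoin R {a})

/-- Both are powers of `p`, up to constants, after raising to suitable powers. -/
lemma dvd_of_isAlgebraic_adjoin (hw : ∀ i, w i ≠ 0) {τ : ℕ} (he : e ≠ 0) (hτ : τ ≠ 0) (hτd : τ ≤ d)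
    (hp : IsWeightedHomogeneous w p e) (hθ : IsWeightedHomogeneous w θ τ)
    (hq : IsWeightedHomogeneous w q d) (hp0 : p ≠ 0) (hθ0 : θ ≠ 0) (hq0 : q ≠ 0)
    (hθp : IsAlgebraic (Algebra.adjoin k {p}) θ) (hqp : IsAlgebraic (Algebra.adjoin k {p}) q) :
    θ ∣ q := by
  obtain ⟨c, -, hqe⟩ := exists_pow_eq_C_mul_pow hw he hp hq hp0 hq0
    (not_algebraicIndependent_of_isAlgebraic_adjoin hqp)
  obtain ⟨c', hc', hθe⟩ := exists_pow_eq_C_mul_pow hw he hp hθ hp0 hθ0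
    (not_algebraicIndependent_of_isAlgebraic_adjoin hθp)
  have hθ_dvd : θ ^ e ∣ p ^ τ := by
    rw [hθe]
    exact ((isUnit_iff_ne_zero.2 hc').map C).mul_left_dvd.2 dvd_rfl
  rw [← IsIntegrallyClosed.pow_dvd_pow_iff (mul_ne_zero he hτ)]
  calc θ ^ (e * τ) ∣ θ ^ (e * d) := pow_dvd_pow θ (Nat.mul_le_mul_left e hτd)
    _ = (θ ^ e) ^ d := pow_mul θ e d
    _ ∣ (p ^ τ) ^ d := pow_dvd_pow_of_dvd hθ_dvd d
    _ = (p ^ d) ^ τ := pow_right_comm p τ d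
    _ ∣ (q ^ e) ^ τ := pow_dvd_pow_of_dvd ⟨C c, by rw [hqe, mul_comm]⟩ τ
    _ = q ^ (e * τ) := (pow_mul q e τ).symm

/-- Take `θ` of minimal positive degree among the forms algebraic over `k[p]`. -/
lemma exists_forall_isAlgebraic_eq_C_mul_pow (hw : ∀ i, w i ≠ 0) (he : e ≠ 0)
    (hp : IsWeightedHomogeneous w p e) (hp0 : p ≠ 0) :
    ∃ (θ : MvPolynomial σ k) (τ : ℕ), τ ≠ 0 ∧ θ ≠ 0 ∧ IsWeightedHomogeneous w θ τ ∧
      IsAlgebraic (Algebra.adjoin k {p}) θ ∧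
      ∀ q d, IsWeightedHomogeneous w q d → IsAlgebraic (Algebra.adjoin k {p}) q →
        ∃ c j, q = C c * θ ^ j := by
  classical
  have hex : ∃ τ, τ ≠ 0 ∧ ∃ θ : MvPolynomial σ k, θ ≠ 0 ∧ IsWeightedHomogeneous w θ τ ∧
      IsAlgebraic (Algebra.adjoin k {p}) θ :=
    ⟨e, he, p, hp0, hp, isAlgebraic_adjoin_singleton_self p⟩
  obtain ⟨hτ, θ, hθ0, hθ, hθp⟩ := Nat.find_spec hex
  have hmin := fun m => Nat.find_min hex (m := m)
  set τ := Nat.find hex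
  refine ⟨θ, τ, hτ, hθ0, hθ, hθp, fun q d => ?_⟩
  induction d using Nat.strong_induction_on generalizing q with | _ d ih
  intro hq hqp
  rcases eq_or_ne q 0 with rfl | hq0
  · exact ⟨0, 0, by simp⟩
  rcases eq_or_ne d 0 with rfl | hd
  · exact ⟨_, 0, by rw [pow_zero, mul_one]; exact eq_C_of_isWeightedHomogeneous_zero hw hq⟩
  have hτd : τ ≤ d := not_lt.1 fun h => hmin d h ⟨hd, q, hq0, hq, hqp⟩
  obtain ⟨r, rfl⟩ := dvd_of_isAlgebraic_adjoin hw he hτ hτd hp hθ hq hp0 hθ0 hq0 hθp hqp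
  have hr0 := right_ne_zero_of_mul hq0
  obtain ⟨b, rfl, hr⟩ := exists_isWeightedHomogeneous_of_mul hθ hθ0 hr0 hq
  have hrp : IsAlgebraic (Algebra.adjoin k {p}) r :=
    IsAlgebraic.of_mul (mem_nonZeroDivisors_of_ne_zero hθ0) hθp hqp
  obtain ⟨c, j, rfl⟩ := ih b (by lia) r hr hrp
  exact ⟨c, j + 1, by ring⟩

lemma exists_root_form (hw : ∀ i, w i ≠ 0) (he : e ≠ 0) (hp : IsWeightedHomogeneous w p e)
    (hp0 : p ≠ 0) :
    ∃ (θ : MvPolynomial σ k) (τ : ℕ), τ ≠ 0 ∧ θ ≠ 0 ∧ IsWeightedHomogeneous w θ τ ∧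
      (∃ c j, p = C c * θ ^ j) ∧ ∀ q d, IsWeightedHomogeneous w q d →
        (∃ c j, q = C c * θ ^ j) ∨ Transcendental (Algebra.adjoin k {θ}) q := by
  obtain ⟨θ, τ, hτ, hθ0, hθ, hθp, h⟩ := exists_forall_isAlgebraic_eq_C_mul_pow hw he hp hp0
  refine ⟨θ, τ, hτ, hθ0, hθ, h p e hp (isAlgebraic_adjoin_singleton_self p), fun q d hq => ?_⟩
  refine or_iff_not_imp_right.2 fun hqθ => h q d hq ?_
  exact IsAlgebraic.adjoin_of_forall_isAlgebraic (s := {θ}) (by simp [hθp]) (not_not.1 hqθ)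

end CommensurableForms

section TransverseForms

lemma eq_zero_of_mul_mem_of_transcendental {R A : Type*} [CommRing R] [CommRing A] [IsDomain A]
    [Algebra R A] {Z : Subalgebra R A} {η θ g : A} (hθZ : θ ∈ Z) (hθ0 : θ ≠ 0)
    (hη : Transcendental Z η) (hg : ∃ M : ℕ, θ ^ M * g ∈ Algebra.adjoin Z {η})
    (hηg : η * g ∈ Z) : g = 0 := by
  obtain ⟨M, hM⟩ := hg
  obtain ⟨E, hE : Polynomial.aeval η E = _⟩ :=
    (Algebra.adjoin_singleton_eq_range_aeval Z η).le hM
  let z : Z := ⟨θ, hθZ⟩ ^ M * ⟨η * g, hηg⟩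
  have hXE : Polynomial.X * E - Polynomial.C z = 0 := by
    by_contra h
    refine hη ⟨_, h, ?_⟩
    rw [map_sub, map_mul, Polynomial.aeval_X, Polynomial.aeval_C, hE, sub_eq_zero]
    exact mul_left_comm η (θ ^ M) g
  have hz : θ ^ M * (η * g) = 0 := by
    have h := congrArg (fun p => algebraMap Z A (Polynomial.coeff p 0)) hXE
    simp only [Polynomial.coeff_sub, Polynomial.mul_coeff_zero, Polynomial.coeff_X_zero, zero_mul,
      Polynomial.coeff_C_zero, zero_sub, map_neg, Polynomial.coeff_zero, map_zero, neg_eq_zero] at h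
    exact h
  have hη0 : η ≠ 0 := by rintro rfl; exact hη isAlgebraic_zero
  simpa [hθ0, hη0] using hz

variable {σ R : Type*} [CommRing R] {w : σ → ℕ} {θ η f : MvPolynomial σ R} {a d τ : ℕ}

lemma weightHom_of_isWeightedHomogeneous (hf : IsWeightedHomogeneous w f d) :
    weightHom w f = Polynomial.monomial d f := by
  ext1 n
  rw [coeff_weightHom, Polynomial.coeff_monomial, weightedHomogeneousComponent_of_mem hf]
  simp only [eq_comm]

lemma dvd_weightedHomogeneousComponent (hη : IsWeightedHomogeneous w η d) (h : η ∣ f) (n : ℕ) :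
    η ∣ weightedHomogeneousComponent w n f := by
  obtain ⟨g, rfl⟩ := h
  rw [← coeff_weightHom, map_mul, weightHom_of_isWeightedHomogeneous hη,
    ← Polynomial.C_mul_X_pow_eq_monomial, mul_assoc, Polynomial.coeff_C_mul]
  exact dvd_mul_right _ _

lemma weightedHomogeneousComponent_eq_zero_of_mem_adjoin (hθ : IsWeightedHomogeneous w θ τ)
    (ha : ¬ τ ∣ a) (hf : f ∈ Algebra.adjoin R {θ}) : weightedHomogeneousComponent w a f = 0 := by
  obtain ⟨p, rfl : Polynomial.aeval θ p = f⟩ :=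
    (Algebra.adjoin_singleton_eq_range_aeval R θ).le hf
  rw [Polynomial.aeval_eq_sum_range, map_sum]
  refine Finset.sum_eq_zero fun i _ => ?_
  rw [map_smul, weightedHomogeneousComponent_of_mem (hθ.pow i),
    if_neg fun h => ha ⟨i, by rw [h, smul_eq_mul, mul_comm]⟩, smul_zero]

lemma dvd_of_mem_adjoin_of_not_dvd (hθ : IsWeightedHomogeneous w θ τ)
    (hη : IsWeightedHomogeneous w η d) (ha : ¬ τ ∣ a) (hf : IsWeightedHomogeneous w f a)
    (hf_mem : f ∈ Algebra.adjoin (Algebra.adjoin R {θ}) {η}) : η ∣ f := by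
  obtain ⟨E, rfl : Polynomial.aeval η E = f⟩ :=
    (Algebra.adjoin_singleton_eq_range_aeval _ η).le hf_mem
  rw [← weightedHomogeneousComponent_eq_self hf, ← E.X_mul_divX_add, map_add, map_add, map_mul,
    Polynomial.aeval_X, Polynomial.aeval_C, weightedHomogeneousComponent_eq_zero_of_mem_adjoin
      (f := algebraMap _ _ (E.coeff 0)) hθ ha (E.coeff 0).2, add_zero]
  exact dvd_weightedHomogeneousComponent hη (dvd_mul_right _ _) a

lemma exists_pow_mul_mem_of_forall_X {S : Subalgebra R (MvPolynomial σ R)} (hθ : θ ∈ S)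
    (hX : ∀ i, ∃ M : ℕ, θ ^ M * X i ∈ S) (f : MvPolynomial σ R) : ∃ M : ℕ, θ ^ M * f ∈ S := by
  induction f using MvPolynomial.induction_on with
  | C a => exact ⟨0, by simpa using S.algebraMap_mem a⟩
  | add f g hf hg =>
    obtain ⟨M, hM⟩ := hf
    obtain ⟨N, hN⟩ := hg
    refine ⟨M + N, ?_⟩
    rw [show θ ^ (M + N) * (f + g) = θ ^ N * (θ ^ M * f) + θ ^ M * (θ ^ N * g) by ring]
    exact add_mem (mul_mem (pow_mem hθ N) hM) (mul_mem (pow_mem hθ M) hN)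
  | mul_X f i hf =>
    obtain ⟨M, hM⟩ := hf
    obtain ⟨N, hN⟩ := hX i
    exact ⟨M + N, by rw [pow_add, mul_mul_mul_comm]; exact mul_mem hM hN⟩

lemma exists_dvd_pow_of_forall_X (hθ : IsWeightedHomogeneous w θ τ) (hτ : τ ≠ 0)
    (hX : ∀ i, ∃ M : ℕ, η ∣ θ ^ M * X i) : ∃ M : ℕ, η ∣ θ ^ M := by
  have hθ_mem : θ ∈ idealOfVars σ R := by
    rw [← pow_one (idealOfVars σ R), mem_pow_idealOfVars_iff']
    intro m hm
    obtain rfl := (Finsupp.degree_eq_zero_iff m).1 (Nat.lt_one_iff.1 hm)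
    exact hθ.coeff_eq_zero 0 (by simpa using hτ.symm)
  suffices h : ∀ f ∈ idealOfVars σ R, ∃ M : ℕ, η ∣ θ ^ M * f by
    obtain ⟨M, hM⟩ := h θ hθ_mem
    exact ⟨M + 1, by rwa [pow_succ]⟩
  intro f hf
  induction hf using Submodule.span_induction with
  | mem f hf => obtain ⟨i, rfl⟩ := hf; exact hX i
  | zero => exact ⟨0, by simp⟩
  | add f g _ _ hf hg =>
    obtain ⟨M, hM⟩ := hf
    obtain ⟨N, hN⟩ := hg
    refine ⟨M + N, ?_⟩
    rw [show θ ^ (M + N) * (f + g) = θ ^ N * (θ ^ M * f) + θ ^ M * (θ ^ N * g) by ring]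
    exact dvd_add (hM.mul_left _) (hN.mul_left _)
  | smul r f _ hf =>
    obtain ⟨M, hM⟩ := hf
    exact ⟨M, by rw [smul_eq_mul, mul_left_comm]; exact hM.mul_left _⟩

/-- Otherwise `η` divides `θ ^ M * X i` for every `i` by comparing degrees modulo `τ`, hence divides
a power of `θ`, contrary to transcendence. -/
lemma exists_dvd_weight [IsDomain R] (hτ : τ ≠ 0) (hθ0 : θ ≠ 0)
    (hθ : IsWeightedHomogeneous w θ τ) (hη : IsWeightedHomogeneous w η d)
    (hη_tr : Transcendental (Algebra.adjoin R {θ}) η)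
    (hX : ∀ i, ∃ M : ℕ, θ ^ M * X i ∈ Algebra.adjoin (Algebra.adjoin R {θ}) {η}) :
    ∃ i, τ ∣ w i := by
  by_contra! hτw
  have hX_dvd (i : σ) : ∃ M : ℕ, η ∣ θ ^ M * X i := by
    obtain ⟨M, hM⟩ := hX i
    refine ⟨M, dvd_of_mem_adjoin_of_not_dvd hθ hη (a := M * τ + w i) ?_
      ((hθ.pow M).mul (isWeightedHomogeneous_X R w i)) hM⟩
    exact fun h => hτw i ((Nat.dvd_add_right (Dvd.intro_left _ rfl)).1 h)
  obtain ⟨M, g, hg⟩ := exists_dvd_pow_of_forall_X hθ hτ hX_dvd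
  have hθZ := Algebra.self_mem_adjoin_singleton R θ
  have hg0 : g = 0 := by
    refine eq_zero_of_mul_mem_of_transcendental hθZ hθ0 hη_tr ?_ (hg ▸ pow_mem hθZ M)
    refine exists_pow_mul_mem_of_forall_X
      (S := (Algebra.adjoin (Algebra.adjoin R {θ}) {η}).restrictScalars R) ?_ hX g
    exact (Algebra.adjoin (Algebra.adjoin R {θ}) {η}).algebraMap_mem ⟨θ, hθZ⟩
  exact pow_ne_zero M hθ0 (by rw [hg, hg0, mul_zero])

end TransverseForms

section TrailingForms

variable {k σ : Type*} [Field k] {w : σ → ℕ}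

lemma transcendental_of_isWeightedHomogeneous {p : MvPolynomial σ k} {e : ℕ} (he : e ≠ 0)
    (hp : IsWeightedHomogeneous w p e) (hp0 : p ≠ 0) : Transcendental k p := by
  rintro ⟨r, hr0, hr⟩
  have h := congrArg (weightedHomogeneousComponent w (r.natDegree * e)) hr
  rw [Polynomial.aeval_eq_sum_range, map_sum, map_zero, Finset.sum_eq_single r.natDegree] at h
  · rw [map_smul, ← smul_eq_mul, weightedHomogeneousComponent_eq_self (hp.pow _)] at h
    simp [hr0, hp0] at h
  · intro i _ hi
    rw [map_smul, weightedHomogeneousComponent_of_mem (hp.pow i), if_neg, smul_zero]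
    simpa [he] using hi.symm
  · simp

variable (w) in
/-- The top form of the coefficient of lowest degree in `t`. It is the initial form for the
valuation of `k(x)(t)` which is lexicographic in the order at `t = 0` and the `w`-degree. -/
def trailingForm (F : Polynomial (MvPolynomial σ k)) : MvPolynomial σ k :=
  topForm w F.trailingCoeff

lemma isInitialForm_trailingForm : IsInitialForm (trailingForm (k := k) w) :=
  (isInitialForm_topForm w).comp IsInitialForm.trailingCoeff

lemma isWeightedHomogeneous_trailingForm (F : Polynomial (MvPolynomial σ k)) :
    IsWeightedHomogeneous w (trailingForm w F) (weightedTotalDegree w F.trailingCoeff) :=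
  isWeightedHomogeneous_topForm w _

lemma trailingForm_X_pow_mul_C (N : ℕ) (f : MvPolynomial σ k) :
    trailingForm w (Polynomial.X ^ N * Polynomial.C f) = topForm w f := by
  rw [trailingForm, Polynomial.trailingCoeff_mul]
  simp [Polynomial.trailingCoeff]

lemma trailingForm_of_coeff_zero_ne_zero {F : Polynomial (MvPolynomial σ k)}
    (hF : F.coeff 0 ≠ 0) : trailingForm w F = topForm w (F.coeff 0) := by
  rw [trailingForm, Polynomial.trailingCoeff,
    Polynomial.natTrailingDegree_eq_zero.2 (Or.inr hF)]

lemma trailingForm_mem_bot {F : Polynomial (MvPolynomial σ k)}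
    (hF : F ∈ Algebra.adjoin k {Polynomial.X}) :
    trailingForm w F ∈ (⊥ : Subalgebra k (MvPolynomial σ k)) := by
  obtain ⟨r, rfl : Polynomial.aeval (Polynomial.X : Polynomial (MvPolynomial σ k)) r = F⟩ :=
    (Algebra.adjoin_singleton_eq_range_aeval k _).le hF
  rw [Polynomial.aeval_X_left_eq_map, trailingForm, Polynomial.trailingCoeff, Polynomial.coeff_map]
  rw [algebraMap_eq, topForm_eq_self (isWeightedHomogeneous_C w _)]
  exact Subalgebra.algebraMap_mem _ _

lemma trailingForm_mem_adjoin {P F : Polynomial (MvPolynomial σ k)}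
    (hP : Transcendental k (trailingForm w P)) (hF : F ∈ Algebra.adjoin k {Polynomial.X, P}) :
    trailingForm w F ∈ Algebra.adjoin k {trailingForm w P} := by
  rw [Set.insert_eq, Algebra.adjoin_union_eq_adjoin_adjoin] at hF
  obtain ⟨E, rfl : Polynomial.aeval P E = F⟩ :=
    (Algebra.adjoin_singleton_eq_range_aeval _ P).le hF
  have h := isInitialForm_trailingForm.eval_mem_adjoin (Z := ⊥) (v := P)
    (E := E.map (algebraMap _ (Polynomial (MvPolynomial σ k))))
    (fun i => by
      rw [Polynomial.coeff_map]
      exact trailingForm_mem_bot (w := w) (E.coeff i).2)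
    (mt (Subalgebra.isAlgebraic_bot_iff (C_injective σ k)).1 hP)
  rw [Polynomial.eval_map_algebraMap] at h
  rw [← Set.empty_union {trailingForm w P}, Algebra.adjoin_union_eq_adjoin_adjoin,
    Algebra.adjoin_empty]
  exact h

end TrailingForms

section LimitCoordinates

/-- `P, Q ∈ A[t]` generate `A[t, 1/t]` as an algebra over `k[t, 1/t]`, expressed without
denominators. -/
def GeneratesAwayX (k : Type*) {A : Type*} [CommSemiring k] [CommSemiring A] [Algebra k A]
    (P Q : Polynomial A) : Prop :=
  ∀ f : A, ∃ N : ℕ,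
    Polynomial.X ^ N * Polynomial.C f ∈ Algebra.adjoin k {Polynomial.X, P, Q}

/-- `p ∈ A` is the value at `t = 0` of a polynomial `P ∈ A[t]` which is a coordinate of `A[t, 1/t]`
over `k[t, 1/t]`: the limit of a family of coordinates of `A`. -/
def IsLimitCoordinate (k : Type*) {A : Type*} [CommSemiring k] [CommSemiring A] [Algebra k A]
    (p : A) : Prop :=
  ∃ P Q : Polynomial A, GeneratesAwayX k P Q ∧ P.coeff 0 = p

lemma IsLimitCoordinate.map {k A : Type*} [CommSemiring k] [CommSemiring A] [Algebra k A] {p : A}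
    (hp : IsLimitCoordinate k p) (σ : A ≃ₐ[k] A) : IsLimitCoordinate k (σ p) := by
  obtain ⟨P, Q, hPQ, rfl⟩ := hp
  let σt : Polynomial A →ₐ[k] Polynomial A := Polynomial.mapAlgHom σ.toAlgHom
  refine ⟨σt P, σt Q, fun f => ?_, by simp [σt]⟩
  obtain ⟨N, hN⟩ := hPQ (σ.symm f)
  have h := Subalgebra.mem_map.2 ⟨_, hN, (rfl : σt _ = _)⟩
  rw [AlgHom.map_adjoin, Set.image_insert_eq, Set.image_pair] at h
  refine ⟨N, ?_⟩
  simpa [σt] using h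

lemma GeneratesAwayX.exists_aeval_eq {k A : Type*} [CommRing k] [CommRing A] [Algebra k A]
    {P Q : Polynomial A} (hPQ : GeneratesAwayX k P Q) (f : A) :
    ∃ (N : ℕ) (H : Polynomial (Algebra.adjoin k {Polynomial.X, P})),
      Polynomial.aeval Q H = Polynomial.X ^ N * Polynomial.C f := by
  obtain ⟨N, hN⟩ := hPQ f
  rw [show ({Polynomial.X, P, Q} : Set _) = {Polynomial.X, P} ∪ {Q} by
    rw [Set.insert_union, Set.singleton_union], Algebra.adjoin_union_eq_adjoin_adjoin] at hN
  exact ⟨N, (Algebra.adjoin_singleton_eq_range_aeval _ Q).le hN⟩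

lemma GeneratesAwayX.exists_pow_mul_mem {k A G : Type*} [CommRing k] [CommRing A] [IsDomain A]
    [CommRing G] [Algebra k A] [Algebra k G] {P Q : Polynomial A} (hPQ : GeneratesAwayX k P Q)
    {φ : Polynomial A → G} (hφ : IsInitialForm φ) {Z : Subalgebra k G}
    {F : Polynomial (Algebra.adjoin k {Polynomial.X, P})} (hF : 0 < F.natDegree)
    (hlow : ∀ H ∈ Polynomial.degreeLT (Algebra.adjoin k {Polynomial.X, P}) F.natDegree,
      φ (Polynomial.aeval Q H) ∈ Z)
    (hη : Transcendental Z (φ (Polynomial.aeval Q F))) (f : A) :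
    ∃ M N : ℕ, φ F.leadingCoeff ^ N * φ (Polynomial.X ^ M * Polynomial.C f) ∈
      Algebra.adjoin Z {φ (Polynomial.aeval Q F)} := by
  obtain ⟨M, H, hH⟩ := hPQ.exists_aeval_eq f
  obtain ⟨N, hN⟩ := hφ.exists_pow_mul_mem_adjoin hF hlow hη H
  rw [hH] at hN
  exact ⟨M, N, hN⟩

variable {k σ : Type*} [Field k] {w : σ → ℕ} {θ : MvPolynomial σ k}
  {P Q : Polynomial (MvPolynomial σ k)}

lemma topForm_X (i : σ) : topForm w (X i : MvPolynomial σ k) = X i :=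
  topForm_eq_self (isWeightedHomogeneous_X k w i)

/-- Take `F` of minimal degree such that the trailing form of `F(Q)` is not in `k[θ]`. -/
lemma GeneratesAwayX.exists_minimal (hPQ : GeneratesAwayX k P Q)
    (hP : ∀ F ∈ Algebra.adjoin k {Polynomial.X, P}, trailingForm w F ∈ Algebra.adjoin k {θ})
    (hX : ∃ i, X i ∉ Algebra.adjoin k {θ}) :
    ∃ F : Polynomial (Algebra.adjoin k {Polynomial.X, P}), 0 < F.natDegree ∧
      trailingForm w (Polynomial.aeval Q F) ∉ Algebra.adjoin k {θ} ∧
      ∀ H ∈ Polynomial.degreeLT (Algebra.adjoin k {Polynomial.X, P}) F.natDegree,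
        trailingForm w (Polynomial.aeval Q H) ∈ Algebra.adjoin k {θ} := by
  obtain ⟨i, hi⟩ := hX
  obtain ⟨N, F₀, hF₀⟩ := hPQ.exists_aeval_eq (X i)
  obtain ⟨F, hF, hmin⟩ := exists_minimalFor_of_wellFoundedLT
    (fun F : Polynomial (Algebra.adjoin k {Polynomial.X, P}) =>
      trailingForm w (Polynomial.aeval Q F) ∉ Algebra.adjoin k {θ}) Polynomial.natDegree
    ⟨F₀, by rwa [hF₀, trailingForm_X_pow_mul_C, topForm_X]⟩
  refine ⟨F, Nat.pos_of_ne_zero fun h => hF ?_, hF, fun H hH => ?_⟩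
  · rw [Polynomial.eq_C_of_natDegree_eq_zero h, Polynomial.aeval_C]
    exact hP _ (F.coeff 0).2
  · by_contra hH_mem
    have hH0 : H ≠ 0 := by
      rintro rfl
      exact hH_mem (by rw [map_zero, isInitialForm_trailingForm.zero]; exact zero_mem _)
    have hlt := (Polynomial.natDegree_lt_iff_degree_lt hH0).2 (Polynomial.mem_degreeLT.1 hH)
    exact hlt.not_ge (hmin hH_mem hlt.le)

lemma GeneratesAwayX.exists_trailingForm_pow_mul_X_mem (hPQ : GeneratesAwayX k P Q)
    {Z : Subalgebra k (MvPolynomial σ k)} {F : Polynomial (Algebra.adjoin k {Polynomial.X, P})}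
    (hF : 0 < F.natDegree)
    (hlow : ∀ H ∈ Polynomial.degreeLT (Algebra.adjoin k {Polynomial.X, P}) F.natDegree,
      trailingForm w (Polynomial.aeval Q H) ∈ Z)
    (hη : Transcendental Z (trailingForm w (Polynomial.aeval Q F))) (i : σ) :
    ∃ N : ℕ, trailingForm w (F.leadingCoeff : Polynomial (MvPolynomial σ k)) ^ N * X i ∈
      Algebra.adjoin Z {trailingForm w (Polynomial.aeval Q F)} := by
  obtain ⟨M, N, h⟩ := hPQ.exists_pow_mul_mem isInitialForm_trailingForm hF hlow hη (X i)
  rw [trailingForm_X_pow_mul_C, topForm_X] at h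
  exact ⟨N, h⟩

lemma GeneratesAwayX.exists_transcendental (hPQ : GeneratesAwayX k P Q)
    (hP : ∀ F ∈ Algebra.adjoin k {Polynomial.X, P}, trailingForm w F ∈ Algebra.adjoin k {θ})
    (hθ : ∀ q d, IsWeightedHomogeneous w q d →
      (∃ c j, q = C c * θ ^ j) ∨ Transcendental (Algebra.adjoin k {θ}) q)
    (hX : ∃ i, X i ∉ Algebra.adjoin k {θ}) :
    ∃ η d, IsWeightedHomogeneous w η d ∧ Transcendental (Algebra.adjoin k {θ}) η ∧
      ∀ i, ∃ M : ℕ, θ ^ M * X i ∈ Algebra.adjoin (Algebra.adjoin k {θ}) {η} := by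
  obtain ⟨F, hF_deg, hF, hlow⟩ := hPQ.exists_minimal hP hX
  have hη : Transcendental (Algebra.adjoin k {θ}) (trailingForm w (Polynomial.aeval Q F)) := by
    refine (hθ _ _ (isWeightedHomogeneous_trailingForm _)).resolve_left ?_
    rintro ⟨c, j, h⟩
    rw [h, ← algebraMap_eq, ← Algebra.smul_def] at hF
    exact hF (Subalgebra.smul_mem _ (pow_mem (Algebra.self_mem_adjoin_singleton k θ) j) c)
  have hl_mem := hP _ F.leadingCoeff.2
  obtain ⟨c, j, hcj⟩ := (hθ _ _ (isWeightedHomogeneous_trailingForm _)).resolve_right fun h =>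
    h (isAlgebraic_algebraMap (⟨_, hl_mem⟩ : Algebra.adjoin k {θ}))
  have hl0 : (F.leadingCoeff : Polynomial (MvPolynomial σ k)) ≠ 0 := by
    have hF0 : F ≠ 0 := by rintro rfl; simp at hF_deg
    simpa using hF0
  have hc : c ≠ 0 := by
    rintro rfl
    exact isInitialForm_trailingForm.ne_zero _ hl0 (by rw [hcj, C_0, zero_mul])
  refine ⟨_, _, isWeightedHomogeneous_trailingForm _, hη, fun i => ?_⟩
  obtain ⟨N, hN⟩ := hPQ.exists_trailingForm_pow_mul_X_mem hF_deg hlow hη i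
  refine ⟨j * N, ?_⟩
  rw [hcj, mul_pow, ← pow_mul, ← C_pow, mul_assoc, ← smul_eq_C_mul] at hN
  have h := Subalgebra.smul_mem _ hN (algebraMap k (Algebra.adjoin k {θ}) (c ^ N)⁻¹)
  rwa [algebraMap_smul, smul_smul, inv_mul_cancel₀ (pow_ne_zero N hc), one_smul] at h

lemma exists_X_notMem_adjoin_singleton (θ : MvPolynomial (Fin 2) k) :
    ∃ i, X i ∉ Algebra.adjoin k {θ} := by
  by_contra! h
  have h_top : Algebra.adjoin k {θ} = ⊤ := by
    rw [eq_top_iff, ← adjoin_range_X]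
    exact Algebra.adjoin_le (by rintro _ ⟨i, rfl⟩; exact h i)
  have h_surj : Function.Surjective (Polynomial.aeval (R := k) θ) := by
    rwa [← AlgHom.range_eq_top, ← Algebra.adjoin_singleton_eq_range_aeval]
  have h_le := trdeg_le_of_surjective _ h_surj
  rw [trdeg_of_isDomain, Polynomial.trdeg_of_isDomain] at h_le
  simp at h_le

lemma IsLimitCoordinate.exists_topForm_eq {w : Fin 2 → ℕ} (hw : ∀ i, w i ≠ 0)
    {p : MvPolynomial (Fin 2) k} (hp : IsLimitCoordinate k p) :
    ∃ θ τ c r, θ ≠ 0 ∧ IsWeightedHomogeneous w θ τ ∧ topForm w p = C c * θ ^ r ∧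
      ∃ i, τ ∣ w i := by
  by_cases he : weightedTotalDegree w p = 0
  · refine ⟨X 0, w 0, coeff 0 (topForm w p), 0, X_ne_zero 0, isWeightedHomogeneous_X k w 0, ?_, 0,
      dvd_rfl⟩
    rw [pow_zero, mul_one]
    exact eq_C_of_isWeightedHomogeneous_zero hw (he ▸ isWeightedHomogeneous_topForm w p)
  have hp0 : p ≠ 0 := by rintro rfl; simp [weightedTotalDegree_zero] at he
  have hp_top := isWeightedHomogeneous_topForm w p
  have hp_top0 : topForm w p ≠ 0 := (isInitialForm_topForm w).ne_zero p hp0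
  obtain ⟨θ, τ, hτ, hθ0, hθ, ⟨c, r, hcr⟩, hroot⟩ := exists_root_form hw he hp_top hp_top0
  obtain ⟨P, Q, hPQ, rfl⟩ := hp
  have hP : trailingForm w P = topForm w (P.coeff 0) := trailingForm_of_coeff_zero_ne_zero hp0
  have hP_mem : ∀ F ∈ Algebra.adjoin k {Polynomial.X, P},
      trailingForm w F ∈ Algebra.adjoin k {θ} := by
    intro F hF
    have h := trailingForm_mem_adjoin (w := w)
      (hP ▸ transcendental_of_isWeightedHomogeneous he hp_top hp_top0) hF
    refine Algebra.adjoin_le (Set.singleton_subset_iff.2 ?_) h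
    rw [hP, hcr, ← smul_eq_C_mul]
    exact Subalgebra.smul_mem _ (pow_mem (Algebra.self_mem_adjoin_singleton k θ) r) c
  obtain ⟨η, d, hη, hη_tr, hX⟩ := hPQ.exists_transcendental hP_mem hroot
    (exists_X_notMem_adjoin_singleton θ)
  exact ⟨θ, τ, c, r, hθ0, hθ, hcr, exists_dvd_weight hτ hθ0 hθ hη hη_tr hX⟩

end LimitCoordinates

section ElementaryAutomorphisms

variable {k σ : Type*} [CommRing k] [DecidableEq σ] {i : σ} {g : MvPolynomial σ k}

lemma aeval_update_eq_self (hg : i ∉ g.vars) (f : MvPolynomial σ k) :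
    aeval (R := k) (Function.update X i f) g = g := by
  conv_rhs => rw [← aeval_X_left_apply g]
  refine eval₂Hom_congr' rfl (fun j hj _ => ?_) rfl
  rw [Function.update_of_ne (by rintro rfl; exact hg hj)]

/-- The elementary automorphism which sends `X i` to `c * X i + g`, with `g` free of `X i`, and
fixes the other variables. -/
def elementaryAut (c : kˣ) (hg : i ∉ g.vars) : MvPolynomial σ k ≃ₐ[k] MvPolynomial σ k :=
  AlgEquiv.ofAlgHom (aeval (Function.update X i (C (c : k) * X i + g)))
    (aeval (Function.update X i (C (↑c⁻¹ : k) * (X i - g))))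
    (by
      refine algHom_ext fun j => ?_
      obtain rfl | hj := eq_or_ne j i
      · simp only [AlgHom.comp_apply, aeval_X, Function.update_self, map_mul, map_sub, algHom_C,
          algebraMap_eq, aeval_update_eq_self hg, add_sub_cancel_right, AlgHom.id_apply]
        rw [← mul_assoc, ← C_mul, Units.inv_mul, C_1, one_mul]
      · simp [hj])
    (by
      refine algHom_ext fun j => ?_
      obtain rfl | hj := eq_or_ne j i
      · simp only [AlgHom.comp_apply, aeval_X, Function.update_self, map_mul, map_add, algHom_C,
          algebraMap_eq, aeval_update_eq_self hg, AlgHom.id_apply]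
        rw [← mul_assoc, ← C_mul, Units.mul_inv, C_1, one_mul, sub_add_cancel]
      · simp [hj])

lemma elementaryAut_X_self (c : kˣ) (hg : i ∉ g.vars) :
    elementaryAut c hg (X i) = C (c : k) * X i + g := by
  simp [elementaryAut]

lemma elementaryAut_X_of_ne (c : kˣ) (hg : i ∉ g.vars) {j : σ} (hj : j ≠ i) :
    elementaryAut c hg (X j) = X j := by
  simp [elementaryAut, hj]

lemma weightedHomogeneousComponent_elementaryAut_symm {w : σ → ℕ} (c : kˣ) (hg : i ∉ g.vars)
    (hgw : IsWeightedHomogeneous w g (w i)) (n : ℕ) (f : MvPolynomial σ k) :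
    weightedHomogeneousComponent w n ((elementaryAut c hg).symm f) =
      (elementaryAut c hg).symm (weightedHomogeneousComponent w n f) := by
  have hX (j : σ) : IsWeightedHomogeneous w (elementaryAut c hg (X j)) (w j) := by
    obtain rfl | hj := eq_or_ne j i
    · rw [elementaryAut_X_self]
      exact ((isWeightedHomogeneous_X k w j).C_mul _).add hgw
    · rw [elementaryAut_X_of_ne c hg hj]
      exact isWeightedHomogeneous_X k w j
  have h_aeval (f : MvPolynomial σ k) :
      aeval (fun j => elementaryAut c hg (X j)) f = elementaryAut c hg f :=
    (DFunLike.congr_fun (aeval_unique (elementaryAut c hg).toAlgHom) f).symm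
  rw [AlgEquiv.eq_symm_apply, ← h_aeval, ← weightedHomogeneousComponent_aeval hX, h_aeval,
    AlgEquiv.apply_symm_apply]

lemma weightedTotalDegree_elementaryAut_symm_le {w : σ → ℕ} (c : kˣ) (hg : i ∉ g.vars)
    (hgw : IsWeightedHomogeneous w g (w i)) (f : MvPolynomial σ k) :
    weightedTotalDegree w ((elementaryAut c hg).symm f) ≤ weightedTotalDegree w f := by
  refine Finset.sup_le fun m hm => ?_
  by_contra! h_lt
  have h := weightedHomogeneousComponent_elementaryAut_symm c hg hgw (Finsupp.weight w m) f
  rw [weightedHomogeneousComponent_eq_zero _ f h_lt, map_zero] at h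
  have h_coeff := congrArg (coeff m) h
  rw [coeff_weightedHomogeneousComponent, if_pos rfl] at h_coeff
  exact mem_support_iff.1 hm h_coeff

end ElementaryAutomorphisms

section PolynomialsInAVariable

variable {k : Type*} [Field k] {f g : MvPolynomial (Fin 2) k}

/-- `f ∈ k[v]` for some variable `v` of `k[x, y]`. -/
def IsPolynomialInVariable (f : MvPolynomial (Fin 2) k) : Prop :=
  ∃ v, (∃ σ : MvPolynomial (Fin 2) k ≃ₐ[k] MvPolynomial (Fin 2) k, σ v = X 0) ∧
    f ∈ Algebra.adjoin k {v}

lemma IsPolynomialInVariable.of_map (σ : MvPolynomial (Fin 2) k ≃ₐ[k] MvPolynomial (Fin 2) k)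
    (h : IsPolynomialInVariable (σ f)) : IsPolynomialInVariable f := by
  obtain ⟨v, ⟨ρ, hρ⟩, hv⟩ := h
  refine ⟨σ.symm v, ⟨σ.trans ρ, by simp [hρ]⟩, ?_⟩
  have h := Subalgebra.mem_map.2 ⟨_, hv, (rfl : σ.symm.toAlgHom (σ f) = _)⟩
  rw [AlgHom.map_adjoin, Set.image_singleton] at h
  simpa using h

lemma degreeOf_eq_zero_iff_mem_adjoin {i j : Fin 2} (hij : i ≠ j) :
    degreeOf j f = 0 ↔ f ∈ Algebra.adjoin k {X i} := by
  rw [← Set.image_singleton, ← supported_eq_adjoin_X, mem_supported,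
    ← not_iff_not, ← Ne, ← mem_vars_iff_degreeOf_ne_zero, Set.not_subset]
  constructor
  · exact fun hj => ⟨j, hj, hij.symm⟩
  · rintro ⟨l, hl, hli⟩
    obtain rfl : l = j := by
      rw [Set.mem_singleton_iff] at hli
      omega
    exact hl

lemma IsPolynomialInVariable.of_degreeOf_eq_zero {i : Fin 2} (h : degreeOf i f = 0) :
    IsPolynomialInVariable f := by
  obtain ⟨j, hj⟩ := exists_ne i
  exact ⟨X j, ⟨renameEquiv k (Equiv.swap 0 j), by simp⟩, (degreeOf_eq_zero_iff_mem_adjoin hj).1 h⟩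

lemma IsPolynomialInVariable.of_dvd (hf : IsPolynomialInVariable f) (hf0 : f ≠ 0) (hgf : g ∣ f) :
    IsPolynomialInVariable g := by
  obtain ⟨v, ⟨σ, hσ⟩, hv⟩ := hf
  have h := Subalgebra.mem_map.2 ⟨_, hv, (rfl : σ.toAlgHom f = _)⟩
  rw [AlgHom.map_adjoin, Set.image_singleton, AlgEquiv.toAlgHom_apply, AlgEquiv.toAlgHom_apply, hσ,
    ← degreeOf_eq_zero_iff_mem_adjoin zero_ne_one] at h
  obtain ⟨c, rfl⟩ := hgf
  rw [map_mul, degreeOf_mul_eq (by simpa using left_ne_zero_of_mul hf0)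
    (by simpa using right_ne_zero_of_mul hf0)] at h
  exact .of_map σ (.of_degreeOf_eq_zero (Nat.eq_zero_of_add_eq_zero_right h))

end PolynomialsInAVariable

section SupportsOfTopForms

lemma mem_support_topForm {σ R : Type*} [CommRing R] {w : σ → ℕ} {f : MvPolynomial σ R}
    {m : σ →₀ ℕ} : m ∈ (topForm w f).support ↔
      m ∈ f.support ∧ Finsupp.weight w m = weightedTotalDegree w f := by
  simp [topForm, coeff_weightedHomogeneousComponent, and_comm]

lemma X_dvd_iff_forall_mem_support {σ R : Type*} [CommSemiring R] {i : σ}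
    {f : MvPolynomial σ R} : X i ∣ f ↔ ∀ m ∈ f.support, m i ≠ 0 := by
  rw [← Ideal.mem_span_singleton, ← Set.image_singleton, mem_ideal_span_X_image]
  simp

lemma X_dvd_of_dvd_C_mul_pow {σ k : Type*} [Field k] {i : σ} {f : MvPolynomial σ k} {c : k}
    {r : ℕ} (h0 : C c * f ^ r ≠ 0) (h : X i ∣ C c * f ^ r) : X i ∣ f := by
  have hc : c ≠ 0 := by rintro rfl; simp at h0
  rw [((hc.isUnit).map C).dvd_mul_left] at h
  exact X_prime.dvd_of_dvd_pow h

variable {w : Fin 2 → ℕ} {m : Fin 2 →₀ ℕ} {i j : Fin 2}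

lemma fin_two_ne_rev (i : Fin 2) : i ≠ i.rev := by
  revert i
  decide

lemma weight_of_ne (hij : i ≠ j) : Finsupp.weight w m = m i * w i + m j * w j := by
  rw [weight_fin_two]
  fin_cases i <;> fin_cases j <;> simp_all [add_comm]

lemma eq_single_of_ne (hij : i ≠ j) (hm : m j = 0) : m = Finsupp.single i (m i) := by
  ext l
  obtain rfl | hl := eq_or_ne l i
  · simp
  · rw [Finsupp.single_eq_of_ne hl, ← hm]
    congr 1
    omega

lemma eq_C_mul_X_add_C_mul_X_pow {R : Type*} [CommSemiring R] {f : MvPolynomial (Fin 2) R} {β : ℕ}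
    (hw : ∀ i, w i ≠ 0) (hij : i ≠ j) (hβ : β * w j = w i)
    (hf : IsWeightedHomogeneous w f (w i)) :
    f = C (coeff (.single i 1) f) * X i + C (coeff (.single j β) f) * X j ^ β := by
  have eq_single_or (m) (hm : m ∈ f.support) : m = .single i 1 ∨ m = .single j β := by
    have h := (weight_of_ne hij).symm.trans (hf (mem_support_iff.1 hm))
    have hi : m i ≤ 1 := Nat.le_of_mul_le_mul_right (by omega) (Nat.pos_of_ne_zero (hw i))
    obtain hi | hi := Nat.le_one_iff_eq_zero_or_eq_one.1 hi
    · right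
      rw [hi, zero_mul, zero_add, ← hβ] at h
      rw [eq_single_of_ne hij.symm hi, Nat.eq_of_mul_eq_mul_right (Nat.pos_of_ne_zero (hw j)) h]
    · left
      have hj : m j = 0 := by simpa [hi, hw j] using h
      rw [eq_single_of_ne hij hj, hi]
  have hne : Finsupp.single i 1 ≠ Finsupp.single j β := by
    simp [Finsupp.single_eq_single_iff, hij]
  have hsub : f.support ⊆ {.single i 1, .single j β} := fun m hm => by simpa using eq_single_or m hm
  conv_lhs => rw [f.as_sum, Finset.sum_subset hsub (by simp), Finset.sum_pair hne]
  simp [C_mul_X_eq_monomial, C_mul_X_pow_eq_monomial]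

end SupportsOfTopForms

section Descent

variable {k : Type*} [Field k] {p : MvPolynomial (Fin 2) k}

lemma IsLimitCoordinate.exists_mem_support_topForm_apply_eq_zero (hp : IsLimitCoordinate k p)
    (hp0 : p ≠ 0) {w : Fin 2 → ℕ} (hw : ∀ i, w i ≠ 0) :
    ∃ i, ∃ m ∈ (topForm w p).support, m i = 0 := by
  by_contra! h
  obtain ⟨θ, τ, c, r, hθ0, hθ, hc, i, hi⟩ := hp.exists_topForm_eq hw
  have h_top0 : topForm w p ≠ 0 := (isInitialForm_topForm w).ne_zero p hp0
  have hX (l : Fin 2) : X l ∣ θ :=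
    X_dvd_of_dvd_C_mul_pow (hc ▸ h_top0) (hc ▸ X_dvd_iff_forall_mem_support.2 (h l))
  obtain ⟨m, hm⟩ := support_nonempty.2 hθ0
  have h_weight := (weight_of_ne (w := w) (m := m) (fin_two_ne_rev i)).symm.trans
    (hθ (mem_support_iff.1 hm))
  have h_lt : w i < τ := by
    have h1 := Nat.le_mul_of_pos_left (w i)
      (Nat.pos_of_ne_zero (X_dvd_iff_forall_mem_support.1 (hX i) m hm))
    have h2 := Nat.mul_pos (Nat.pos_of_ne_zero (X_dvd_iff_forall_mem_support.1 (hX i.rev) m hm))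
      (Nat.pos_of_ne_zero (hw i.rev))
    omega
  exact h_lt.not_ge (Nat.le_of_dvd (Nat.pos_of_ne_zero (hw i)) hi)

/-- With `X i` weighted heavily enough, every monomial of the top form has the maximal exponent
at `X i`. -/
lemma IsLimitCoordinate.single_degreeOf_mem_support (hp : IsLimitCoordinate k p) {i : Fin 2}
    (hi : degreeOf i p ≠ 0) : Finsupp.single i (degreeOf i p) ∈ p.support := by
  have hp0 : p ≠ 0 := by rintro rfl; simp at hi
  have hij := fin_two_ne_rev i
  let w : Fin 2 → ℕ := Function.update 1 i (degreeOf i.rev p + 1)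
  have hw (l : Fin 2) : w l ≠ 0 := by
    obtain rfl | hl := eq_or_ne l i
    · simp [w]
    · simp [w, hl]
  have weight_eq (m : Fin 2 →₀ ℕ) :
      Finsupp.weight w m = m i * (degreeOf i.rev p + 1) + m i.rev := by
    simp [weight_of_ne hij, w, hij.symm]
  have apply_eq (m) (hm : m ∈ (topForm w p).support) : m i = degreeOf i p := by
    obtain ⟨hm, h_top⟩ := mem_support_topForm.1 hm
    obtain ⟨d, hd, hdi⟩ := Finset.exists_mem_eq_sup _ (support_nonempty.2 hp0) fun d => d i
    rw [← degreeOf_eq_sup] at hdi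
    have h_le := (le_weightedTotalDegree w hd).trans_eq h_top.symm
    rw [weight_eq, weight_eq] at h_le
    have hmj := monomial_le_degreeOf i.rev hm
    refine (monomial_le_degreeOf i hm).antisymm (Nat.le_of_lt_succ ?_)
    exact lt_of_mul_lt_mul_right (a := degreeOf i.rev p + 1) (by nlinarith) (by omega)
  obtain ⟨l, m, hm, hl⟩ := hp.exists_mem_support_topForm_apply_eq_zero hp0 hw
  have hmj : m i.rev = 0 := by
    obtain rfl | hli := eq_or_ne l i
    · exact absurd ((apply_eq m hm).symm.trans hl) hi
    · rwa [show l = i.rev by omega] at hl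
  rw [← apply_eq m hm, ← eq_single_of_ne hij hmj]
  exact (mem_support_topForm.1 hm).1

/-- Each variable gets as weight the degree in the other one. -/
def crossWeight (p : MvPolynomial (Fin 2) k) (i : Fin 2) : ℕ :=
  degreeOf i.rev p

lemma weight_crossWeight_single (i : Fin 2) :
    Finsupp.weight (crossWeight p) (.single i (degreeOf i p)) =
      degreeOf 0 p * degreeOf 1 p := by
  rw [Finsupp.weight_single, smul_eq_mul, crossWeight]
  fin_cases i
  exacts [rfl, mul_comm _ _]

lemma IsLimitCoordinate.weightedTotalDegree_crossWeight (hp : IsLimitCoordinate k p)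
    (hd : ∀ i, degreeOf i p ≠ 0) :
    weightedTotalDegree (crossWeight p) p = degreeOf 0 p * degreeOf 1 p := by
  have hp0 : p ≠ 0 := by rintro rfl; simp at hd
  obtain ⟨l, m, hm, hl⟩ :=
    hp.exists_mem_support_topForm_apply_eq_zero hp0 (w := crossWeight p) fun i => hd i.rev
  obtain ⟨hm, h_top⟩ := mem_support_topForm.1 hm
  refine le_antisymm ?_ ?_
  · rw [← h_top, weight_of_ne (fin_two_ne_rev l), hl, zero_mul, zero_add,
      ← weight_crossWeight_single l.rev, Finsupp.weight_single, smul_eq_mul]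
    exact Nat.mul_le_mul_right _ (monomial_le_degreeOf _ hm)
  · rw [← weight_crossWeight_single 0]
    exact le_weightedTotalDegree _ (hp.single_degreeOf_mem_support (hd 0))

lemma IsLimitCoordinate.single_mem_support_topForm_crossWeight (hp : IsLimitCoordinate k p)
    (hd : ∀ i, degreeOf i p ≠ 0) (i : Fin 2) :
    .single i (degreeOf i p) ∈ (topForm (crossWeight p) p).support :=
  mem_support_topForm.2 ⟨hp.single_degreeOf_mem_support (hd i), by
    rw [weight_crossWeight_single, hp.weightedTotalDegree_crossWeight hd]⟩

lemma IsLimitCoordinate.exists_topForm_crossWeight_eq (hp : IsLimitCoordinate k p)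
    (hd : ∀ i, degreeOf i p ≠ 0) :
    ∃ i j, i ≠ j ∧ ∃ (a : kˣ) (b : k) (β : ℕ), β * crossWeight p j = crossWeight p i ∧
      ∃ c r, topForm (crossWeight p) p = C c * (C (a : k) * X i + C b * X j ^ β) ^ r := by
  have hw (i : Fin 2) : crossWeight p i ≠ 0 := hd i.rev
  obtain ⟨θ, τ, c, r, -, hθ, hc, i, hi⟩ := hp.exists_topForm_eq hw
  have h_mem := hp.single_mem_support_topForm_crossWeight hd
  have hr : r ≠ 0 := by
    rintro rfl
    have h := h_mem 0
    rw [hc, pow_zero, mul_one, mem_support_iff, coeff_C, ne_eq, ite_eq_right_iff] at h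
    simp [hd, eq_comm] at h
  have exists_single (l : Fin 2) : ∃ α, .single l α ∈ θ.support ∧ α * crossWeight p l = τ := by
    have hX : ¬ X l.rev ∣ θ := fun h => by
      have h := (h.trans (dvd_pow_self θ hr)).trans (dvd_mul_left _ (C c))
      rw [← hc] at h
      exact X_dvd_iff_forall_mem_support.1 h _ (h_mem l)
        (Finsupp.single_eq_of_ne (fin_two_ne_rev l).symm)
    simp only [X_dvd_iff_forall_mem_support, not_forall, not_not] at hX
    obtain ⟨m, hm, hml⟩ := hX
    rw [eq_single_of_ne (fin_two_ne_rev l) hml] at hm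
    refine ⟨m l, hm, ?_⟩
    rw [← hθ (mem_support_iff.1 hm), Finsupp.weight_single, smul_eq_mul]
  obtain ⟨α, hα, hατ⟩ := exists_single i
  obtain ⟨β, -, hβτ⟩ := exists_single i.rev
  obtain rfl : τ = crossWeight p i := Nat.dvd_antisymm hi ⟨α, by rw [← hατ, mul_comm]⟩
  obtain rfl : α = 1 :=
    Nat.eq_of_mul_eq_mul_right (Nat.pos_of_ne_zero (hw i)) (by rw [hατ, one_mul])
  refine ⟨i, i.rev, fin_two_ne_rev i, .mk0 _ (mem_support_iff.1 hα),
    coeff (.single i.rev β) θ, β, hβτ, c, r, ?_⟩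
  rw [hc, Units.val_mk0, ← eq_C_mul_X_add_C_mul_X_pow hw (fin_two_ne_rev i) hβτ hθ]

lemma degreeOf_le_of_weightedTotalDegree_crossWeight_le {f : MvPolynomial (Fin 2) k}
    (hd : ∀ i, degreeOf i p ≠ 0)
    (hf : weightedTotalDegree (crossWeight p) f ≤ degreeOf 0 p * degreeOf 1 p) (i : Fin 2) :
    degreeOf i f ≤ degreeOf i p := by
  refine degreeOf_le_iff.2 fun m hm => ?_
  have h := (le_weightedTotalDegree (crossWeight p) hm).trans hf
  rw [← weight_crossWeight_single i, Finsupp.weight_single, weight_of_ne (fin_two_ne_rev i)] at h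
  exact Nat.le_of_mul_le_mul_right ((Nat.le_add_right _ _).trans h)
    (Nat.pos_of_ne_zero (hd i.rev))

lemma degreeOf_lt_of_topForm_crossWeight_eq {f : MvPolynomial (Fin 2) k} {i j : Fin 2}
    (hij : i ≠ j) (hd : ∀ i, degreeOf i p ≠ 0)
    (hf : weightedTotalDegree (crossWeight p) f ≤ degreeOf 0 p * degreeOf 1 p)
    {c : k} {r : ℕ} (h_top : weightedHomogeneousComponent (crossWeight p)
      (degreeOf 0 p * degreeOf 1 p) f = C c * X i ^ r) :
    degreeOf j f < degreeOf j p := by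
  refine (degreeOf_lt_iff (Nat.pos_of_ne_zero (hd j))).2 fun m hm => ?_
  refine lt_of_le_of_ne ((monomial_le_degreeOf j hm).trans
    (degreeOf_le_of_weightedTotalDegree_crossWeight_le hd hf j)) fun hmj => ?_
  have h := (le_weightedTotalDegree (crossWeight p) hm).trans hf
  have hm_weight : Finsupp.weight (crossWeight p) m = degreeOf 0 p * degreeOf 1 p := by
    refine h.antisymm ?_
    rw [← weight_crossWeight_single j, Finsupp.weight_single, weight_of_ne hij.symm, hmj]
    exact Nat.le_add_right _ _
  have h_coeff := congrArg (coeff m) h_top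
  rw [coeff_weightedHomogeneousComponent, if_pos hm_weight, coeff_C_mul, coeff_X_pow,
    if_neg, mul_zero] at h_coeff
  · exact mem_support_iff.1 hm h_coeff
  · rintro rfl
    rw [Finsupp.single_eq_of_ne hij.symm] at hmj
    exact hd j hmj.symm

/-- The elementary automorphism carrying the base of the top form to a variable lowers the
degree. -/
lemma IsLimitCoordinate.exists_algEquiv_degreeOf_lt (hp : IsLimitCoordinate k p)
    (hd : ∀ i, degreeOf i p ≠ 0) :
    ∃ σ : MvPolynomial (Fin 2) k ≃ₐ[k] MvPolynomial (Fin 2) k,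
      (∀ i, degreeOf i (σ p) ≤ degreeOf i p) ∧ ∃ i, degreeOf i (σ p) < degreeOf i p := by
  obtain ⟨i, j, hij, a, b, β, hβ, c, r, h_top⟩ := hp.exists_topForm_crossWeight_eq hd
  have hg : i ∉ (C b * X j ^ β : MvPolynomial (Fin 2) k).vars := fun hi => by
    obtain h | h := Finset.mem_union.1 (vars_mul _ _ hi)
    · simp at h
    · simpa [hij] using vars_pow _ _ h
  have hgw : IsWeightedHomogeneous (crossWeight p) (C b * X j ^ β : MvPolynomial (Fin 2) k)
      (crossWeight p i) := by
    rw [← hβ]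
    exact ((isWeightedHomogeneous_X k _ j).pow β).C_mul b
  have h_le : weightedTotalDegree (crossWeight p) ((elementaryAut a hg).symm p) ≤
      degreeOf 0 p * degreeOf 1 p :=
    (weightedTotalDegree_elementaryAut_symm_le a hg hgw p).trans_eq
      (hp.weightedTotalDegree_crossWeight hd)
  refine ⟨(elementaryAut a hg).symm,
    degreeOf_le_of_weightedTotalDegree_crossWeight_le hd h_le, j,
    degreeOf_lt_of_topForm_crossWeight_eq (c := c) (r := r) hij hd h_le ?_⟩
  rw [weightedHomogeneousComponent_elementaryAut_symm a hg hgw,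
    ← hp.weightedTotalDegree_crossWeight hd, ← topForm, h_top,
    ← elementaryAut_X_self a hg, map_mul, map_pow, AlgEquiv.symm_apply_apply]
  exact congrArg (· * X i ^ r) (AlgEquiv.commutes _ c)

theorem IsLimitCoordinate.isPolynomialInVariable (hp : IsLimitCoordinate k p) :
    IsPolynomialInVariable p := by
  induction hN : ∑ i, degreeOf i p using Nat.strong_induction_on generalizing p with
  | _ N ih =>
    by_cases hd : ∀ i, degreeOf i p ≠ 0
    · obtain ⟨σ, h_le, i, h_lt⟩ := hp.exists_algEquiv_degreeOf_lt hd
      have h_sum_lt : ∑ i, degreeOf i (σ p) < N :=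
        hN ▸ Finset.sum_lt_sum (fun i _ => h_le i) ⟨i, Finset.mem_univ i, h_lt⟩
      exact .of_map σ (ih _ h_sum_lt (hp.map σ) rfl)
    · push Not at hd
      obtain ⟨i, hi⟩ := hd
      exact .of_degreeOf_eq_zero hi

end Descent

section PowerSaturation

variable {k R : Type*} [CommSemiring k] [CommSemiring R] [Algebra k R]

/-- The subalgebra `R ∩ S[1/t]` of `R`, written without denominators: the elements that a power
of `t ∈ S` multiplies into `S`. -/
def powerSaturation (S : Subalgebra k R) {t : R} (ht : t ∈ S) : Subalgebra k R where
  carrier := {r | ∃ N, t ^ N * r ∈ S}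
  mul_mem' := by
    rintro r s ⟨N, hr⟩ ⟨M, hs⟩
    exact ⟨N + M, by rw [pow_add, mul_mul_mul_comm]; exact mul_mem hr hs⟩
  add_mem' := by
    rintro r s ⟨N, hr⟩ ⟨M, hs⟩
    refine ⟨M + N, ?_⟩
    rw [mul_add, pow_add, mul_assoc, mul_right_comm, mul_comm (_ * s)]
    exact add_mem (mul_mem (pow_mem ht M) hr) (mul_mem (pow_mem ht N) hs)
  algebraMap_mem' c := ⟨0, by simp⟩

lemma le_powerSaturation (S : Subalgebra k R) {t : R} (ht : t ∈ S) : S ≤ powerSaturation S ht :=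
  fun r hr => ⟨0, by rwa [pow_zero, one_mul]⟩

end PowerSaturation

section AutomorphismsOfASubalgebra

variable {k B R : Type*} [CommSemiring k] [Semiring B] [Semiring R] [Algebra k B] [Algebra k R]
  {ι : B →ₐ[k] R}

lemma exists_algEquiv_comp_eq (hι : Function.Injective ι) {φ : R ≃ₐ[k] R}
    (hφ : Subalgebra.map φ.toAlgHom ι.range = ι.range) :
    ∃ ψ : B ≃ₐ[k] B, ι.comp ψ.toAlgHom = φ.toAlgHom.comp ι := by
  let e := AlgEquiv.ofInjective ι hι
  refine ⟨e.trans ((φ.subalgebraMap ι.range).trans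
    ((Subalgebra.equivOfEq _ _ hφ).trans e.symm)), AlgHom.ext fun b => ?_⟩
  exact congrArg Subtype.val (e.apply_symm_apply _)

lemma exists_mulEquiv_of_comp_eq {G : Subgroup (R ≃ₐ[k] R)} {H : Subgroup (B ≃ₐ[k] B)}
    (hι : Function.Injective ι)
    (restrict : ∀ φ ∈ G, ∃ ψ ∈ H, ι.comp ψ.toAlgHom = φ.toAlgHom.comp ι)
    (extend : ∀ ψ ∈ H, ∃ φ ∈ G, ι.comp ψ.toAlgHom = φ.toAlgHom.comp ι)
    (faithful : ∀ φ ∈ G, φ.toAlgHom.comp ι = ι → φ = 1) :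
    ∃ E : G ≃* H, ∀ φ : G, ι.comp (E φ).1.toAlgHom = φ.1.toAlgHom.comp ι := by
  choose f hfH hf using fun φ : G => restrict φ.1 φ.2
  have hf' (φ : G) (b : B) : ι (f φ b) = φ.1 (ι b) := DFunLike.congr_fun (hf φ) b
  let F : G →* H := MonoidHom.mk' (fun φ => ⟨f φ, hfH φ⟩) fun φ φ' =>
    Subtype.ext <| AlgEquiv.ext fun b => hι <| by simp [hf']
  have hF_inj : Function.Injective F := by
    refine (injective_iff_map_eq_one F).2 fun φ hφ =>
      Subtype.ext (faithful φ φ.2 (AlgHom.ext fun b => ?_))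
    have hfφ : f φ = 1 := congrArg Subtype.val hφ
    simpa [hfφ] using (hf' φ b).symm
  have hF_surj : Function.Surjective F := by
    rintro ⟨ψ, hψ⟩
    obtain ⟨φ, hφ, hφψ⟩ := extend ψ hψ
    exact ⟨⟨φ, hφ⟩, Subtype.ext <| AlgEquiv.ext fun b => hι <|
      (hf' ⟨φ, hφ⟩ b).trans (DFunLike.congr_fun hφψ b).symm⟩
  exact ⟨MulEquiv.ofBijective F ⟨hF_inj, hF_surj⟩, hf⟩

end AutomorphismsOfASubalgebra

section RestrictionToTZero

variable {k : Type*} [Field k]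

/-- The restriction `P ↦ P(0, x, y)` of polynomials in `t, x, y` to `t = 0`. -/
def evalTZero : MvPolynomial (Fin 3) k →ₐ[k] MvPolynomial (Fin 2) k :=
  aeval ![0, X 0, X 1]

lemma coeff_zero_finSuccEquiv (P : MvPolynomial (Fin 3) k) :
    (finSuccEquiv k 2 P).coeff 0 = evalTZero P := by
  have h : ((Polynomial.aeval (0 : MvPolynomial (Fin 2) k)).restrictScalars k).comp
      (finSuccEquiv k 2).toAlgHom = evalTZero := by
    ext i : 1
    refine Fin.cases ?_ (fun j => ?_) i
    · simp [evalTZero, finSuccEquiv_X_zero]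
    · simp only [AlgHom.comp_apply, AlgEquiv.toAlgHom_apply, finSuccEquiv_X_succ]
      fin_cases j <;> simp [evalTZero]
  rw [← h, Polynomial.coeff_zero_eq_aeval_zero]
  rfl

lemma X_zero_dvd_of_evalTZero_eq_zero {P : MvPolynomial (Fin 3) k} (hP : evalTZero P = 0) :
    X 0 ∣ P := by
  rw [← coeff_zero_finSuccEquiv, ← Polynomial.X_dvd_iff, ← finSuccEquiv_X_zero] at hP
  exact (map_dvd_iff _).1 hP

end RestrictionToTZero

section ModificationRing

variable {k : Type*} [Field k] {n : ℕ} {h : MvPolynomial (Fin 3) k}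

lemma iotaModif_X_zero : iotaModif k n h (X 0) = tModif k n h := by
  simp [iotaModif, tModif]

lemma map_hEmb {T : Type*} [CommRing T] [Algebra k T] (F : MvPolynomial (Fin 4) k →ₐ[k] T)
    (a : MvPolynomial (Fin 3) k) :
    F (hEmb k a) = aeval ![F (X 0), F (X 2), F (X 3)] a := by
  have h_comp : F.comp (aeval ![X 0, X 2, X 3]) = aeval ![F (X 0), F (X 2), F (X 3)] := by
    ext i : 1
    fin_cases i <;> simp
  exact DFunLike.congr_fun h_comp a

lemma mk_hEmb (a : MvPolynomial (Fin 3) k) :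
    Ideal.Quotient.mk (Ideal.span {X 0 ^ n * X 1 - hEmb k h}) (hEmb k a) = iotaModif k n h a :=
  map_hEmb (Ideal.Quotient.mkₐ k _) a

lemma tModif_pow_mul_mk_X_one : tModif k n h ^ n *
    Ideal.Quotient.mk (Ideal.span {X 0 ^ n * X 1 - hEmb k h}) (X 1) = iotaModif k n h h := by
  rw [← mk_hEmb, tModif, ← map_pow, ← map_mul, Ideal.Quotient.mk_eq_mk_iff_sub_mem]
  exact Ideal.mem_span_singleton_self _

lemma exists_comp_iotaModif_eq {T : Type*} [CommRing T] [Algebra k T]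
    {g : MvPolynomial (Fin 3) k →ₐ[k] T} (hg : g (X 0) ^ n ∣ g h) :
    ∃ G : ModifRing k n h →ₐ[k] T, G.comp (iotaModif k n h) = g := by
  obtain ⟨v, hv⟩ := hg
  let F : MvPolynomial (Fin 4) k →ₐ[k] T := aeval ![g (X 0), v, g (X 1), g (X 2)]
  have hF (a) : F (hEmb k a) = g a := by
    rw [map_hEmb]
    congr 1
    ext i : 1
    fin_cases i <;> simp [F]
  have hF_rel : Ideal.span {X 0 ^ n * X 1 - hEmb k h} ≤ RingHom.ker F := by
    rw [Ideal.span_singleton_le_iff_mem, RingHom.mem_ker, map_sub, hF, hv]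
    simp [F]
  refine ⟨Ideal.Quotient.liftₐ _ F hF_rel, AlgHom.ext fun a => ?_⟩
  rw [AlgHom.comp_apply, ← mk_hEmb]
  exact hF a

lemma iotaModif_injective : Function.Injective (iotaModif k n h) := by
  let g := IsScalarTower.toAlgHom k (MvPolynomial (Fin 3) k)
    (FractionRing (MvPolynomial (Fin 3) k))
  have hg : Function.Injective g := IsFractionRing.injective _ _
  have hX : g (X 0) ^ n ≠ 0 := pow_ne_zero n ((map_ne_zero_iff g hg).2 (X_ne_zero 0))
  obtain ⟨G, hG⟩ := exists_comp_iotaModif_eq (Dvd.intro _ (mul_div_cancel₀ (g h) hX))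
  rw [← hG, AlgHom.coe_comp] at hg
  exact hg.of_comp

lemma isLeftRegular_tModif (hn : n ≠ 0) (h0 : evalTZero h ≠ 0) :
    IsLeftRegular (tModif k n h) := by
  have hX : ¬ X 0 ∣ X 0 ^ n * X 1 - hEmb k h := by
    let F : MvPolynomial (Fin 4) k →ₐ[k] MvPolynomial (Fin 2) k := aeval ![0, 0, X 0, X 1]
    have hF : F (hEmb k h) = evalTZero h := by
      rw [map_hEmb]
      simp only [F, aeval_X]
      rfl
    rintro ⟨b, hb⟩
    have hb' := congrArg F hb
    rw [map_sub, hF] at hb'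
    simp [F, hn, h0] at hb'
  refine isLeftRegular_iff_right_eq_zero_of_mul.2 fun r hr => ?_
  obtain ⟨s, rfl⟩ := Ideal.Quotient.mk_surjective r
  rw [tModif, ← map_mul, Ideal.Quotient.eq_zero_iff_dvd] at hr
  rw [Ideal.Quotient.eq_zero_iff_dvd]
  obtain ⟨c, hc⟩ := hr
  obtain ⟨b, rfl⟩ := (X_dvd_mul_iff.1 (Dvd.intro s hc)).resolve_left hX
  exact ⟨b, mul_left_cancel₀ (X_ne_zero 0) (by rw [hc, mul_left_comm])⟩

lemma exists_tModif_pow_mul_eq (r : ModifRing k n h) :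
    ∃ N a, tModif k n h ^ N * r = iotaModif k n h a := by
  obtain ⟨s, rfl⟩ := Ideal.Quotient.mkₐ_surjective k _ r
  have ht : tModif k n h ∈ (iotaModif k n h).range := ⟨X 0, iotaModif_X_zero⟩
  let S := (powerSaturation _ ht).comap (Ideal.Quotient.mkₐ k _)
  have hS : Set.range X ⊆ (S : Set (MvPolynomial (Fin 4) k)) := by
    rintro _ ⟨i, rfl⟩
    fin_cases i
    · exact le_powerSaturation _ ht ht
    · exact ⟨n, h, tModif_pow_mul_mk_X_one.symm⟩
    · exact le_powerSaturation _ ht ⟨X 1, by simp [iotaModif]⟩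
    · exact le_powerSaturation _ ht ⟨X 2, by simp [iotaModif]⟩
  have hs : s ∈ S := Algebra.adjoin_le hS (by rw [adjoin_range_X]; exact Algebra.mem_top)
  obtain ⟨N, a, ha⟩ := hs
  exact ⟨N, a, ha.symm⟩

lemma evalTZero_dvd_of_tModif_dvd {P : MvPolynomial (Fin 3) k}
    (hP : tModif k n h ∣ iotaModif k n h P) : evalTZero h ∣ evalTZero P := by
  let g := (Ideal.Quotient.mkₐ k (Ideal.span {evalTZero h})).comp evalTZero
  have hgh : g h = 0 := Ideal.Quotient.mk_singleton_self _
  have hg0 : g (X 0) = 0 := by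
    rw [AlgHom.comp_apply, evalTZero, aeval_X]
    exact map_zero _
  obtain ⟨G, hG⟩ := exists_comp_iotaModif_eq (n := n) (hgh ▸ dvd_zero (g (X 0) ^ n))
  have hgP : g (X 0) ∣ g P := by
    rw [← hG, AlgHom.comp_apply, AlgHom.comp_apply, iotaModif_X_zero]
    exact map_dvd G hP
  rw [hg0, zero_dvd_iff] at hgP
  exact (Ideal.Quotient.eq_zero_iff_dvd _ _).1 hgP

lemma tModif_pow_dvd_iotaModif_iff {a : MvPolynomial (Fin 3) k} :
    tModif k n h ^ n ∣ iotaModif k n h a ↔ a ∈ Ideal.span {X 0 ^ n, h} := by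
  refine ⟨fun ha => ?_, fun ha => ?_⟩
  · let g := Ideal.Quotient.mkₐ k (Ideal.span {X 0 ^ n, h})
    have hgh : g h = 0 := Ideal.Quotient.eq_zero_iff_mem.2 (Ideal.subset_span (by simp))
    have hg0 : g (X 0) ^ n = 0 := by
      rw [← map_pow]
      exact Ideal.Quotient.eq_zero_iff_mem.2 (Ideal.subset_span (by simp))
    obtain ⟨G, hG⟩ := exists_comp_iotaModif_eq (n := n) (hgh ▸ dvd_zero (g (X 0) ^ n))
    have hga : g (X 0) ^ n ∣ g a := by
      rw [← hG, AlgHom.comp_apply, AlgHom.comp_apply, iotaModif_X_zero, ← map_pow]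
      exact map_dvd G ha
    rw [hg0, zero_dvd_iff] at hga
    exact Ideal.Quotient.eq_zero_iff_mem.1 hga
  · obtain ⟨c, d, rfl⟩ := Ideal.mem_span_pair.1 ha
    rw [map_add, map_mul, map_mul, map_pow, iotaModif_X_zero, ← tModif_pow_mul_mk_X_one]
    exact dvd_add (dvd_mul_left _ _) (dvd_mul_of_dvd_right (dvd_mul_right _ _) _)

end ModificationRing

section AutomorphismsOfTheModification

variable {k : Type*} [Field k] {n : ℕ} {h P Q : MvPolynomial (Fin 3) k} {a b : ℕ}
  {φ : ModifRing k n h ≃ₐ[k] ModifRing k n h}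

lemma exists_tModif_pow_mul_eq_reduced (ht : IsLeftRegular (tModif k n h)) (r : ModifRing k n h) :
    ∃ N P, tModif k n h ^ N * r = iotaModif k n h P ∧ (N = 0 ∨ evalTZero P ≠ 0) := by
  obtain ⟨N, P, hP⟩ := exists_tModif_pow_mul_eq r
  induction N generalizing P with
  | zero => exact ⟨0, P, hP, .inl rfl⟩
  | succ N ih =>
    by_cases hP0 : evalTZero P = 0
    · obtain ⟨P', rfl⟩ := X_zero_dvd_of_evalTZero_eq_zero hP0
      rw [pow_succ', mul_assoc, map_mul, iotaModif_X_zero] at hP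
      exact ih P' (ht hP)
    · exact ⟨N + 1, P, hP, .inr hP0⟩

lemma exists_X_zero_pow_mul_mem_adjoin (hφ : φ (tModif k n h) = tModif k n h) {i j : Fin 2}
    (hij : i ≠ j) (hP : tModif k n h ^ a * φ (iotaModif k n h (X i.succ)) = iotaModif k n h P)
    (hQ : tModif k n h ^ b * φ (iotaModif k n h (X j.succ)) = iotaModif k n h Q)
    (f : MvPolynomial (Fin 3) k) : ∃ N, X 0 ^ N * f ∈ Algebra.adjoin k {X 0, P, Q} := by
  set W := Algebra.adjoin k {X 0, P, Q}
  have hW (w) (hw : w ∈ ({X 0, P, Q} : Set (MvPolynomial (Fin 3) k))) :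
      iotaModif k n h w ∈ W.map (iotaModif k n h) :=
    ⟨w, Algebra.subset_adjoin hw, rfl⟩
  have ht : tModif k n h ∈ W.map (iotaModif k n h) := by
    rw [← iotaModif_X_zero]
    exact hW (X 0) (by simp)
  let S := (powerSaturation _ ht).comap (φ.toAlgHom.comp (iotaModif k n h))
  have hS : Set.range X ⊆ (S : Set (MvPolynomial (Fin 3) k)) := by
    rintro _ ⟨l, rfl⟩
    obtain rfl | rfl | rfl : l = 0 ∨ l = i.succ ∨ l = j.succ := by
      simp only [Fin.ext_iff, Fin.val_succ, Fin.val_zero]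
      omega
    · exact ⟨0, by simpa [iotaModif_X_zero, hφ] using ht⟩
    · exact ⟨a, hP ▸ hW P (by simp)⟩
    · exact ⟨b, hQ ▸ hW Q (by simp)⟩
  obtain ⟨N, g, hg⟩ := exists_tModif_pow_mul_eq (φ.symm (iotaModif k n h f))
  have hgS : g ∈ S := Algebra.adjoin_le hS (by rw [adjoin_range_X]; exact Algebra.mem_top)
  obtain ⟨M, w, hw, hwg⟩ := hgS
  refine ⟨M + N, ?_⟩
  suffices w = X 0 ^ (M + N) * f from this ▸ hw
  apply iotaModif_injective (n := n) (h := h)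
  calc iotaModif k n h w = tModif k n h ^ M * φ (iotaModif k n h g) := hwg
    _ = tModif k n h ^ M * (tModif k n h ^ N * iotaModif k n h f) := by simp [← hg, hφ]
    _ = iotaModif k n h (X 0 ^ (M + N) * f) := by
      rw [map_mul, map_pow, iotaModif_X_zero, pow_add, mul_assoc]

lemma isLimitCoordinate_evalTZero (hφ : φ (tModif k n h) = tModif k n h) {i : Fin 2}
    (hP : tModif k n h ^ a * φ (iotaModif k n h (X i.succ)) = iotaModif k n h P) :
    IsLimitCoordinate k (evalTZero P) := by
  obtain ⟨b, Q, hQ⟩ := exists_tModif_pow_mul_eq (φ (iotaModif k n h (X i.rev.succ)))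
  refine ⟨finSuccEquiv k 2 P, finSuccEquiv k 2 Q, fun f => ?_, coeff_zero_finSuccEquiv P⟩
  obtain ⟨N, hN⟩ := exists_X_zero_pow_mul_mem_adjoin hφ (fin_two_ne_rev i) hP hQ
    ((finSuccEquiv k 2).symm (Polynomial.C f))
  refine ⟨N, ?_⟩
  have h_map := Subalgebra.mem_map.2 ⟨_, hN, (rfl : (finSuccEquiv k 2).toAlgHom _ = _)⟩
  simpa [AlgHom.map_adjoin, Set.image_insert_eq, finSuccEquiv_X_zero] using h_map

lemma map_range_iotaModif_le (ht : IsLeftRegular (tModif k n h))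
    (hh : ¬ IsPolynomialInVariable (evalTZero h)) (hφ : φ (tModif k n h) = tModif k n h) :
    (iotaModif k n h).range.map φ.toAlgHom ≤ (iotaModif k n h).range := by
  have apply_X_succ_mem (i : Fin 2) : φ (iotaModif k n h (X i.succ)) ∈ (iotaModif k n h).range := by
    obtain ⟨N, P, hP, rfl | hP0⟩ := exists_tModif_pow_mul_eq_reduced ht
      (φ (iotaModif k n h (X i.succ)))
    · exact ⟨P, by simpa using hP.symm⟩
    obtain _ | N := N
    · exact ⟨P, by simpa using hP.symm⟩
    have hP_var := (isLimitCoordinate_evalTZero hφ hP).isPolynomialInVariable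
    rw [pow_succ', mul_assoc] at hP
    exact (hh (hP_var.of_dvd hP0 (evalTZero_dvd_of_tModif_dvd (Dvd.intro _ hP)))).elim
  rw [← AlgHom.range_comp, ← Algebra.map_top, ← adjoin_range_X, AlgHom.map_adjoin]
  refine Algebra.adjoin_le ?_
  rintro _ ⟨_, ⟨l, rfl⟩, rfl⟩
  cases l using Fin.cases with
  | zero => exact ⟨X 0, by simp [iotaModif_X_zero, hφ]⟩
  | succ i => exact apply_X_succ_mem i

lemma map_range_iotaModif (ht : IsLeftRegular (tModif k n h))
    (hh : ¬ IsPolynomialInVariable (evalTZero h)) (hφ : φ (tModif k n h) = tModif k n h) :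
    (iotaModif k n h).range.map φ.toAlgHom = (iotaModif k n h).range := by
  refine (map_range_iotaModif_le ht hh hφ).antisymm fun r hr => ?_
  have hφ_symm : φ.symm (tModif k n h) = tModif k n h := φ.symm_apply_eq.2 hφ.symm
  exact ⟨φ.symm r, map_range_iotaModif_le ht hh hφ_symm ⟨r, hr, rfl⟩, φ.apply_symm_apply r⟩

lemma mem_autPolyTI_of_comp_eq (hφ : φ (tModif k n h) = tModif k n h)
    {ψ : MvPolynomial (Fin 3) k ≃ₐ[k] MvPolynomial (Fin 3) k}
    (hψ : (iotaModif k n h).comp ψ.toAlgHom = φ.toAlgHom.comp (iotaModif k n h)) :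
    ψ ∈ autPolyTI k n h := by
  have hψ' (f) : iotaModif k n h (ψ f) = φ (iotaModif k n h f) := DFunLike.congr_fun hψ f
  have mem_iff (f) : ψ f ∈ Ideal.span {X 0 ^ n, h} ↔ f ∈ Ideal.span {X 0 ^ n, h} := by
    rw [← tModif_pow_dvd_iotaModif_iff, ← tModif_pow_dvd_iotaModif_iff, hψ',
      ← map_dvd_iff φ (b := iotaModif k n h f), map_pow, hφ]
  refine ⟨iotaModif_injective (n := n) (h := h) ?_, ?_⟩
  · rw [hψ', iotaModif_X_zero, hφ]
  · ext f
    rw [Ideal.mem_map_of_equiv]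
    refine ⟨?_, fun hf => ⟨ψ.symm f, ?_, ψ.apply_symm_apply f⟩⟩
    · rintro ⟨g, hg, rfl⟩
      exact (mem_iff g).2 hg
    · rwa [← mem_iff, ψ.apply_symm_apply]

lemma algHom_ext_of_comp_iotaModif {T : Type*} [CommRing T] [Algebra k T]
    {F G : ModifRing k n h →ₐ[k] T} (hF : IsLeftRegular (F (tModif k n h)))
    (hFG : F.comp (iotaModif k n h) = G.comp (iotaModif k n h)) : F = G := by
  have hFG' (f) : F (iotaModif k n h f) = G (iotaModif k n h f) := DFunLike.congr_fun hFG f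
  have ht : G (tModif k n h) = F (tModif k n h) := by rw [← iotaModif_X_zero, hFG']
  refine AlgHom.ext fun r => ?_
  obtain ⟨N, f, hf⟩ := exists_tModif_pow_mul_eq r
  refine hF.pow N ?_
  have hFGf := hFG' f
  rw [← hf, map_mul, map_mul, map_pow, map_pow, ht] at hFGf
  exact hFGf

lemma exists_comp_iotaModif_eq_of_mem_autPolyTI
    {ψ : MvPolynomial (Fin 3) k ≃ₐ[k] MvPolynomial (Fin 3) k} (hψ : ψ ∈ autPolyTI k n h) :
    ∃ Φ : ModifRing k n h →ₐ[k] ModifRing k n h,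
      Φ.comp (iotaModif k n h) = (iotaModif k n h).comp ψ.toAlgHom := by
  refine exists_comp_iotaModif_eq ?_
  change iotaModif k n h (ψ (X 0)) ^ n ∣ iotaModif k n h (ψ h)
  rw [hψ.1, iotaModif_X_zero, tModif_pow_dvd_iotaModif_iff, ← hψ.2]
  exact Ideal.mem_map_of_mem ψ (Ideal.subset_span (by simp))

lemma exists_mem_autModifT_of_mem_autPolyTI (ht : IsLeftRegular (tModif k n h))
    {ψ : MvPolynomial (Fin 3) k ≃ₐ[k] MvPolynomial (Fin 3) k} (hψ : ψ ∈ autPolyTI k n h) :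
    ∃ φ ∈ autModifT k n h,
      (iotaModif k n h).comp ψ.toAlgHom = φ.toAlgHom.comp (iotaModif k n h) := by
  obtain ⟨F, hF⟩ := exists_comp_iotaModif_eq_of_mem_autPolyTI hψ
  obtain ⟨G, hG⟩ := exists_comp_iotaModif_eq_of_mem_autPolyTI (inv_mem hψ)
  have hF' (f) : F (iotaModif k n h f) = iotaModif k n h (ψ f) := DFunLike.congr_fun hF f
  have hG' (f) : G (iotaModif k n h f) = iotaModif k n h (ψ.symm f) := DFunLike.congr_fun hG f
  have hFt : F (tModif k n h) = tModif k n h := by rw [← iotaModif_X_zero, hF', hψ.1]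
  have hGt : G (tModif k n h) = tModif k n h := by
    rw [← iotaModif_X_zero, hG', ψ.symm_apply_eq.2 hψ.1.symm]
  have hFG : F.comp G = AlgHom.id k _ :=
    algHom_ext_of_comp_iotaModif (by simpa [hFt, hGt] using ht)
      (AlgHom.ext fun f => by simp [hF', hG'])
  have hGF : G.comp F = AlgHom.id k _ :=
    algHom_ext_of_comp_iotaModif (by simpa [hFt, hGt] using ht)
      (AlgHom.ext fun f => by simp [hF', hG'])
  exact ⟨AlgEquiv.ofAlgHom F G hFG hGF, hFt, hF.symm⟩

end AutomorphismsOfTheModification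

/-- **Lemma 4.1(4) & Corollary 4.2 (Blanc–van Santen).** Let `n ≥ 1` and `h ∈ k[t,x,y]` be
such that `h(0,x,y)` lies in `k[w]` for no variable `w` of `k[x,y]`. Then every `k[t]`-algebra
automorphism of `R = k[t,u,x,y]/(tⁿu − h)` preserves `ι(k[t,x,y])`, and
`φ ↦ ι⁻¹ ∘ φ ∘ ι` is a group isomorphism from `Aut_{k[t]}(R)` onto the group of
`k[t]`-automorphisms of `k[t,x,y]` preserving the ideal `I = (tⁿ, h)`. -/
theorem aut_modification_lifting (k : Type*) [Field k] (n : ℕ) (hn : 1 ≤ n)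
    (h : MvPolynomial (Fin 3) k)
    (hh : ∀ w : MvPolynomial (Fin 2) k,
      (∃ σ : MvPolynomial (Fin 2) k ≃ₐ[k] MvPolynomial (Fin 2) k, σ w = X 0) →
      (aeval ![(0 : MvPolynomial (Fin 2) k), X 0, X 1] h) ∉ Algebra.adjoin k {w}) :
    (∀ φ : ModifRing k n h ≃ₐ[k] ModifRing k n h, φ (tModif k n h) = tModif k n h →
        Subalgebra.map φ.toAlgHom (iotaModif k n h).range = (iotaModif k n h).range) ∧
    (∃ E : autModifT k n h ≃* autPolyTI k n h,
        ∀ φ : autModifT k n h,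
          (iotaModif k n h).comp (E φ).1.toAlgHom = φ.1.toAlgHom.comp (iotaModif k n h)) := by
  have h_var : ¬ IsPolynomialInVariable (evalTZero h) := fun ⟨w, hw, hwh⟩ => hh w hw hwh
  have h0 : evalTZero h ≠ 0 := fun h0 => h_var ⟨X 0, ⟨.refl, rfl⟩, h0 ▸ zero_mem _⟩
  have ht : IsLeftRegular (tModif k n h) := isLeftRegular_tModif (Nat.one_le_iff_ne_zero.1 hn) h0
  refine ⟨fun φ hφ => map_range_iotaModif ht h_var hφ,
    exists_mulEquiv_of_comp_eq iotaModif_injective (fun φ hφ => ?restrict)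
      (fun ψ hψ => exists_mem_autModifT_of_mem_autPolyTI ht hψ) (fun φ hφ hφι => ?faithful)⟩
  case restrict =>
    obtain ⟨ψ, hψ⟩ := exists_algEquiv_comp_eq iotaModif_injective (map_range_iotaModif ht h_var hφ)
    exact ⟨ψ, mem_autPolyTI_of_comp_eq hφ hψ, hψ⟩
  case faithful =>
    have hφ_id : φ.toAlgHom = AlgHom.id k _ :=
      algHom_ext_of_comp_iotaModif (Eq.symm hφ ▸ ht : IsLeftRegular (φ (tModif k n h))) hφι
    exact AlgEquiv.ext fun r => DFunLike.congr_fun hφ_id r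
end
end

section
/- Let k be a field, n ≥ 1 an integer, and h ∈ k[t,x,y] a polynomial such that h(0,x,y) ∈ k[x,y] does not belong to the subalgebra k[w] for any variable w of the k-algebra k[x,y]. Let R = k[t,u,x,y]/(tⁿ·u − h(t,x,y)), let ι : k[t,x,y] → R be the natural k-algebra homomorphism, and let I ⊂ k[t,x,y] be the ideal generated by tⁿ and h. Then for every f ∈ k[t,x,y], one has ι(f) ∈ tⁿ·R if and only if f ∈ I; equivalently, tⁿ·R ∩ ι(k[t,x,y]) = ι(I). -/
open MvPolynomial

noncomputable section

variable (k : Type*) [Field k]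

/-!
Modulo `tⁿ` the relation `tⁿu = h` becomes `h = 0`, so `R / tⁿR = k[t,u,x,y] / (tⁿ, h)`, and the
question is whether an element of `k[t,x,y]` in the ideal generated by `tⁿ` and `h` in
`k[t,u,x,y]` is already in the ideal they generate in `k[t,x,y]`. It is, because `u ↦ 0`
retracts `k[t,u,x,y]` onto `k[t,x,y]`.
-/

theorem ideal_comap_map_eq_of_leftInverse {A B F G : Type*} [Semiring A] [Semiring B]
    [FunLike F A B] [RingHomClass F A B] [FunLike G B A] [RingHomClass G B A] {i : F} {r : G}
    (hri : Function.LeftInverse r i) (I : Ideal A) : (I.map i).comap i = I := by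
  refine le_antisymm (fun a ha => ?_) Ideal.le_comap_map
  have mem_comap_retraction : i a ∈ I.comap r := Ideal.map_le_comap_of_inverse i r I hri ha
  rwa [Ideal.mem_comap, hri a] at mem_comap_retraction

theorem rename_mem_map_rename_iff {σ τ R : Type*} [CommSemiring R] {e : σ → τ}
    (he : Function.Injective e) {I : Ideal (MvPolynomial σ R)} {p : MvPolynomial σ R} :
    rename e p ∈ I.map (rename e : MvPolynomial σ R →ₐ[R] MvPolynomial τ R) ↔ p ∈ I := by
  rw [← Ideal.mem_comap, ideal_comap_map_eq_of_leftInverse (killCompl_rename_app he)]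

theorem mk_mem_span_singleton_mk_iff {A : Type*} [CommRing A] (a b u c : A) :
    Ideal.Quotient.mk (Ideal.span {a * u - b}) c ∈
        Ideal.span {Ideal.Quotient.mk (Ideal.span {a * u - b}) a} ↔
      c ∈ Ideal.span {a, b} := by
  have sup_eq : Ideal.span {a} ⊔ Ideal.span {a * u - b} = Ideal.span {a, b} := by
    rw [← Ideal.span_insert, ← Ideal.span_pair_neg, neg_sub, Ideal.span_pair_sub_left_mul]
  have map_eq : (Ideal.span {a}).map (Ideal.Quotient.mk (Ideal.span {a * u - b})) =
      Ideal.span {Ideal.Quotient.mk (Ideal.span {a * u - b}) a} := by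
    rw [Ideal.map_span, Set.image_singleton]
  rw [← map_eq, Ideal.mem_quotient_iff_mem_sup, sup_eq]

theorem hEmb_eq_rename (f : MvPolynomial (Fin 3) k) : hEmb k f = rename ![0, 2, 3] f := by
  have hom_eq : (aeval ![X 0, X 2, X 3] : MvPolynomial (Fin 3) k →ₐ[k] MvPolynomial (Fin 4) k) =
      rename ![0, 2, 3] := by
    ext i : 1
    fin_cases i <;> simp
  exact DFunLike.congr_fun hom_eq f

theorem iotaModif_apply (n : ℕ) (h f : MvPolynomial (Fin 3) k) :
    iotaModif k n h f = Ideal.Quotient.mk (Ideal.span {X 0 ^ n * X 1 - hEmb k h}) (hEmb k f) := by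
  have hom_eq : iotaModif k n h =
      (Ideal.Quotient.mkₐ k (Ideal.span {X 0 ^ n * X 1 - hEmb k h})).comp
        (aeval ![X 0, X 2, X 3]) := by
    ext i : 1
    fin_cases i <;> simp [iotaModif]
  exact DFunLike.congr_fun hom_eq f

theorem hEmb_mem_span_pair_iff (a b f : MvPolynomial (Fin 3) k) :
    hEmb k f ∈ Ideal.span {hEmb k a, hEmb k b} ↔ f ∈ Ideal.span {a, b} := by
  have injective_indices : Function.Injective (![0, 2, 3] : Fin 3 → Fin 4) := by decide
  rw [← rename_mem_map_rename_iff injective_indices, Ideal.map_span, Set.image_pair]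
  simp only [hEmb_eq_rename]

theorem tn_R_inter_polynomials_general (n : ℕ) (h f : MvPolynomial (Fin 3) k) :
    iotaModif k n h f ∈ Ideal.span {tModif k n h ^ n} ↔ f ∈ Ideal.span {X 0 ^ n, h} := by
  have hEmb_t_pow : hEmb k (X 0 ^ n) = X 0 ^ n := by simp [hEmb]
  rw [iotaModif_apply, tModif, ← map_pow, mk_mem_span_singleton_mk_iff, ← hEmb_t_pow,
    hEmb_mem_span_pair_iff]

/-- **Lemma 4.1(3) (Blanc–van Santen).** Let `n ≥ 1` and `h ∈ k[t,x,y]` be such that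
`h(0,x,y)` lies in `k[w]` for no variable `w` of `k[x,y]`. Then for every `f ∈ k[t,x,y]`,
`ι(f) ∈ tⁿ·R` if and only if `f` belongs to the ideal `I = (tⁿ, h)`;
equivalently `tⁿR ∩ ι(k[t,x,y]) = ι(I)`. -/
theorem tn_R_inter_polynomials (k : Type*) [Field k] (n : ℕ) (hn : 1 ≤ n)
    (h : MvPolynomial (Fin 3) k)
    (hh : ∀ w : MvPolynomial (Fin 2) k,
      (∃ σ : MvPolynomial (Fin 2) k ≃ₐ[k] MvPolynomial (Fin 2) k, σ w = X 0) →
      (aeval ![(0 : MvPolynomial (Fin 2) k), X 0, X 1] h) ∉ Algebra.adjoin k {w}) :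
    ∀ f : MvPolynomial (Fin 3) k,
      iotaModif k n h f ∈ Ideal.span {tModif k n h ^ n} ↔
        f ∈ Ideal.span {(X 0 : MvPolynomial (Fin 3) k) ^ n, h} :=
  tn_R_inter_polynomials_general k n h
end
end

section
/- Let R be an integral domain, let S = R[x₁,…,xₙ] be the polynomial ring in n ≥ 1 variables over R, and let v ∈ S. Then the following are equivalent: (1) v is a variable of the R-algebra S, i.e., there exists an R-algebra automorphism f of S with f(v) = x₁; (2) the R[t]-algebra S[t]/(v − t) is isomorphic to a polynomial ring in n − 1 variables over R[t]. -/
open MvPolynomial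

noncomputable section

/-!
The pair `(S[t]/(v - t), t)` is isomorphic to `(S, v)`, and, splitting off the first variable, the
pair `(R[t][x₂, …, xₙ], t)` is isomorphic to `(R[x₁, …, xₙ], x₁)`. Composing with these two
isomorphisms turns an isomorphism `(S, v) ≅ (R[x₁, …, xₙ], x₁)` into an isomorphism
`(S[t]/(v - t), t) ≅ (R[t][x₂, …, xₙ], t)`, and conversely.
-/

section QuotientByCSubX

variable {S : Type*} [CommRing S]

/-- The isomorphism `S[t]/(v - t) ≃ S` of `S`-algebras evaluating polynomials at `t = v`. Mathlib's
`Polynomial.quotientSpanXSubCAlgEquiv` is the same map for the generator `t - v`. -/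
def quotientSpanCSubXAlgEquiv (v : S) :
    (Polynomial S ⧸ Ideal.span {Polynomial.C v - Polynomial.X}) ≃ₐ[S] S :=
  (Ideal.quotientEquivAlgOfEq S
    (by rw [← Ideal.span_singleton_neg, neg_sub] :
      Ideal.span {Polynomial.C v - Polynomial.X} =
        Ideal.span {Polynomial.X - Polynomial.C v})).trans
    (Polynomial.quotientSpanXSubCAlgEquiv v)

theorem quotientSpanCSubXAlgEquiv_mk (v : S) (p : Polynomial S) :
    quotientSpanCSubXAlgEquiv v (Ideal.Quotient.mk _ p) = p.eval v := by
  simp [quotientSpanCSubXAlgEquiv]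

end QuotientByCSubX

section SplitOffVariable

variable (R : Type*) [CommSemiring R] {σ τ : Type*}

/-- The isomorphism `R[σ] ≃ R[t][τ]` of `R`-algebras that splits off one variable `t`, namely the
one corresponding to `none` under `ε : σ ≃ Option τ`. -/
def splitVariableAlgEquiv (ε : σ ≃ Option τ) :
    MvPolynomial σ R ≃ₐ[R] MvPolynomial τ (Polynomial R) :=
  (renameEquiv R ε).trans (optionEquivRight R τ)

theorem splitVariableAlgEquiv_X_symm_none (ε : σ ≃ Option τ) :
    splitVariableAlgEquiv R ε (X (ε.symm none)) = C Polynomial.X := by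
  simp [splitVariableAlgEquiv]

end SplitOffVariable

theorem exists_algEquiv_apply_eq_congr {R A A' B B' : Type*} [CommSemiring R]
    [Semiring A] [Semiring A'] [Semiring B] [Semiring B']
    [Algebra R A] [Algebra R A'] [Algebra R B] [Algebra R B']
    (α : A ≃ₐ[R] A') (β : B ≃ₐ[R] B') (a : A) (b : B) :
    (∃ f : A ≃ₐ[R] B, f a = b) ↔ ∃ g : A' ≃ₐ[R] B', g (α a) = β b :=
  (α.equivCongr β).exists_congr fun f => by simp

theorem variable_iff_quotient_polynomial_ring_general
    {R S σ τ : Type*} [CommRing R] [CommRing S] [Algebra R S] (ε : σ ≃ Option τ) (v : S) :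
    (∃ f : S ≃ₐ[R] MvPolynomial σ R, f v = X (ε.symm none)) ↔
    (∃ e : (Polynomial S ⧸ Ideal.span {Polynomial.C v - Polynomial.X}) ≃ₐ[R]
            MvPolynomial τ (Polynomial R),
        e (Ideal.Quotient.mk (Ideal.span {Polynomial.C v - Polynomial.X}) Polynomial.X) =
          C Polynomial.X) := by
  let α := (quotientSpanCSubXAlgEquiv v).restrictScalars R
  have hα : α.symm v = Ideal.Quotient.mk _ Polynomial.X := by
    rw [AlgEquiv.symm_apply_eq]
    exact ((quotientSpanCSubXAlgEquiv_mk v Polynomial.X).trans Polynomial.eval_X).symm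
  rw [← hα, ← splitVariableAlgEquiv_X_symm_none R ε]
  exact exists_algEquiv_apply_eq_congr α.symm (splitVariableAlgEquiv R ε) v (X (ε.symm none))

/-- **Lemma 3.3 (Blanc–van Santen).** Let `R` be an integral domain, `S = R[x₁,…,xₙ]` and
`v ∈ S`. Then `v` is a variable of the `R`-algebra `S` (some `R`-algebra automorphism sends
`v` to `x₁`) if and only if the `R[t]`-algebra `S[t]/(v − t)` is isomorphic to a polynomial
ring in `n − 1` variables over `R[t]` (an `R`-algebra isomorphism mapping the class of `t`
to `t`). -/
theorem variable_iff_quotient_polynomial_ring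
    (R : Type*) [CommRing R] [IsDomain R] (n : ℕ) (hn : 0 < n)
    (v : MvPolynomial (Fin n) R) :
    (∃ f : MvPolynomial (Fin n) R ≃ₐ[R] MvPolynomial (Fin n) R, f v = X ⟨0, hn⟩) ↔
    (∃ e : (Polynomial (MvPolynomial (Fin n) R) ⧸
              Ideal.span {Polynomial.C v - Polynomial.X}) ≃ₐ[R]
            MvPolynomial (Fin (n - 1)) (Polynomial R),
        e (Ideal.Quotient.mk (Ideal.span {Polynomial.C v - Polynomial.X}) Polynomial.X) =
          MvPolynomial.C Polynomial.X) := by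
  obtain ⟨m, rfl⟩ := Nat.exists_eq_add_one.mpr hn
  exact variable_iff_quotient_polynomial_ring_general (finSuccEquiv m) v
end
end

section
/- Let k be a field, p ∈ k[t] an irreducible polynomial, and k_p = k[t]/(p) the residue field. Let u, v ∈ k[t][x,y] be such that the k(t)-subalgebra of k(t)[x,y] generated by u and v equals k(t)[x,y]. Then the Jacobian determinant ν = (∂u/∂x)(∂v/∂y) − (∂u/∂y)(∂v/∂x) is a nonzero element of k[t], and the classes u₀, v₀ ∈ k_p[x,y] of u, v (obtained by reducing coefficients modulo p) satisfy: (1) if p divides ν, then u₀ and v₀ are algebraically dependent over k_p; (2) if p does not divide ν, then the k_p-subalgebra of k_p[x,y] generated by u₀ and v₀ equals k_p[x,y]; in particular both u₀ and v₀ are variables of the k_p-algebra k_p[x,y]. -/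
open MvPolynomial

noncomputable section

/-!
By the chain rule, a generating family of a polynomial ring has invertible Jacobian determinant, so
over the fraction field `ν` is a nonzero constant. Suppose that the reductions modulo `p` are
algebraically independent. Then `A[u, v]` is saturated with respect to `p`: if `p g = F(u, v)`, then
`F` reduces to a relation, so `p` divides `F` and `g` already lies in `A[u, v]`. Clearing
denominators in an expression of a variable in terms of `u, v` and cancelling powers of `p` shows
that the reductions generate, so that `ν` is nonzero modulo `p`. Conversely, if `p` does not divide
`ν`, the reductions are algebraically independent by the Jacobian criterion, whatever the
characteristic: after an affine change of coordinates they give an endomorphism that is the identity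
modulo the square of a maximal ideal, which is injective by Krull's intersection theorem.
-/

section IdentityModuloSquare

variable {S : Type*} [CommRing S] {m : Ideal S} {θ : S →+* S}

lemma map_sub_self_mem_pow_succ (hθ : ∀ s, θ s - s ∈ m ^ 2) (n : ℕ) {s : S} (hs : s ∈ m ^ n) :
    θ s - s ∈ m ^ (n + 1) := by
  induction n generalizing s with
  | zero => exact Ideal.pow_le_pow_right one_le_two (hθ s)
  | succ n ih =>
    rw [pow_succ'] at hs
    induction hs using Submodule.mul_induction_on' with
    | mem_mul_mem f hf g hg =>
      have hθf : θ f ∈ m := by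
        simpa using add_mem (Ideal.pow_le_self two_ne_zero (hθ f)) hf
      have hsplit : θ (f * g) - f * g = θ f * (θ g - g) + (θ f - f) * g := by
        rw [map_mul]; ring
      rw [hsplit]
      refine add_mem ?_ ?_
      · simpa only [pow_succ' m (n + 1)] using Ideal.mul_mem_mul hθf (ih hg)
      · simpa only [← pow_add, add_comm 2 n] using Ideal.mul_mem_mul (hθ f) hg
    | add f _ g _ hf hg => simpa only [map_add, add_sub_add_comm] using add_mem hf hg

lemma injective_of_map_sub_self_mem_sq (hm : ⨅ n : ℕ, m ^ n = ⊥) (hθ : ∀ s, θ s - s ∈ m ^ 2) :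
    Function.Injective θ := by
  refine (injective_iff_map_eq_zero θ).2 fun s hs => ?_
  have hmem (n : ℕ) : s ∈ m ^ n := by
    induction n with
    | zero => simp
    | succ n ih => simpa [hs] using map_sub_self_mem_pow_succ hθ n ih
  simpa [hm] using Submodule.mem_iInf (m ^ ·) |>.2 hmem

end IdentityModuloSquare

section JacobianMatrix

variable {R σ κ ι : Type*} [CommRing R]

/-- The Jacobian matrix `(∂wᵢ/∂xⱼ)` of a family of polynomials, with rows indexed by the
polynomials and columns by the variables. -/
def jacobianMatrix (w : ι → MvPolynomial σ R) : Matrix ι σ (MvPolynomial σ R) :=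
  Matrix.of fun i j => pderiv j (w i)

lemma jacobianMatrix_X [DecidableEq σ] :
    jacobianMatrix (X : σ → MvPolynomial σ R) = 1 := by
  ext1 i j
  simp [jacobianMatrix, pderiv_X, Pi.single_apply, Matrix.one_apply]

lemma jacobianMatrix_map {S : Type*} [CommRing S] (f : R →+* S) (w : ι → MvPolynomial σ R) :
    jacobianMatrix (map f ∘ w) = (jacobianMatrix w).map (map f) := by
  ext1 i j
  simp [jacobianMatrix, pderiv_map]

lemma derivation_aeval {A M : Type*} [CommRing A] [Algebra R A] [AddCommGroup M] [Module A M]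
    [Module R M] [Fintype κ] (D : Derivation R A M) (w : κ → A) (F : MvPolynomial κ R) :
    D (aeval w F) = ∑ k, aeval w (pderiv k F) • D (w k) := by
  classical
  induction F using MvPolynomial.induction_on with
  | C r => simp
  | add f g hf hg => simp only [map_add, hf, hg, add_smul, Finset.sum_add_distrib]
  | mul_X f j hf =>
    simp [hf, pderiv_X, add_smul, mul_smul, Finset.sum_add_distrib, Finset.smul_sum,
      Pi.single_apply, apply_ite, ite_smul]

lemma jacobianMatrix_aeval [Fintype κ] (w : κ → MvPolynomial σ R) (F : ι → MvPolynomial κ R) :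
    jacobianMatrix (aeval w ∘ F) = (jacobianMatrix F).map (aeval w) * jacobianMatrix w := by
  ext1 i j
  simp only [jacobianMatrix, Matrix.mul_apply, Matrix.of_apply, Matrix.map_apply,
    Function.comp_apply, derivation_aeval, smul_eq_mul]

lemma surjective_aeval_of_adjoin_range_eq_top {A : Type*} [CommRing A] [Algebra R A] {w : ι → A}
    (hw : Algebra.adjoin R (Set.range w) = ⊤) :
    Function.Surjective (aeval w : MvPolynomial ι R →ₐ[R] A) := by
  rwa [← AlgHom.range_eq_top, aeval_range]

variable [Fintype σ] [DecidableEq σ]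

lemma det_jacobianMatrix_map {S : Type*} [CommRing S] (f : R →+* S)
    (w : σ → MvPolynomial σ R) :
    (jacobianMatrix (map f ∘ w)).det = map f (jacobianMatrix w).det := by
  rw [jacobianMatrix_map, RingHom.map_det, RingHom.mapMatrix_apply]

lemma isUnit_det_jacobianMatrix {w : σ → MvPolynomial σ R}
    (hw : Algebra.adjoin R (Set.range w) = ⊤) : IsUnit (jacobianMatrix w).det := by
  choose F hF using fun i => surjective_aeval_of_adjoin_range_eq_top hw (X i)
  refine Matrix.isUnit_det_of_left_inverse (B := (jacobianMatrix F).map (aeval w)) ?_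
  rw [← jacobianMatrix_aeval, ← jacobianMatrix_X]
  exact congrArg jacobianMatrix (funext hF)

lemma exists_det_jacobianMatrix_eq_C {K : Type*} [CommRing K] [IsReduced K] [Nontrivial K]
    {f : R →+* K} (hf : Function.Injective f) {w : σ → MvPolynomial σ R}
    (hw : Algebra.adjoin K (Set.range (map f ∘ w)) = ⊤) :
    ∃ c : R, c ≠ 0 ∧ (jacobianMatrix w).det = C c := by
  have hunit := isUnit_det_jacobianMatrix hw
  rw [det_jacobianMatrix_map] at hunit
  obtain ⟨r, hr, hJr⟩ := isUnit_iff_eq_C_of_isReduced.1 hunit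
  have hcoeff : f (coeff 0 (jacobianMatrix w).det) = r := by
    simpa [coeff_map] using congrArg (coeff 0) hJr
  refine ⟨coeff 0 (jacobianMatrix w).det, fun h => hr.ne_zero ?_, map_injective f hf ?_⟩
  · rw [← hcoeff, h, map_zero]
  · rw [map_C, hcoeff, hJr]

end JacobianMatrix

section JacobianCriterion

variable {R σ : Type*} [CommRing R]

lemma sub_first_order_taylor_mem_ker_eval_sq [Fintype σ] (a : σ → R) (f : MvPolynomial σ R) :
    f - (C (eval a f) + ∑ j, C (eval a (pderiv j f)) * (X j - C (a j))) ∈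
      RingHom.ker (eval a) ^ 2 := by
  classical
  induction f using MvPolynomial.induction_on with
  | C r => simp
  | add f g hf hg =>
    convert add_mem hf hg using 1
    simp only [map_add, add_mul, Finset.sum_add_distrib]
    ring
  | mul_X f i hf =>
    set L := ∑ j, C (eval a (pderiv j f)) * (X j - C (a j)) with hL
    have hX (j : σ) : X j - C (a j) ∈ RingHom.ker (eval a) := by simp [RingHom.mem_ker]
    have hLX : L * (X i - C (a i)) ∈ RingHom.ker (eval a) ^ 2 := by
      rw [pow_two]
      exact Ideal.mul_mem_mul (sum_mem fun j _ => Ideal.mul_mem_left _ _ (hX j)) (hX i)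
    have hlinear : ∑ j, C (eval a (pderiv j (f * X i))) * (X j - C (a j)) =
        L * C (a i) + C (eval a f) * (X i - C (a i)) := by
      have hpderiv (j : σ) : eval a (pderiv j (f * X i)) =
          eval a (pderiv j f) * a i + eval a f * Pi.single (M := fun _ => R) i 1 j := by
        by_cases hij : i = j <;> simp [pderiv_X, hij, mul_comm, add_comm]
      simp only [hpderiv, C_add, C_mul, add_mul, Finset.sum_add_distrib]
      congr 1
      · rw [hL, Finset.sum_mul]
        exact Finset.sum_congr rfl fun j _ => mul_right_comm _ _ _
      · simp [Pi.single_apply, apply_ite]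
    convert add_mem (Ideal.mul_mem_right (X i) _ hf) hLX using 1
    rw [hlinear, map_mul, eval_X, C_mul]
    ring

lemma algHom_apply_sub_self_mem {I : Ideal (MvPolynomial σ R)}
    {θ : MvPolynomial σ R →ₐ[R] MvPolynomial σ R} (hθ : ∀ i, θ (X i) - X i ∈ I)
    (f : MvPolynomial σ R) : θ f - f ∈ I := by
  have hcomp : (Ideal.Quotient.mkₐ R I).comp θ = Ideal.Quotient.mkₐ R I :=
    algHom_ext fun i => Ideal.Quotient.eq.2 (hθ i)
  exact Ideal.Quotient.eq.1 (DFunLike.congr_fun hcomp f)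

variable [Fintype σ]

/-- The affine substitution `x ↦ a + N (x - b)`, as an endomorphism of the polynomial ring; it
carries the ideal of the point `a` into that of `b`. -/
def affineSubst (N : Matrix σ σ R) (a b : σ → R) : MvPolynomial σ R →ₐ[R] MvPolynomial σ R :=
  aeval fun j => C (a j) + ∑ k, C (N j k) * (X k - C (b k))

lemma affineSubst_C (N : Matrix σ σ R) (a b : σ → R) (r : R) : affineSubst N a b (C r) = C r :=
  algHom_C _ r

lemma eval_affineSubst (N : Matrix σ σ R) (a b : σ → R) (f : MvPolynomial σ R) :
    eval b (affineSubst N a b f) = eval a f := by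
  induction f using MvPolynomial.induction_on with
  | C r => simp [affineSubst]
  | add f g hf hg => simp only [map_add, hf, hg]
  | mul_X f i hf => rw [map_mul, map_mul, hf]; simp [affineSubst]

lemma affineSubst_mem_ker_eval_sq (N : Matrix σ σ R) (a b : σ → R) {f : MvPolynomial σ R}
    (hf : f ∈ RingHom.ker (eval a) ^ 2) :
    affineSubst N a b f ∈ RingHom.ker (eval b) ^ 2 := by
  have hmap : (RingHom.ker (eval a)).map (affineSubst N a b) ≤ RingHom.ker (eval b) :=
    Ideal.map_le_iff_le_comap.2 fun g hg => by
      simpa [RingHom.mem_ker, eval_affineSubst] using hg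
  have := Ideal.mem_map_of_mem (affineSubst N a b) hf
  rw [Ideal.map_pow] at this
  exact Ideal.pow_right_mono hmap 2 this

lemma sum_C_mul_affineSubst_X [DecidableEq σ] {M N : Matrix σ σ R} (hMN : M * N = 1)
    (a b : σ → R) (i : σ) :
    ∑ j, C (M i j) * (affineSubst N a b (X j) - C (a j)) = X i - C (b i) := by
  calc ∑ j, C (M i j) * (affineSubst N a b (X j) - C (a j))
      = ∑ j, ∑ k, C (M i j * N j k) * (X k - C (b k)) := by
        simp [affineSubst, Finset.mul_sum, mul_assoc]
    _ = ∑ k, C ((M * N) i k) * (X k - C (b k)) := by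
        rw [Finset.sum_comm]
        simp only [Matrix.mul_apply, map_sum, Finset.sum_mul]
    _ = X i - C (b i) := by simp [hMN, Matrix.one_apply, apply_ite]

/-- With `M` the Jacobian matrix at `a`, substituting `x ↦ a + M⁻¹ (x - w(a))` into `w` gives an
endomorphism that fixes the point `w(a)` and is the identity to first order there. -/
theorem algebraicIndependent_of_isUnit_det_jacobianMatrix [IsDomain R] [IsNoetherianRing R]
    [DecidableEq σ] {w : σ → MvPolynomial σ R} (a : σ → R)
    (hw : IsUnit (eval a (jacobianMatrix w).det)) : AlgebraicIndependent R w := by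
  rw [RingHom.map_det] at hw
  let M := (eval a).mapMatrix (jacobianMatrix w)
  let b i := eval a (w i)
  let θ := (affineSubst M⁻¹ a b).comp (aeval w)
  have hθX (i : σ) : θ (X i) - X i ∈ RingHom.ker (eval b) ^ 2 := by
    have htaylor :=
      affineSubst_mem_ker_eval_sq M⁻¹ a b (sub_first_order_taylor_mem_ker_eval_sq a (w i))
    have hlinear : ∑ j, C (eval a (pderiv j (w i))) * (affineSubst M⁻¹ a b (X j) - C (a j)) =
        X i - C (b i) := sum_C_mul_affineSubst_X (Matrix.mul_nonsing_inv M hw) a b i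
    simp only [map_sub, map_add, map_sum, map_mul, affineSubst_C, hlinear] at htaylor
    simpa [θ, b] using htaylor
  have hbot : ⨅ n : ℕ, RingHom.ker (eval b) ^ n = ⊥ :=
    Ideal.iInf_pow_eq_bot_of_isDomain _ (RingHom.ker_ne_top _)
  have hinj : Function.Injective θ :=
    injective_of_map_sub_self_mem_sq (θ := θ.toRingHom) hbot (algHom_apply_sub_self_mem hθX)
  exact Function.Injective.of_comp (f := affineSubst M⁻¹ a b) hinj

end JacobianCriterion

section Reduction

variable {A B σ ι : Type*} [CommRing A]

lemma map_aeval_eq_aeval_map [CommRing B] (q : A →+* B) (w : ι → MvPolynomial σ A)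
    (F : MvPolynomial ι A) : map q (aeval w F) = aeval (map q ∘ w) (map q F) :=
  map_bind₁ q w F

lemma map_mem_adjoin_range_map [CommRing B] (q : A →+* B) {w : ι → MvPolynomial σ A}
    {g : MvPolynomial σ A} (hg : g ∈ Algebra.adjoin A (Set.range w)) :
    map q g ∈ Algebra.adjoin B (Set.range (map q ∘ w)) := by
  rw [← aeval_range] at hg ⊢
  obtain ⟨F, rfl⟩ := hg
  exact ⟨map q F, (map_aeval_eq_aeval_map q w F).symm⟩

lemma exists_C_mul_mem_adjoin_range {K : Type*} [IsDomain A] [CommRing K] [Algebra A K]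
    [IsFractionRing A K] {w : ι → MvPolynomial σ A}
    (hw : Algebra.adjoin K (Set.range (map (algebraMap A K) ∘ w)) = ⊤) (g : MvPolynomial σ A) :
    ∃ b : A, b ≠ 0 ∧ C b * g ∈ Algebra.adjoin A (Set.range w) := by
  obtain ⟨P, hP⟩ := surjective_aeval_of_adjoin_range_eq_top hw (map (algebraMap A K) g)
  let : Algebra (MvPolynomial ι A) (MvPolynomial ι K) := algebraMvPolynomial
  obtain ⟨⟨F, _, b, hb, rfl⟩, hF⟩ :=
    IsLocalization.surj ((nonZeroDivisors A).map (C (σ := ι))) P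
  refine ⟨b, nonZeroDivisors.ne_zero hb, ?_⟩
  rw [← aeval_range]
  refine ⟨F, map_injective _ (IsFractionRing.injective A K) ?_⟩
  have hF' : map (algebraMap A K) F = P * C (algebraMap A K b) := by
    rw [← map_C]; exact hF.symm
  change map _ (aeval w F) = _
  rw [map_aeval_eq_aeval_map, hF', map_mul, hP, map_mul, map_C, aeval_C, algebraMap_eq, mul_comm]

lemma apply_eq_zero_iff_dvd [CommRing B] {q : A →+* B} {p : A}
    (hq : RingHom.ker q = Ideal.span {p}) {r : A} : q r = 0 ↔ p ∣ r := by
  rw [← RingHom.mem_ker, hq, Ideal.mem_span_singleton]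

lemma mem_adjoin_range_of_C_mul_mem [IsDomain A] [CommRing B] {q : A →+* B} {p : A} (hp : p ≠ 0)
    (hq : RingHom.ker q = Ideal.span {p}) {w : ι → MvPolynomial σ A}
    (hind : AlgebraicIndependent B (map q ∘ w)) {g : MvPolynomial σ A}
    (hg : C p * g ∈ Algebra.adjoin A (Set.range w)) : g ∈ Algebra.adjoin A (Set.range w) := by
  rw [← aeval_range] at hg ⊢
  obtain ⟨F, hF⟩ := hg
  have hF0 : map q F = 0 := by
    refine hind.eq_zero_of_aeval_eq_zero _ ?_
    rw [← map_aeval_eq_aeval_map, show aeval w F = C p * g from hF, map_mul, map_C,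
      (apply_eq_zero_iff_dvd hq).2 dvd_rfl, C_0, zero_mul]
  obtain ⟨F, rfl⟩ := (C_dvd_iff_map_hom_eq_zero q p (fun _ => apply_eq_zero_iff_dvd hq) F).2 hF0
  refine ⟨F, mul_left_cancel₀ (C_ne_zero.2 hp) ?_⟩
  simpa using hF

lemma adjoin_range_map_eq_top {K : Type*} [IsDomain A] [WfDvdMonoid A] [CommRing K] [Algebra A K]
    [IsFractionRing A K] [Field B] {q : A →+* B} {p : A} (hp : p ≠ 0)
    (hq : RingHom.ker q = Ideal.span {p}) {w : ι → MvPolynomial σ A}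
    (hw : Algebra.adjoin K (Set.range (map (algebraMap A K) ∘ w)) = ⊤)
    (hind : AlgebraicIndependent B (map q ∘ w)) :
    Algebra.adjoin B (Set.range (map q ∘ w)) = ⊤ := by
  have hqp : q p = 0 := (apply_eq_zero_iff_dvd hq).2 dvd_rfl
  have hp_not_unit : ¬IsUnit p := fun h => not_isUnit_zero (hqp ▸ h.map q)
  rw [eq_top_iff, ← adjoin_range_X]
  refine Algebra.adjoin_le ?_
  rintro _ ⟨i, rfl⟩
  obtain ⟨b, hb, hbX⟩ := exists_C_mul_mem_adjoin_range hw (X i)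
  obtain ⟨n, s, hs, rfl⟩ := WfDvdMonoid.max_power_factor' hb hp_not_unit
  have hsX : C s * X i ∈ Algebra.adjoin A (Set.range w) := by
    clear hb
    induction n with
    | zero => simpa using hbX
    | succ n ih =>
      refine ih (mem_adjoin_range_of_C_mul_mem hp hq hind ?_)
      rwa [← mul_assoc, ← C_mul, ← mul_assoc, ← pow_succ']
  have hqs : q s ≠ 0 := mt (apply_eq_zero_iff_dvd hq).1 hs
  have hX : (q s)⁻¹ • map q (C s * X i) = X i := by
    rw [map_mul, map_C, map_X, ← smul_eq_C_mul, inv_smul_smul₀ hqs]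
  exact hX ▸ Subalgebra.smul_mem _ (map_mem_adjoin_range_map q hsX) _

end Reduction

lemma exists_algEquiv_apply_eq_X {R σ : Type*} [CommRing R] {w : σ → MvPolynomial σ R}
    (hind : AlgebraicIndependent R w) (hw : Algebra.adjoin R (Set.range w) = ⊤) (i j : σ) :
    ∃ e : MvPolynomial σ R ≃ₐ[R] MvPolynomial σ R, e (w i) = X j := by
  classical
  let e := AlgEquiv.ofBijective (aeval w) ⟨hind, surjective_aeval_of_adjoin_range_eq_top hw⟩
  have he : e.symm (w i) = X i := e.symm_apply_eq.2 (aeval_X w i).symm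
  exact ⟨e.symm.trans (renameEquiv R (Equiv.swap i j)), by simp [he]⟩

lemma comp_vec_pair {α β : Type*} (f : α → β) (a b : α) : f ∘ ![a, b] = ![f a, f b] :=
  (FinVec.map_eq f ![a, b]).symm

lemma det_jacobianMatrix_vec_pair {R : Type*} [CommRing R] (u v : MvPolynomial (Fin 2) R) :
    (jacobianMatrix ![u, v]).det = pderiv 0 u * pderiv 1 v - pderiv 1 u * pderiv 0 v := by
  simp [jacobianMatrix, Matrix.det_fin_two]

lemma not_algebraicIndependent_iff {R A ι : Type*} [CommRing R] [CommRing A] [Algebra R A]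
    {x : ι → A} :
    ¬AlgebraicIndependent R x ↔ ∃ F : MvPolynomial ι R, F ≠ 0 ∧ aeval x F = 0 := by
  simp only [algebraicIndependent_iff, not_forall, exists_prop, and_comm]

theorem jacobian_and_reduction_mod_p_general {A K B σ : Type*} [CommRing A] [IsDomain A]
    [WfDvdMonoid A] [Field K] [Algebra A K] [IsFractionRing A K] [Field B] [Fintype σ]
    [DecidableEq σ] {q : A →+* B} {p : A} (hp : p ≠ 0) (hq : RingHom.ker q = Ideal.span {p})
    {w : σ → MvPolynomial σ A}
    (hw : Algebra.adjoin K (Set.range (map (algebraMap A K) ∘ w)) = ⊤) :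
    ∃ c : A, c ≠ 0 ∧ (jacobianMatrix w).det = C c ∧
      (p ∣ c → ¬AlgebraicIndependent B (map q ∘ w)) ∧
      (¬p ∣ c → Algebra.adjoin B (Set.range (map q ∘ w)) = ⊤ ∧
        ∀ i j, ∃ e : MvPolynomial σ B ≃ₐ[B] MvPolynomial σ B, e (map q (w i)) = X j) := by
  obtain ⟨c, hc, hdet⟩ := exists_det_jacobianMatrix_eq_C (IsFractionRing.injective A K) hw
  have hdetq : (jacobianMatrix (map q ∘ w)).det = C (q c) := by
    rw [det_jacobianMatrix_map, hdet, map_C]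
  have hqc : q c = 0 ↔ p ∣ c := apply_eq_zero_iff_dvd hq
  refine ⟨c, hc, hdet, fun hpc hind => ?_, fun hpc => ?_⟩
  · have hunit := isUnit_det_jacobianMatrix (adjoin_range_map_eq_top hp hq hw hind)
    rw [hdetq, hqc.2 hpc, C_0] at hunit
    exact not_isUnit_zero hunit
  · have hind : AlgebraicIndependent B (map q ∘ w) :=
      algebraicIndependent_of_isUnit_det_jacobianMatrix 0 (by simpa [hdetq, hqc] using hpc)
    have hgen := adjoin_range_map_eq_top hp hq hw hind
    exact ⟨hgen, exists_algEquiv_apply_eq_X hind hgen⟩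

/-- **Lemma 3.6 (Blanc–van Santen).** Let `p ∈ k[t]` be irreducible, `k_p = k[t]/(p)`, and
let `u, v ∈ k[t][x,y]` generate `k(t)[x,y]` as a `k(t)`-algebra. Then the Jacobian
determinant `ν = u_x v_y − u_y v_x` is (the constant polynomial attached to) a nonzero
element of `k[t]`, and the reductions `u₀, v₀ ∈ k_p[x,y]` satisfy: if `p ∣ ν` then `u₀, v₀`
are algebraically dependent over `k_p`, and if `p ∤ ν` then `u₀, v₀` generate `k_p[x,y]`,
so in particular both are variables of the `k_p`-algebra `k_p[x,y]`. -/
theorem jacobian_and_reduction_mod_p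
    (k : Type*) [Field k] (p : Polynomial k) (hp : Irreducible p)
    (u v : MvPolynomial (Fin 2) (Polynomial k))
    (huv : Algebra.adjoin (RatFunc k)
        {MvPolynomial.map (algebraMap (Polynomial k) (RatFunc k)) u,
         MvPolynomial.map (algebraMap (Polynomial k) (RatFunc k)) v} =
      (⊤ : Subalgebra (RatFunc k) (MvPolynomial (Fin 2) (RatFunc k)))) :
    ∃ c : Polynomial k, c ≠ 0 ∧
      pderiv 0 u * pderiv 1 v - pderiv 1 u * pderiv 0 v = MvPolynomial.C c ∧
      (p ∣ c →
        ∃ F : MvPolynomial (Fin 2) (Polynomial k ⧸ Ideal.span {p}), F ≠ 0 ∧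
          aeval ![MvPolynomial.map (Ideal.Quotient.mk (Ideal.span {p})) u,
                  MvPolynomial.map (Ideal.Quotient.mk (Ideal.span {p})) v] F = 0) ∧
      (¬ p ∣ c →
        Algebra.adjoin (Polynomial k ⧸ Ideal.span {p})
            {MvPolynomial.map (Ideal.Quotient.mk (Ideal.span {p})) u,
             MvPolynomial.map (Ideal.Quotient.mk (Ideal.span {p})) v} =
          (⊤ : Subalgebra (Polynomial k ⧸ Ideal.span {p})
                  (MvPolynomial (Fin 2) (Polynomial k ⧸ Ideal.span {p}))) ∧
        (∃ σ : MvPolynomial (Fin 2) (Polynomial k ⧸ Ideal.span {p}) ≃ₐ[Polynomial k ⧸ Ideal.span {p}]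
              MvPolynomial (Fin 2) (Polynomial k ⧸ Ideal.span {p}),
            σ (MvPolynomial.map (Ideal.Quotient.mk (Ideal.span {p})) u) = X 0) ∧
        (∃ σ : MvPolynomial (Fin 2) (Polynomial k ⧸ Ideal.span {p}) ≃ₐ[Polynomial k ⧸ Ideal.span {p}]
              MvPolynomial (Fin 2) (Polynomial k ⧸ Ideal.span {p}),
            σ (MvPolynomial.map (Ideal.Quotient.mk (Ideal.span {p})) v) = X 0)) := by
  let _ : Field (Polynomial k ⧸ Ideal.span {p}) :=
    have := PrincipalIdealRing.isMaximal_of_irreducible hp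
    Ideal.Quotient.field _
  have hw : Algebra.adjoin (RatFunc k)
      (Set.range (map (algebraMap (Polynomial k) (RatFunc k)) ∘ ![u, v])) = ⊤ := by
    rwa [comp_vec_pair, Matrix.range_cons_cons_empty]
  obtain ⟨c, hc, hdet, hdep, hgen⟩ :=
    jacobian_and_reduction_mod_p_general hp.ne_zero (Ideal.mk_ker (I := Ideal.span {p})) hw
  rw [det_jacobianMatrix_vec_pair] at hdet
  rw [not_algebraicIndependent_iff, comp_vec_pair] at hdep
  rw [comp_vec_pair, Matrix.range_cons_cons_empty] at hgen
  exact ⟨c, hc, hdet, hdep, fun h => ⟨(hgen h).1, (hgen h).2 0 0, (hgen h).2 1 0⟩⟩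
end
end
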